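/- arXiv:1810.00915 — 2 statements merged into one kernel-verified Lean document; each statement's English description precedes it below -/
import Mathlib

section
/- Let n, k, t be integers with 1 < t ≤ k/4 - 2 and n ≥ 2k + 14t. Then any non-trivial intersecting family F of k-element subsets of [n] satisfies δ_t(F) ≤ C(n-t-1, k-t-1) - C(n-t-k-1, k-t-1). -/
/-!
Fix a point `i` and let `γ` be the number of members of `F` avoiding `i`, which is positive as `F`
is non-trivial. If `A ∈ F` avoids `i` and `B` is a `(k - 1)`-set with `i ∉ B` and `A ∩ B = ∅`, then
`insert i B ∉ F`, and the Kruskal–Katona theorem shows that there are many such `B`. Let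
`Y = C(n-3,k-2)`.

* If `γ` is very small for some `i`, there is a `t`-set `T` such that more of the members avoiding
  `i` are disjoint from `T` than contain it, so that the sets which `insert i T` loses outweigh
  the members that contain `T` and avoid `i`.
* If `γ ≤ 3 Y / 2` for some `i` with `γ` not very small, averaging the degree over the `t`-sets
  avoiding `i` suffices.
* If `γ > 3 Y / 2` for all `i`, then `F` is so much smaller than a star that averaging the degree
  over all `t`-sets suffices. To bound its size, shift `F`. Either the condition on `γ` survives
  until the family is shifted, and a reflection argument at a hitting time applies, or a shift takes
  some `γ` into the interval from `Y / 2` to `3 Y / 2`, where Kruskal–Katona applies directly.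
-/

section

open Finset
open scoped FinsetFamily

/-! ### Shadows and the Kruskal–Katona theorem -/

section Falling

variable {α : Type*} [DecidableEq α] {X : Finset α} {𝒜 : Finset (Finset α)} {a b l r : ℕ}

theorem card_mul_choose_le_card_falling_mul_choose (hba : b ≤ a) (h𝒜 : 𝒜 ⊆ powersetCard a X) :
    #𝒜 * (#X).choose b ≤ #(falling b 𝒜) * (#X).choose a := by
  have double_count : #𝒜 * a.choose b ≤ #(falling b 𝒜) * (#X - b).choose (a - b) := by
    refine card_mul_le_card_mul (fun A B ↦ B ⊆ A) (fun A hA ↦ ?_) fun B hB ↦ ?_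
    · rw [← (mem_powersetCard.1 (h𝒜 hA)).2, ← card_powersetCard]
      refine card_le_card fun B hB ↦ ?_
      rw [mem_powersetCard] at hB
      exact (mem_bipartiteAbove _).2 ⟨mem_falling.2 ⟨⟨A, hA, hB.1⟩, hB.2⟩, hB.1⟩
    · obtain ⟨⟨A, hA, hBA⟩, rfl⟩ := mem_falling.1 hB
      rw [← card_filter_powersetCard_subset B X a (hBA.trans (mem_powersetCard.1 (h𝒜 hA)).1) hba]
      exact card_le_card (filter_subset_filter _ h𝒜)
  refine Nat.le_of_mul_le_mul_right ?_ (Nat.choose_pos hba)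
  calc #𝒜 * (#X).choose b * a.choose b
      = #𝒜 * a.choose b * (#X).choose b := by ring
    _ ≤ #(falling b 𝒜) * (#X - b).choose (a - b) * (#X).choose b := by gcongr
    _ = #(falling b 𝒜) * ((#X).choose b * (#X - b).choose (a - b)) := by ring
    _ = #(falling b 𝒜) * (#X).choose a * a.choose b := by rw [← Nat.choose_mul hba, mul_assoc]

theorem shadow_iterate_eq_falling (h𝒜 : (𝒜 : Set (Finset α)).Sized r) (hlr : l ≤ r) :
    ∂^[r - l] 𝒜 = falling l 𝒜 := by
  ext B
  rw [mem_shadow_iterate_iff_exists_mem_card_add, mem_falling, ← exists_and_right]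
  refine exists_congr fun A ↦ ?_
  rw [and_assoc, and_congr_right_iff]
  intro hA
  have := h𝒜 hA
  grind

theorem falling_memberSubfamily_subset (p : α) (𝒜 : Finset (Finset α)) (l : ℕ) :
    falling l (𝒜.memberSubfamily p) ⊆ (falling (l + 1) 𝒜).memberSubfamily p := by
  intro B hB
  obtain ⟨⟨A, hA, hBA⟩, rfl⟩ := mem_falling.1 hB
  rw [mem_memberSubfamily] at hA ⊢
  have hpB : p ∉ B := fun h ↦ hA.2 (hBA h)
  exact ⟨mem_falling.2 ⟨⟨_, hA.1, insert_subset_insert p hBA⟩, card_insert_of_notMem hpB⟩, hpB⟩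

theorem powersetCard_subset_falling (hlr : l ≤ r) (hrX : r ≤ #X) (h𝒜 : powersetCard r X ⊆ 𝒜) :
    powersetCard l X ⊆ falling l 𝒜 := by
  intro B hB
  rw [mem_powersetCard] at hB
  obtain ⟨A, hBA, hAX, hA⟩ := exists_subsuperset_card_eq hB.1 (n := r) (by lia) hrX
  exact mem_falling.2 ⟨⟨A, h𝒜 (mem_powersetCard.2 ⟨hAX, hA⟩), hBA⟩, hB.2⟩

/-- Split the shadow at `p`: the part avoiding `p` is everything in `X`, and the part containing
`p` is controlled by the link of `p`, to which the local LYM inequality applies. -/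
theorem choose_mul_add_le_card_falling_of_powersetCard_subset {p : α} (hp : p ∉ X) (hlr : l ≤ r)
    (hrX : r + 1 ≤ #X) (hX𝒜 : powersetCard (r + 1) X ⊆ 𝒜)
    (h𝒜X : 𝒜 ⊆ powersetCard (r + 1) (insert p X)) {m : ℕ}
    (hm : #𝒜 = (#X).choose (r + 1) + m) :
    (#X).choose (l + 1) * (#X).choose r + m * (#X).choose l
      ≤ #(falling (l + 1) 𝒜) * (#X).choose r := by
  have link_subset : 𝒜.memberSubfamily p ⊆ powersetCard r X := by
    intro B hB
    obtain ⟨hB𝒜, hpB⟩ := mem_memberSubfamily.1 hB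
    obtain ⟨hBX, hcard⟩ := mem_powersetCard.1 (h𝒜X hB𝒜)
    rw [card_insert_of_notMem hpB] at hcard
    exact mem_powersetCard.2 ⟨(insert_subset_insert_iff hpB).1 hBX, by lia⟩
  have avoiding : 𝒜.nonMemberSubfamily p = powersetCard (r + 1) X := by
    ext A
    rw [mem_nonMemberSubfamily]
    refine ⟨fun ⟨hA, hpA⟩ ↦ ?_, fun hA ↦ ⟨hX𝒜 hA, fun h ↦ hp ((mem_powersetCard.1 hA).1 h)⟩⟩
    have := mem_powersetCard.1 (h𝒜X hA)
    exact mem_powersetCard.2 ⟨(subset_insert_iff_of_notMem hpA).1 this.1, this.2⟩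
  have card_link : #(𝒜.memberSubfamily p) = m := by
    have := card_memberSubfamily_add_card_nonMemberSubfamily p 𝒜
    rw [avoiding, card_powersetCard] at this
    lia
  have card_shadow : (#X).choose (l + 1) + #(falling l (𝒜.memberSubfamily p))
      ≤ #(falling (l + 1) 𝒜) := by
    rw [← card_memberSubfamily_add_card_nonMemberSubfamily p (falling (l + 1) 𝒜), add_comm,
      ← card_powersetCard]
    refine add_le_add (card_le_card (falling_memberSubfamily_subset p 𝒜 l))
      (card_le_card fun B hB ↦ mem_nonMemberSubfamily.2 ⟨?_, fun h ↦ ?_⟩)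
    · exact powersetCard_subset_falling (by lia) hrX hX𝒜 hB
    · exact hp ((mem_powersetCard.1 hB).1 h)
  calc (#X).choose (l + 1) * (#X).choose r + m * (#X).choose l
      ≤ (#X).choose (l + 1) * (#X).choose r
        + #(falling l (𝒜.memberSubfamily p)) * (#X).choose r := by
        rw [← card_link]
        refine Nat.add_le_add_left ?_ _
        exact card_mul_choose_le_card_falling_mul_choose hlr link_subset
    _ = ((#X).choose (l + 1) + #(falling l (𝒜.memberSubfamily p))) * (#X).choose r := by ring
    _ ≤ #(falling (l + 1) 𝒜) * (#X).choose r := by gcongr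

end Falling

section Colex

variable {α : Type*} [LinearOrder α] {X : Finset α} {r : ℕ}

theorem exists_isInitSeg_card_eq [Fintype α] {m : ℕ} (hm : m ≤ (Fintype.card α).choose r) :
    ∃ 𝒞 : Finset (Finset α), Colex.IsInitSeg 𝒞 r ∧ #𝒞 = m := by
  induction m with
  | zero => exact ⟨∅, Colex.isInitSeg_empty, rfl⟩
  | succ m ih =>
    obtain ⟨𝒞, h𝒞, rfl⟩ := ih (by lia)
    have remaining : ((powersetCard r (univ : Finset α)) \ 𝒞).Nonempty := by
      rw [← card_pos, card_sdiff_of_subset (subset_powersetCard_univ_iff.2 h𝒞.1),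
        card_powersetCard, card_univ]
      lia
    obtain ⟨s, hs, hmin⟩ := exists_min_image _ toColex remaining
    rw [mem_sdiff, mem_powersetCard_univ] at hs
    refine ⟨insert s 𝒞, ⟨?_, fun u v hu ⟨hvu, hv⟩ ↦ ?_⟩, card_insert_of_notMem hs.2⟩
    · rw [coe_insert]
      rintro u (rfl | hu)
      exacts [hs.1, h𝒞.1 hu]
    · refine mem_insert_of_mem ?_
      rcases mem_insert.1 hu with rfl | hu
      · by_contra hv𝒞
        exact (hmin v (mem_sdiff.2 ⟨mem_powersetCard_univ.2 hv, hv𝒞⟩)).not_gt hvu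
      · exact h𝒞.2 hu ⟨hvu, hv⟩

theorem isInitSeg_powersetCard (hX : IsLowerSet (X : Set α)) (r : ℕ) :
    Colex.IsInitSeg (powersetCard r X) r := by
  refine ⟨Set.sized_powersetCard X r, fun s u hs ⟨hus, hu⟩ ↦ ?_⟩
  refine mem_powersetCard.2 ⟨fun i hi ↦ ?_, hu⟩
  have hsX := (mem_powersetCard.1 hs).1
  by_cases his : i ∈ s
  · exact hsX his
  · obtain ⟨j, hj, -, hlt⟩ := Colex.lt_iff_exists_forall_lt.1 hus
    exact hX (hlt i hi his).le (hsX hj)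

theorem powersetCard_subset_of_isInitSeg {𝒞 : Finset (Finset α)} (hX : IsLowerSet (X : Set α))
    (h𝒞 : Colex.IsInitSeg 𝒞 r) (hcard : (#X).choose r ≤ #𝒞) : powersetCard r X ⊆ 𝒞 := by
  rcases (isInitSeg_powersetCard hX r).total h𝒞 with h | h
  · exact h
  · exact (eq_of_subset_of_card_le h (by rwa [card_powersetCard])).symm.subset

theorem subset_powersetCard_of_isInitSeg {𝒞 : Finset (Finset α)} (hX : IsLowerSet (X : Set α))
    (h𝒞 : Colex.IsInitSeg 𝒞 r) (hcard : #𝒞 ≤ (#X).choose r) : 𝒞 ⊆ powersetCard r X := by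
  rcases h𝒞.total (isInitSeg_powersetCard hX r) with h | h
  · exact h
  · exact (eq_of_subset_of_card_le h (by rwa [card_powersetCard])).symm.subset

end Colex

section KruskalKatona

variable {n r l x m : ℕ} {𝒜 : Finset (Finset (Fin n))}

/-- Between two consecutive complete levels, the Kruskal–Katona bound is at least the linear
interpolation of the Lovász bounds. -/
theorem choose_mul_add_le_card_falling (h𝒜 : (𝒜 : Set (Finset (Fin n))).Sized (r + 1))
    (hxn : x < n) (hlr : l ≤ r) (hrx : r < x) (hcard : #𝒜 = x.choose (r + 1) + m)
    (hm : m ≤ x.choose r) :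
    x.choose (l + 1) * x.choose r + m * x.choose l ≤ #(falling (l + 1) 𝒜) * x.choose r := by
  obtain ⟨𝒞, h𝒞, h𝒞𝒜⟩ := exists_isInitSeg_card_eq h𝒜.card_le
  let p : Fin n := ⟨x, hxn⟩
  have card_Iio : #(Iio p) = x := Fin.card_Iio p
  have card_Iic : #(Iic p) = x + 1 := Fin.card_Iic p
  have insert_Iio : insert p (Iio p) = Iic p := Iio_insert p
  have interpolation := choose_mul_add_le_card_falling_of_powersetCard_subset (X := Iio p) (p := p)
    (𝒜 := 𝒞) (m := m) (by simp) hlr (by lia)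
    (powersetCard_subset_of_isInitSeg (by simpa using isLowerSet_Iio p) h𝒞 (by lia))
    (insert_Iio ▸ subset_powersetCard_of_isInitSeg (by simpa using isLowerSet_Iic p) h𝒞
      (by rw [card_Iic, Nat.choose_succ_succ']; lia))
    (by rw [h𝒞𝒜, hcard, card_Iio])
  rw [card_Iio] at interpolation
  refine interpolation.trans (Nat.mul_le_mul_right _ ?_)
  rw [← shadow_iterate_eq_falling h𝒞.1 (by lia), ← shadow_iterate_eq_falling h𝒜 (by lia)]
  exact iterated_kk h𝒜 h𝒞𝒜.le h𝒞

theorem choose_le_choose_of_add_le {a b : ℕ} (hab : a ≤ b) (habx : a + b ≤ x) :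
    x.choose a ≤ x.choose b := by
  have below_half : ∀ c, a ≤ c → 2 * c ≤ x → x.choose a ≤ x.choose c := by
    intro c hac
    induction c, hac using Nat.le_induction with
    | base => exact fun _ ↦ le_rfl
    | succ c _ ih =>
      exact fun hc ↦ (ih (by lia)).trans (Nat.choose_le_succ_of_lt_half_left (by lia))
  rcases le_or_gt (2 * b) x with h | h
  · exact below_half b hab h
  · rw [← Nat.choose_symm (show b ≤ x by lia)]
    exact below_half (x - b) (by lia) (by lia)

theorem exists_choose_add_eq {s : ℕ} (hs : 1 ≤ s) (hm : 1 ≤ m)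
    (hms : m ≤ (r + 1 + s).choose (r + 1)) :
    ∃ j < s, ∃ θ ≤ (r + 1 + j).choose r, m = (r + 1 + j).choose (r + 1) + θ := by
  induction s, hs using Nat.le_induction with
  | base =>
    rw [Nat.choose_succ_succ', Nat.choose_self] at hms
    exact ⟨0, one_pos, m - 1, by simpa using hms, by rw [add_zero, Nat.choose_self]; lia⟩
  | succ s _ ih =>
    rcases lt_or_ge m ((r + 1 + s).choose (r + 1)) with h | h
    · obtain ⟨j, hj, hθ⟩ := ih h.le
      exact ⟨j, by lia, hθ⟩
    · rw [← add_assoc, Nat.choose_succ_succ'] at hms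
      exact ⟨s, by lia, m - (r + 1 + s).choose (r + 1), by lia, by lia⟩

theorem choose_add_choose_le_choose_add_one (hlr : l ≤ r) {j : ℕ} (hj : j ≤ l) :
    (r + 1).choose (l + 1) + (r + 1 + j).choose (r + 1) ≤ (r + 1 + j).choose (l + 1) + 1 := by
  induction j with
  | zero => simp
  | succ j ih =>
    have := ih (by lia)
    have : (r + 1 + j).choose r ≤ (r + 1 + j).choose l := by
      rw [Nat.choose_symm_of_eq_add (show r + 1 + j = r + (j + 1) by ring)]
      exact choose_le_choose_of_add_le (by lia) (by lia)
    rw [← add_assoc, Nat.choose_succ_succ' (r + 1 + j) r, Nat.choose_succ_succ' (r + 1 + j) l]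
    lia

theorem choose_add_card_le_card_falling_add_one
    (h𝒜 : (𝒜 : Set (Finset (Fin n))).Sized (r + 1)) (hn : r + 1 + l ≤ n) (hl : 1 ≤ l)
    (hlr : l ≤ r) (hpos : 1 ≤ #𝒜) (hcard : #𝒜 ≤ (r + 1 + l).choose (r + 1)) :
    (r + 1).choose (l + 1) + #𝒜 ≤ #(falling (l + 1) 𝒜) + 1 := by
  obtain ⟨j, hj, θ, hθ, hθ𝒜⟩ := exists_choose_add_eq hl hpos hcard
  have slope : (r + 1 + j).choose r ≤ (r + 1 + j).choose l := by
    rw [Nat.choose_symm_of_eq_add (show r + 1 + j = r + (j + 1) by ring)]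
    exact choose_le_choose_of_add_le (by lia) (by lia)
  have interpolation := choose_mul_add_le_card_falling h𝒜 (by lia) hlr (by lia) hθ𝒜 hθ
  have : (r + 1 + j).choose (l + 1) + θ ≤ #(falling (l + 1) 𝒜) := by
    refine Nat.le_of_mul_le_mul_right ?_ (Nat.choose_pos (show r ≤ r + 1 + j by lia))
    rw [add_mul]
    exact (Nat.add_le_add_left (Nat.mul_le_mul_left θ slope) _).trans interpolation
  have := choose_add_choose_le_choose_add_one hlr hj.le
  lia

theorem succ_mul_choose_le_succ_mul_choose (hlr : l ≤ r) (hrx : r < x) (hx : x ≤ r + 1 + l) :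
    (r + 1) * x.choose (r + 1) ≤ (l + 1) * x.choose (l + 1) := by
  obtain ⟨x, rfl⟩ : ∃ y, x = y + 1 := ⟨x - 1, by lia⟩
  rw [mul_comm, ← Nat.add_one_mul_choose_eq, mul_comm (l + 1), ← Nat.add_one_mul_choose_eq,
    Nat.choose_symm_of_eq_add (show x = r + (x - r) by lia)]
  exact Nat.mul_le_mul_left _ (choose_le_choose_of_add_le (by lia) (by lia))

/-- The bound holds at both ends of each level, hence in between by linear interpolation. -/
theorem succ_mul_card_le_succ_mul_card_falling
    (h𝒜 : (𝒜 : Set (Finset (Fin n))).Sized (r + 1)) (hn : r + 1 + l ≤ n) (hl : 1 ≤ l)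
    (hlr : l ≤ r) (hcard : #𝒜 ≤ (r + 1 + l).choose (r + 1)) :
    (r + 1) * #𝒜 ≤ (l + 1) * #(falling (l + 1) 𝒜) := by
  rcases Nat.eq_zero_or_pos (#𝒜) with h𝒜0 | hpos
  · simp [h𝒜0]
  obtain ⟨j, hj, θ, hθ, hθ𝒜⟩ := exists_choose_add_eq hl hpos hcard
  have interpolation := choose_mul_add_le_card_falling h𝒜 (by lia) hlr (by lia) hθ𝒜 hθ
  have lower_end := succ_mul_choose_le_succ_mul_choose (x := r + 1 + j) hlr (by lia) (by lia)
  have upper_end := succ_mul_choose_le_succ_mul_choose (x := r + 1 + j + 1) hlr (by lia) (by lia)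
  rw [Nat.choose_succ_succ' _ r, Nat.choose_succ_succ' _ l] at upper_end
  obtain ⟨φ, hφ⟩ := Nat.exists_eq_add_of_le hθ
  refine Nat.le_of_mul_le_mul_right ?_ (Nat.choose_pos (show r ≤ r + 1 + j by lia))
  calc (r + 1) * #𝒜 * (r + 1 + j).choose r
      = (r + 1) * (r + 1 + j).choose (r + 1) * φ
        + (r + 1) * ((r + 1 + j).choose r + (r + 1 + j).choose (r + 1)) * θ := by
        rw [hθ𝒜, hφ]; ring
    _ ≤ (l + 1) * (r + 1 + j).choose (l + 1) * φ
        + (l + 1) * ((r + 1 + j).choose l + (r + 1 + j).choose (l + 1)) * θ := by gcongr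
    _ = (l + 1) * ((r + 1 + j).choose (l + 1) * (r + 1 + j).choose r
        + θ * (r + 1 + j).choose l) := by rw [hφ]; ring
    _ ≤ (l + 1) * (#(falling (l + 1) 𝒜) * (r + 1 + j).choose r) := by gcongr
    _ = (l + 1) * #(falling (l + 1) 𝒜) * (r + 1 + j).choose r := by ring

theorem choose_le_card_falling (h𝒜 : (𝒜 : Set (Finset (Fin n))).Sized r) (hlr : l ≤ r)
    (hrx : r ≤ x) (hxn : x ≤ n) (hcard : x.choose r ≤ #𝒜) : x.choose l ≤ #(falling l 𝒜) := by
  rw [← shadow_iterate_eq_falling h𝒜 hlr]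
  simpa [Nat.sub_sub_self hlr] using
    kruskal_katona_lovasz_form (Nat.sub_le r l) hrx hxn h𝒜 hcard

end KruskalKatona

/-! ### Excluded sets and degrees -/

section Excluded

variable {α : Type*} [DecidableEq α] {X B : Finset α} {𝒜 𝒢 : Finset (Finset α)} {k l r : ℕ}

/-- The `l`-subsets of `X` that are disjoint from some member of `𝒢`. These are the sets that an
intersecting family containing `𝒢` has to miss. They are encoded as the iterated shadow of the
family of complements in `X`, which is the form to which the Kruskal–Katona theorem applies. -/
def excluded (X : Finset α) (𝒢 : Finset (Finset α)) (l : ℕ) : Finset (Finset α) :=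
  falling l (𝒢.image (X \ ·))

theorem mem_excluded : B ∈ excluded X 𝒢 l ↔ (∃ G ∈ 𝒢, B ⊆ X ∧ Disjoint B G) ∧ #B = l := by
  simp only [excluded, mem_falling, exists_mem_image, subset_sdiff]

theorem excluded_subset_powersetCard : excluded X 𝒢 l ⊆ powersetCard l X := fun _ hB ↦
  have ⟨⟨_, _, hBX, _⟩, hB⟩ := mem_excluded.1 hB
  mem_powersetCard.2 ⟨hBX, hB⟩

theorem card_add_card_excluded_le (h𝒜 : 𝒜 ⊆ powersetCard l X)
    (h𝒜𝒢 : ∀ A ∈ 𝒜, ∀ G ∈ 𝒢, ¬Disjoint A G) :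
    #𝒜 + #(excluded X 𝒢 l) ≤ (#X).choose l := by
  rw [← card_powersetCard, ← card_union_of_disjoint]
  · exact card_le_card (union_subset h𝒜 excluded_subset_powersetCard)
  · refine disjoint_left.2 fun A hA hA' ↦ ?_
    obtain ⟨⟨G, hG, -, hAG⟩, -⟩ := mem_excluded.1 hA'
    exact h𝒜𝒢 A hA G hG hAG

theorem card_image_sdiff (h𝒢 : 𝒢 ⊆ powersetCard k X) : #(𝒢.image (X \ ·)) = #𝒢 := by
  refine card_image_of_injOn fun G hG G' hG' hGG' ↦ ?_
  have subset (G) (hG : G ∈ 𝒢) : G ⊆ X := (mem_powersetCard.1 (h𝒢 hG)).1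
  rw [← Finset.sdiff_sdiff_eq_self (subset G hG), ← Finset.sdiff_sdiff_eq_self (subset G' hG')]
  exact congrArg (X \ ·) hGG'

theorem sized_image_sdiff (h𝒢 : 𝒢 ⊆ powersetCard k X) (hX : #X = k + r) :
    (𝒢.image (X \ ·) : Set (Finset α)).Sized r := by
  rw [coe_image]
  rintro _ ⟨G, hG, rfl⟩
  obtain ⟨hGX, hGk⟩ := mem_powersetCard.1 (h𝒢 hG)
  rw [card_sdiff_of_subset hGX, hGk, hX, Nat.add_sub_cancel_left]

theorem excluded_mono {ℋ : Finset (Finset α)} (h : 𝒢 ⊆ ℋ) : excluded X 𝒢 l ⊆ excluded X ℋ l := by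
  intro B hB
  rw [mem_excluded] at hB ⊢
  exact ⟨hB.1.imp fun _ hG ↦ ⟨h hG.1, hG.2⟩, hB.2⟩

theorem card_mul_sub_le_card_excluded_mul_succ (h𝒢 : 𝒢 ⊆ powersetCard k X)
    (hX : 2 * k + 1 ≤ #X) : #𝒢 * (#X - k) ≤ #(excluded X 𝒢 (k + 1)) * (k + 1) := by
  have lym := card_mul_choose_le_card_falling_mul_choose (b := k + 1) (a := #X - k) (by lia)
    fun B hB ↦ mem_powersetCard.2 ⟨by
      obtain ⟨G, -, rfl⟩ := mem_image.1 hB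
      exact sdiff_subset, sized_image_sdiff h𝒢 (by lia) hB⟩
  rw [card_image_sdiff h𝒢, Nat.choose_symm (by lia)] at lym
  refine Nat.le_of_mul_le_mul_right (c := (#X).choose k) ?_ (Nat.choose_pos (by lia))
  calc #𝒢 * (#X - k) * (#X).choose k
      = #𝒢 * (#X).choose (k + 1) * (k + 1) := by
        rw [mul_assoc, mul_assoc, Nat.choose_succ_right_eq, mul_comm (#X - k)]
    _ ≤ #(excluded X 𝒢 (k + 1)) * (#X).choose k * (k + 1) := Nat.mul_le_mul_right _ lym
    _ = #(excluded X 𝒢 (k + 1)) * (k + 1) * (#X).choose k := by ring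

end Excluded

section Fibre

variable {α : Type*} [DecidableEq α] {P S X : Finset α} {𝒢 : Finset (Finset α)} {k l : ℕ}

theorem card_excluded_image_sdiff_le (hPX : P ⊆ X) (h𝒢 : ∀ G ∈ 𝒢, G ∩ P = S) :
    #(excluded (X \ P) (𝒢.image (· \ P)) l)
      ≤ #{H ∈ excluded X 𝒢 (l + #(P \ S)) | H ∩ P = P \ S} := by
  refine card_le_card_of_injOn (· ∪ P \ S) (fun B hB ↦ ?_) fun B hB C hC hBC ↦ ?_
  · obtain ⟨⟨_, hGP, hBX, hBG⟩, rfl⟩ := mem_excluded.1 (mem_coe.1 hB)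
    obtain ⟨G, hG, rfl⟩ := mem_image.1 hGP
    rw [subset_sdiff] at hBX
    have hBP : Disjoint B (P \ S) := hBX.2.mono_right sdiff_subset
    rw [mem_coe, mem_filter, mem_excluded, card_union_of_disjoint hBP]
    refine ⟨⟨⟨G, hG, union_subset hBX.1 (sdiff_subset.trans hPX), ?_⟩, rfl⟩, ?_⟩
    · rw [disjoint_left] at hBG ⊢
      have := h𝒢 G hG
      grind [disjoint_left]
    · grind [disjoint_left]
  · have union_sdiff (B) (hB : B ∈ excluded (X \ P) (𝒢.image (· \ P)) l) :
        (B ∪ P \ S) \ P = B := by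
      obtain ⟨⟨_, -, hBX, -⟩, -⟩ := mem_excluded.1 hB
      grind [subset_sdiff, disjoint_left]
    rw [← union_sdiff B hB, ← union_sdiff C hC]
    exact congrArg (· \ P) hBC

/-- This is the LYM inequality in `X \ P`. -/
theorem mul_card_le_mul_card_filter_excluded (hPX : P ⊆ X) (h𝒢X : 𝒢 ⊆ powersetCard k X)
    (h𝒢 : ∀ G ∈ 𝒢, G ∩ P = S) (hX : 2 * (k - #S) + 1 ≤ #X - #P) :
    (#X - #P - (k - #S)) * #𝒢
      ≤ (k - #S + 1) * #{H ∈ excluded X 𝒢 (k - #S + 1 + #(P \ S)) | H ∩ P = P \ S} := by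
  have card_eq : #(𝒢.image (· \ P)) = #𝒢 := by
    refine card_image_of_injOn fun G hG G' hG' hGG' ↦ ?_
    rw [← sdiff_union_inter G P, ← sdiff_union_inter G' P, h𝒢 G hG, h𝒢 G' hG']
    exact congrArg (· ∪ S) hGG'
  have subset : 𝒢.image (· \ P) ⊆ powersetCard (k - #S) (X \ P) := by
    refine image_subset_iff.2 fun G hG ↦ ?_
    obtain ⟨hGX, hGk⟩ := mem_powersetCard.1 (h𝒢X hG)
    rw [mem_powersetCard, card_sdiff, inter_comm, h𝒢 G hG, hGk]
    exact ⟨sdiff_subset_sdiff hGX subset_rfl, rfl⟩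
  have lym := card_mul_sub_le_card_excluded_mul_succ subset (by rwa [card_sdiff_of_subset hPX])
  rw [card_eq, card_sdiff_of_subset hPX, mul_comm, mul_comm _ (k - #S + 1)] at lym
  exact lym.trans (Nat.mul_le_mul_left _ (card_excluded_image_sdiff_le hPX h𝒢))

end Fibre

section ExcludedFin

variable {n k l r x m : ℕ} {X : Finset (Fin n)} {𝒢 : Finset (Finset (Fin n))}

theorem choose_le_card_excluded (h𝒢 : 𝒢 ⊆ powersetCard k X) (hX : #X = k + r) (hlr : l ≤ r)
    (hrx : r ≤ x) (hxn : x ≤ n) (hcard : x.choose r ≤ #𝒢) : x.choose l ≤ #(excluded X 𝒢 l) :=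
  choose_le_card_falling (sized_image_sdiff h𝒢 hX) hlr hrx hxn (by rwa [card_image_sdiff h𝒢])

theorem card_add_choose_le_of_choose_le (h𝒢 : 𝒢 ⊆ powersetCard k X) (hX : #X = k + r)
    (hlr : l ≤ r) (hrx : r ≤ x) (hxn : x ≤ n) {𝒜 : Finset (Finset (Fin n))}
    (h𝒜 : 𝒜 ⊆ powersetCard l X) (h𝒜𝒢 : ∀ A ∈ 𝒜, ∀ G ∈ 𝒢, ¬Disjoint A G)
    (hcard : x.choose r ≤ #𝒢) : #𝒜 + x.choose l ≤ (#X).choose l :=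
  (Nat.add_le_add_left (choose_le_card_excluded h𝒢 hX hlr hrx hxn hcard) _).trans
    (card_add_card_excluded_le h𝒜 h𝒜𝒢)

theorem choose_mul_add_le_card_excluded (h𝒢 : 𝒢 ⊆ powersetCard k X) (hX : #X = k + (r + 1))
    (hxn : x < n) (hlr : l ≤ r) (hrx : r < x) (hcard : #𝒢 = x.choose (r + 1) + m)
    (hm : m ≤ x.choose r) :
    x.choose (l + 1) * x.choose r + m * x.choose l ≤ #(excluded X 𝒢 (l + 1)) * x.choose r :=
  choose_mul_add_le_card_falling (sized_image_sdiff h𝒢 hX) hxn hlr hrx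
    (by rwa [card_image_sdiff h𝒢]) hm

theorem choose_add_card_le_card_excluded_add_one (h𝒢 : 𝒢 ⊆ powersetCard k X)
    (hX : #X = k + (r + 1)) (hn : r + 1 + l ≤ n) (hl : 1 ≤ l) (hlr : l ≤ r) (hpos : 1 ≤ #𝒢)
    (hcard : #𝒢 ≤ (r + 1 + l).choose (r + 1)) :
    (r + 1).choose (l + 1) + #𝒢 ≤ #(excluded X 𝒢 (l + 1)) + 1 := by
  rw [← card_image_sdiff h𝒢] at hpos hcard ⊢
  exact choose_add_card_le_card_falling_add_one (sized_image_sdiff h𝒢 hX) hn hl hlr hpos hcard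

theorem succ_mul_card_le_succ_mul_card_excluded (h𝒢 : 𝒢 ⊆ powersetCard k X)
    (hX : #X = k + (r + 1)) (hn : r + 1 + l ≤ n) (hl : 1 ≤ l) (hlr : l ≤ r)
    (hcard : #𝒢 ≤ (r + 1 + l).choose (r + 1)) :
    (r + 1) * #𝒢 ≤ (l + 1) * #(excluded X 𝒢 (l + 1)) := by
  rw [← card_image_sdiff h𝒢] at hcard ⊢
  exact succ_mul_card_le_succ_mul_card_falling (sized_image_sdiff h𝒢 hX) hn hl hlr hcard

end ExcludedFin

section Degree

variable {α : Type*} [DecidableEq α] {S X : Finset α} {ℱ 𝒢 : Finset (Finset α)} {k t : ℕ}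

/-- The degree of a set `T` in the family `ℱ`: the number of members of `ℱ` that contain `T`. For
`#T = t` this is the `t`-degree of `T`. -/
def setDegree (ℱ : Finset (Finset α)) (T : Finset α) : ℕ := #{A ∈ ℱ | T ⊆ A}

theorem setDegree_insert_add (ℱ : Finset (Finset α)) (i : α) (T : Finset α) :
    setDegree ℱ (insert i T) + setDegree (ℱ.nonMemberSubfamily i) T = setDegree ℱ T := by
  rw [setDegree, setDegree, setDegree, nonMemberSubfamily, filter_filter,
    ← card_filter_add_card_filter_not (s := {A ∈ ℱ | T ⊆ A}) (i ∈ ·), filter_filter, filter_filter]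
  simp only [insert_subset_iff, and_comm]

theorem setDegree_singleton_add (ℱ : Finset (Finset α)) (i : α) :
    setDegree ℱ {i} + #(ℱ.nonMemberSubfamily i) = #ℱ := by
  simpa [setDegree] using setDegree_insert_add ℱ i ∅

theorem nonMemberSubfamily_subset_powersetCard [Fintype α]
    (hℱ : (ℱ : Set (Finset α)).Sized k) (i : α) :
    ℱ.nonMemberSubfamily i ⊆ powersetCard k {i}ᶜ := by
  intro A hA
  rw [mem_nonMemberSubfamily] at hA
  rw [mem_powersetCard, subset_compl_iff_disjoint_right, disjoint_singleton_right]
  exact ⟨hA.2, hℱ hA.1⟩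

theorem setDegree_add_card_excluded_le [Fintype α] (hℱ : (ℱ : Set (Finset α)).Sized k)
    (hint : (ℱ : Set (Finset α)).Intersecting) (h𝒢ℱ : 𝒢 ⊆ ℱ) (h𝒢S : ∀ G ∈ 𝒢, Disjoint G S) :
    setDegree ℱ S + #(excluded Sᶜ 𝒢 (k - #S)) ≤ (Fintype.card α - #S).choose (k - #S) := by
  have card_link : setDegree ℱ S = #({A ∈ ℱ | S ⊆ A}.image (· \ S)) := by
    refine (card_image_of_injOn fun A hA B hB hAB ↦ ?_).symm
    rw [← sdiff_union_of_subset (mem_filter.1 hA).2, ← sdiff_union_of_subset (mem_filter.1 hB).2]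
    exact congrArg (· ∪ S) hAB
  rw [card_link, ← card_compl]
  refine card_add_card_excluded_le (image_subset_iff.2 fun A hA ↦ ?_) (forall_mem_image.2 ?_)
  · rw [mem_filter] at hA
    rw [mem_powersetCard, card_sdiff_of_subset hA.2, hℱ hA.1]
    exact ⟨subset_compl_iff_disjoint_right.2 sdiff_disjoint, rfl⟩
  · intro A hA G hG hAG
    have hSA := (mem_filter.1 hA).2
    refine hint (mem_coe.2 (mem_filter.1 hA).1) (mem_coe.2 (h𝒢ℱ hG)) ?_
    rw [← sdiff_union_of_subset hSA, disjoint_union_left]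
    exact ⟨hAG, (h𝒢S G hG).symm⟩

theorem sum_setDegree (ℱ : Finset (Finset α)) (X : Finset α) (t : ℕ) :
    ∑ T ∈ powersetCard t X, setDegree ℱ T = ∑ A ∈ ℱ, (#(A ∩ X)).choose t := by
  simp only [setDegree, card_filter]
  rw [sum_comm]
  refine sum_congr rfl fun A _ ↦ ?_
  rw [← card_filter, ← card_powersetCard]
  congr 1
  ext T
  simp only [mem_filter, mem_powersetCard, subset_inter_iff]
  tauto

theorem sum_card_filter_disjoint (ℱ : Finset (Finset α)) (X : Finset α) (t : ℕ) :
    ∑ T ∈ powersetCard t X, #{A ∈ ℱ | Disjoint A T} = ∑ A ∈ ℱ, (#(X \ A)).choose t := by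
  simp only [card_filter]
  rw [sum_comm]
  refine sum_congr rfl fun A _ ↦ ?_
  rw [← card_filter, ← card_powersetCard]
  congr 1
  ext T
  simp only [mem_filter, mem_powersetCard, subset_sdiff, disjoint_comm (a := A)]
  tauto

theorem exists_choose_mul_setDegree_le (ℱ : Finset (Finset α)) (ht : t ≤ #X) :
    ∃ T ⊆ X, #T = t ∧ (#X).choose t * setDegree ℱ T ≤ ∑ A ∈ ℱ, (#(A ∩ X)).choose t := by
  obtain ⟨T, hT, hmin⟩ := exists_min_image _ (setDegree ℱ) (powersetCard_nonempty.2 ht)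
  refine ⟨T, (mem_powersetCard.1 hT).1, (mem_powersetCard.1 hT).2, ?_⟩
  rw [← sum_setDegree, ← card_powersetCard, ← smul_eq_mul]
  exact card_nsmul_le_sum _ _ _ hmin

theorem exists_setDegree_lt_card_filter_disjoint (hℱ : ℱ ⊆ powersetCard k X)
    (hne : ℱ.Nonempty) (hk : k.choose t < (#X - k).choose t) :
    ∃ T ⊆ X, #T = t ∧ setDegree ℱ T < #{A ∈ ℱ | Disjoint A T} := by
  have sum_lt : ∑ T ∈ powersetCard t X, setDegree ℱ T
      < ∑ T ∈ powersetCard t X, #{A ∈ ℱ | Disjoint A T} := by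
    rw [sum_setDegree, sum_card_filter_disjoint]
    refine sum_lt_sum_of_nonempty hne fun A hA ↦ ?_
    obtain ⟨hAX, hA⟩ := mem_powersetCard.1 (hℱ hA)
    rwa [inter_eq_left.2 hAX, card_sdiff_of_subset hAX, hA]
  obtain ⟨T, hT, hlt⟩ := exists_lt_of_sum_lt sum_lt
  exact ⟨T, (mem_powersetCard.1 hT).1, (mem_powersetCard.1 hT).2, hlt⟩

end Degree

section FewAvoiding

variable {n k t : ℕ} {ℱ : Finset (Finset (Fin n))}

theorem choose_lt_choose_of_lt {a b : ℕ} (ht : 1 ≤ t) (hta : t ≤ a + 1) (hab : a < b) :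
    a.choose t < b.choose t := by
  obtain ⟨t, rfl⟩ : ∃ s, t = s + 1 := ⟨t - 1, by lia⟩
  calc a.choose (t + 1) < a.choose t + a.choose (t + 1) :=
        Nat.lt_add_of_pos_left (Nat.choose_pos (by lia))
    _ = (a + 1).choose (t + 1) := (Nat.choose_succ_succ' a t).symm
    _ ≤ b.choose (t + 1) := Nat.choose_le_choose _ hab

/-- Choose `T` so that more of the members avoiding `i` are disjoint from `T` than contain `T`: the
degree of `insert i T` drops by more than is gained from the members that avoid `i`. -/
theorem exists_setDegree_add_le_of_card_nonMemberSubfamily_le (ht : 1 ≤ t) (htk : t + 3 ≤ k)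
    (hn : 2 * k + t + 1 ≤ n) (hℱ : (ℱ : Set (Finset (Fin n))).Sized k)
    (hint : (ℱ : Set (Finset (Fin n))).Intersecting) {i : Fin n}
    (hne : (ℱ.nonMemberSubfamily i).Nonempty)
    (hcard : #(ℱ.nonMemberSubfamily i) ≤ (n - 2 * t - 3).choose (k - t - 2)) :
    ∃ T : Finset (Fin n), #T = t ∧
      setDegree ℱ T + (n - t - k - 1).choose (k - t - 1) ≤ (n - t - 1).choose (k - t - 1) := by
  have hcompl : #({i}ᶜ : Finset (Fin n)) = n - 1 := by simp [card_compl]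
  obtain ⟨T, hTi, hT, hlt⟩ := exists_setDegree_lt_card_filter_disjoint
    (nonMemberSubfamily_subset_powersetCard hℱ i) hne
    (choose_lt_choose_of_lt (b := #{i}ᶜ - k) ht (by lia) (by lia))
  rw [subset_compl_iff_disjoint_right, disjoint_singleton_right] at hTi
  have hS : #(insert i T) = t + 1 := by rw [card_insert_of_notMem hTi, hT]
  set 𝒢 := {A ∈ ℱ.nonMemberSubfamily i | Disjoint A T} with h𝒢
  have h𝒢ℱ : 𝒢 ⊆ ℱ := (filter_subset _ _).trans (filter_subset _ _)
  have h𝒢S : ∀ G ∈ 𝒢, Disjoint G (insert i T) := fun G hG ↦ by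
    rw [h𝒢, mem_filter, mem_nonMemberSubfamily] at hG
    exact disjoint_insert_right.2 ⟨hG.1.2, hG.2⟩
  have h𝒢k : 𝒢 ⊆ powersetCard k (insert i T)ᶜ := fun G hG ↦
    mem_powersetCard.2 ⟨subset_compl_iff_disjoint_right.2 (h𝒢S G hG), hℱ (h𝒢ℱ hG)⟩
  have degree_insert := setDegree_add_card_excluded_le hℱ hint h𝒢ℱ h𝒢S
  have many_excluded := choose_add_card_le_card_excluded_add_one (r := n - t - k - 2)
    (l := k - t - 2) h𝒢k (by rw [card_compl, Fintype.card_fin, hS]; lia) (by lia) (by lia)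
    (by lia) (by lia) (by
      rw [Nat.choose_symm_add, show n - t - k - 2 + 1 + (k - t - 2) = n - 2 * t - 3 by lia]
      exact (card_filter_le _ _).trans hcard)
  rw [hS, Fintype.card_fin] at degree_insert
  rw [show n - t - k - 2 + 1 = n - t - k - 1 by lia, show k - t - 2 + 1 = k - (t + 1) by lia]
    at many_excluded
  rw [show k - t - 1 = k - (t + 1) by lia, show n - t - 1 = n - (t + 1) by lia]
  have := setDegree_insert_add ℱ i T
  refine ⟨T, hT, ?_⟩
  lia

end FewAvoiding

/-! ### Stability from one avoided point -/

section ForbiddenLink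

variable {α : Type*} [DecidableEq α] {ℱ : Finset (Finset α)}

theorem not_disjoint_of_mem_memberSubfamily_nonMemberSubfamily
    (hint : (ℱ : Set (Finset α)).Intersecting) {i j : α} {A B : Finset α}
    (hA : A ∈ (ℱ.nonMemberSubfamily j).memberSubfamily i)
    (hB : B ∈ (ℱ.nonMemberSubfamily i).memberSubfamily j) : ¬Disjoint A B := by
  rw [mem_memberSubfamily, mem_nonMemberSubfamily, mem_insert, not_or] at hA hB
  intro hAB
  refine hint hA.1.1 hB.1.1 ?_
  rw [disjoint_insert_left, disjoint_insert_right, mem_insert, not_or]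
  exact ⟨hB.1.2, hA.1.2.2, hAB⟩

variable [Fintype α] {k : ℕ}

/-- The `(k - 1)`-sets `B ∌ i` that are disjoint from some member of `ℱ` avoiding `i`. For these,
the `k`-set `insert i B` cannot belong to an intersecting family `ℱ`. -/
def forbiddenLink (ℱ : Finset (Finset α)) (k : ℕ) (i : α) : Finset (Finset α) :=
  excluded {i}ᶜ (ℱ.nonMemberSubfamily i) (k - 1)

theorem setDegree_singleton_add_card_forbiddenLink_le (hℱ : (ℱ : Set (Finset α)).Sized k)
    (hint : (ℱ : Set (Finset α)).Intersecting) (i : α) :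
    setDegree ℱ {i} + #(forbiddenLink ℱ k i) ≤ (Fintype.card α - 1).choose (k - 1) :=
  setDegree_add_card_excluded_le (S := {i}) hℱ hint (filter_subset _ _) fun _ hA ↦
    disjoint_singleton_right.2 (mem_nonMemberSubfamily.1 hA).2

theorem card_add_card_forbiddenLink_le (hℱ : (ℱ : Set (Finset α)).Sized k)
    (hint : (ℱ : Set (Finset α)).Intersecting) (i : α) :
    #ℱ + #(forbiddenLink ℱ k i)
      ≤ (Fintype.card α - 1).choose (k - 1) + #(ℱ.nonMemberSubfamily i) := by
  have := setDegree_singleton_add_card_forbiddenLink_le hℱ hint i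
  have := setDegree_singleton_add ℱ i
  lia

theorem memberSubfamily_nonMemberSubfamily_subset_powersetCard
    (hℱ : (ℱ : Set (Finset α)).Sized k) (i j : α) :
    (ℱ.nonMemberSubfamily j).memberSubfamily i ⊆ powersetCard (k - 1) {i, j}ᶜ := by
  intro A hA
  obtain ⟨hjA, hiA⟩ := mem_memberSubfamily.1 hA
  rw [mem_nonMemberSubfamily, mem_insert, not_or] at hjA
  rw [mem_powersetCard, subset_compl_iff_disjoint_right, disjoint_insert_right,
    disjoint_singleton_right, ← hℱ hjA.1, card_insert_of_notMem hiA]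
  exact ⟨⟨hiA, hjA.2.2⟩, rfl⟩

end ForbiddenLink

section Stability

variable {n k m : ℕ} {ℱ : Finset (Finset (Fin n))} {i j : Fin n}

theorem card_compl_singleton_eq_add (hkn : k + 2 ≤ n) (i : Fin n) :
    #({i}ᶜ : Finset (Fin n)) = k + (n - k - 2 + 1) := by
  rw [card_compl, Fintype.card_fin, card_singleton]
  lia

theorem choose_sub_three_eq (hk : 3 ≤ k) (hn : 4 ≤ n) :
    (n - 3).choose (k - 2) = (n - 4).choose (k - 3) + (n - 4).choose (k - 2) := by
  rw [show n - 3 = n - 4 + 1 by lia, show k - 2 = k - 3 + 1 by lia, Nat.choose_succ_succ']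

theorem choose_sub_three_pred_eq (hk : 2 ≤ k) (hn : 4 ≤ n) :
    (n - 3).choose (k - 1) = (n - 4).choose (k - 2) + (n - 4).choose (k - 1) := by
  rw [show n - 3 = n - 4 + 1 by lia, show k - 1 = k - 2 + 1 by lia, Nat.choose_succ_succ']

theorem mul_self_add_mul_le_card_forbiddenLink_mul (hk : 3 ≤ k) (hn : 2 * k ≤ n)
    (hℱ : (ℱ : Set (Finset (Fin n))).Sized k)
    (hcard : #(ℱ.nonMemberSubfamily i) = (n - 3).choose (k - 2) + m)
    (hm : m ≤ (n - 3).choose (k - 1)) :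
    (n - 3).choose (k - 1) * (n - 3).choose (k - 1) + m * (n - 3).choose (k - 2)
      ≤ #(forbiddenLink ℱ k i) * (n - 3).choose (k - 1) := by
  have symm : (n - 3).choose (n - k - 2 + 1) = (n - 3).choose (k - 2) :=
    Nat.choose_symm_of_eq_add (by lia)
  have symm_pred : (n - 3).choose (n - k - 2) = (n - 3).choose (k - 1) :=
    Nat.choose_symm_of_eq_add (by lia)
  have := choose_mul_add_le_card_excluded (l := k - 2) (x := n - 3) (m := m)
    (nonMemberSubfamily_subset_powersetCard hℱ i) (card_compl_singleton_eq_add (by lia) i)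
    (by lia) (by lia) (by lia) (by rw [symm, hcard]) (by rwa [symm_pred])
  rwa [symm_pred, show k - 2 + 1 = k - 1 by lia] at this

theorem choose_add_card_le_card_forbiddenLink_add (hk : 3 ≤ k) (hn : 2 * k ≤ n)
    (hℱ : (ℱ : Set (Finset (Fin n))).Sized k)
    (hle : (n - 4).choose (k - 3) ≤ #(ℱ.nonMemberSubfamily i))
    (hge : #(ℱ.nonMemberSubfamily i) ≤ (n - 3).choose (k - 2)) :
    (n - 3).choose (k - 1) + #(ℱ.nonMemberSubfamily i)
      ≤ #(forbiddenLink ℱ k i) + (n - 3).choose (k - 2) := by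
  rw [choose_sub_three_eq hk (by lia)] at hge ⊢
  rw [choose_sub_three_pred_eq (by lia) (by lia)]
  obtain ⟨m, hm⟩ := Nat.exists_eq_add_of_le hle
  have symm : (n - 4).choose (n - k - 2 + 1) = (n - 4).choose (k - 3) :=
    Nat.choose_symm_of_eq_add (by lia)
  have symm_pred : (n - 4).choose (n - k - 2) = (n - 4).choose (k - 2) :=
    Nat.choose_symm_of_eq_add (by lia)
  have := choose_mul_add_le_card_excluded (l := k - 2) (x := n - 4) (m := m)
    (nonMemberSubfamily_subset_powersetCard hℱ i) (card_compl_singleton_eq_add (by lia) i)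
    (by lia) (by lia) (by lia) (by rw [symm, hm]) (by rw [symm_pred]; lia)
  rw [symm_pred, ← add_mul, show k - 2 + 1 = k - 1 by lia] at this
  have : _ ≤ #(forbiddenLink ℱ k i) := Nat.le_of_mul_le_mul_right this (Nat.choose_pos (by lia))
  lia

theorem mul_card_le_mul_card_forbiddenLink (hk : 3 ≤ k) (hn : 2 * k ≤ n)
    (hℱ : (ℱ : Set (Finset (Fin n))).Sized k)
    (hcard : #(ℱ.nonMemberSubfamily i) ≤ (n - 3).choose (k - 2)) :
    (n - k - 1) * #(ℱ.nonMemberSubfamily i) ≤ (k - 1) * #(forbiddenLink ℱ k i) := by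
  have := succ_mul_card_le_succ_mul_card_excluded (l := k - 2)
    (nonMemberSubfamily_subset_powersetCard hℱ i) (card_compl_singleton_eq_add (by lia) i)
    (by lia) (by lia) (by lia) (by
      rwa [Nat.choose_symm_add, show n - k - 2 + 1 + (k - 2) = n - 3 by lia])
  rwa [show n - k - 2 + 1 = n - k - 1 by lia, show k - 2 + 1 = k - 1 by lia] at this

/-- The bound on the size of an intersecting family of `k`-subsets of `Fin n` that holds once some
point is avoided by about `C(n-3,k-2)` members. With `W = C(n-3,k-1)` and `Y = C(n-3,k-2)` it is
`C(n-1,k-1) + γ - W - (γ - Y) Y / W` at `γ = 3 Y / 2`, where `γ` stands for the number of members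
avoiding the point and `W + (γ - Y) Y / W` for the size of the forbidden link. -/
noncomputable def stabilityBound (n k : ℕ) : ℝ :=
  (n - 1).choose (k - 1) - (((n - 3).choose (k - 1) : ℝ) - (n - 3).choose (k - 2)) *
    (2 * (n - 3).choose (k - 1) - (n - 3).choose (k - 2)) / (2 * (n - 3).choose (k - 1))

theorem choose_sub_three_le (hn : 2 * k ≤ n) : (n - 3).choose (k - 2) ≤ (n - 3).choose (k - 1) :=
  choose_le_choose_of_add_le (by lia) (by lia)

theorem card_le_stabilityBound_of_mul_le (hkn : k + 2 ≤ n)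
    (h : 2 * ((n - 3).choose (k - 1) : ℝ) * #ℱ
      + (((n - 3).choose (k - 1) : ℝ) - (n - 3).choose (k - 2)) *
        (2 * (n - 3).choose (k - 1) - (n - 3).choose (k - 2))
      ≤ 2 * ((n - 3).choose (k - 1) : ℝ) * (n - 1).choose (k - 1)) :
    (#ℱ : ℝ) ≤ stabilityBound n k := by
  have hW : (0 : ℝ) < 2 * (n - 3).choose (k - 1) := by
    exact_mod_cast Nat.mul_pos two_pos (Nat.choose_pos (by lia))
  rw [stabilityBound, le_sub_iff_add_le, ← le_sub_iff_add_le', div_le_iff₀ hW]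
  linarith

theorem card_le_stabilityBound_of_add_le (hk : 2 ≤ k) (hn : 2 * k ≤ n)
    (hℱ : (ℱ : Set (Finset (Fin n))).Sized k) (hint : (ℱ : Set (Finset (Fin n))).Intersecting)
    (h : (n - 3).choose (k - 1) + #(ℱ.nonMemberSubfamily i)
      ≤ #(forbiddenLink ℱ k i) + (n - 3).choose (k - 2)) :
    (#ℱ : ℝ) ≤ stabilityBound n k := by
  have card_le : #ℱ + (n - 3).choose (k - 1) ≤ (n - 1).choose (k - 1) + (n - 3).choose (k - 2) := by
    have := card_add_card_forbiddenLink_le hℱ hint i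
    rw [Fintype.card_fin] at this
    lia
  refine card_le_stabilityBound_of_mul_le (by lia) ?_
  have hYW : ((n - 3).choose (k - 2) : ℝ) ≤ (n - 3).choose (k - 1) := by
    exact_mod_cast choose_sub_three_le hn
  have hY : (0 : ℝ) ≤ (n - 3).choose (k - 2) := by positivity
  have card_le : (#ℱ : ℝ) + (n - 3).choose (k - 1)
      ≤ (n - 1).choose (k - 1) + (n - 3).choose (k - 2) := by exact_mod_cast card_le
  linear_combination ((n - 3).choose (k - 2) : ℝ) * hYW
    + 2 * mul_le_mul_of_nonneg_left card_le (hY.trans hYW)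

theorem card_le_stabilityBound_of_mul_le_mul (hk : 2 ≤ k) (hn : 2 * k ≤ n)
    (hℱ : (ℱ : Set (Finset (Fin n))).Sized k) (hint : (ℱ : Set (Finset (Fin n))).Intersecting)
    (hγ : (n - 3).choose (k - 2) ≤ #(ℱ.nonMemberSubfamily i))
    (h : (n - k - 1) * #(ℱ.nonMemberSubfamily i) ≤ (k - 1) * #(forbiddenLink ℱ k i)) :
    (#ℱ : ℝ) ≤ stabilityBound n k := by
  refine card_le_stabilityBound_of_add_le (i := i) hk hn hℱ hint ?_
  have hY : 0 < (n - 3).choose (k - 2) := Nat.choose_pos (by lia)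
  have hYW := choose_sub_three_le hn
  have hWY : (n - 3).choose (k - 1) * (k - 1) = (n - 3).choose (k - 2) * (n - k - 1) := by
    have := Nat.choose_succ_right_eq (n - 3) (k - 2)
    rwa [show k - 2 + 1 = k - 1 by lia, show n - 3 - (k - 2) = n - k - 1 by lia] at this
  have mul_le : (n - 3).choose (k - 1) * #(ℱ.nonMemberSubfamily i)
      ≤ (n - 3).choose (k - 2) * #(forbiddenLink ℱ k i) := by
    refine Nat.le_of_mul_le_mul_right ?_ (show 0 < k - 1 by lia)
    linear_combination (n - 3).choose (k - 2) * h + #(ℱ.nonMemberSubfamily i) * hWY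
  refine Nat.le_of_mul_le_mul_left ?_ hY
  generalize (n - 3).choose (k - 2) = Y at *
  generalize (n - 3).choose (k - 1) = W at *
  obtain ⟨d, rfl⟩ := Nat.exists_eq_add_of_le hYW
  linear_combination mul_le + d * hγ

/-- With `γ = #(ℱ.nonMemberSubfamily i)`, the bound on `C(n-1,k-1) + γ - #(forbiddenLink ℱ k i)` is
constant for `Y / 2 ≤ γ ≤ Y` and increasing for `γ ≥ Y`. -/
theorem card_le_stabilityBound_of_le_of_le (hk : 3 ≤ k) (hn : 2 * k ≤ n)
    (hℱ : (ℱ : Set (Finset (Fin n))).Sized k) (hint : (ℱ : Set (Finset (Fin n))).Intersecting)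
    (hle : (n - 3).choose (k - 2) ≤ 2 * #(ℱ.nonMemberSubfamily i))
    (hge : 2 * #(ℱ.nonMemberSubfamily i) ≤ 3 * (n - 3).choose (k - 2)) :
    (#ℱ : ℝ) ≤ stabilityBound n k := by
  have hYW := choose_sub_three_le hn
  obtain hγ | hγ := le_total #(ℱ.nonMemberSubfamily i) ((n - 3).choose (k - 2))
  · refine card_le_stabilityBound_of_add_le (by lia) hn hℱ hint
      (choose_add_card_le_card_forbiddenLink_add hk hn hℱ ?_ hγ)
    have := choose_sub_three_eq hk (show 4 ≤ n by lia)
    have : (n - 4).choose (k - 3) ≤ (n - 4).choose (k - 2) :=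
      choose_le_choose_of_add_le (by lia) (by lia)
    lia
  obtain ⟨m, hm⟩ := Nat.exists_eq_add_of_le hγ
  have link := mul_self_add_mul_le_card_forbiddenLink_mul hk hn hℱ hm (by lia)
  have card_le := card_add_card_forbiddenLink_le hℱ hint i
  rw [Fintype.card_fin] at card_le
  refine card_le_stabilityBound_of_mul_le (by lia) ?_
  rw [hm] at card_le hge
  rify at hYW link card_le hge
  have hW : (0 : ℝ) ≤ (n - 3).choose (k - 1) := by positivity
  linear_combination mul_nonneg (sub_nonneg.2 hYW) (sub_nonneg.2 hge)
    + 2 * mul_le_mul_of_nonneg_left card_le hW + 2 * link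

theorem card_memberSubfamily_nonMemberSubfamily_le (hk : 2 ≤ k) (hn : 2 * k ≤ n)
    (hℱ : (ℱ : Set (Finset (Fin n))).Sized k) (hint : (ℱ : Set (Finset (Fin n))).Intersecting)
    (hij : i ≠ j)
    (hcard : (n - 3).choose (k - 2) ≤ #((ℱ.nonMemberSubfamily j).memberSubfamily i)) :
    #((ℱ.nonMemberSubfamily i).memberSubfamily j) ≤ (n - 3).choose (k - 2) := by
  have hX : #({i, j}ᶜ : Finset (Fin n)) = n - 2 := by
    rw [card_compl, Fintype.card_fin, card_pair hij]
  have symm : (n - 3).choose (n - k - 1) = (n - 3).choose (k - 2) :=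
    Nat.choose_symm_of_eq_add (by lia)
  have pascal : (n - 2).choose (k - 1) = (n - 3).choose (k - 2) + (n - 3).choose (k - 1) := by
    rw [show n - 2 = n - 3 + 1 by lia, show k - 1 = k - 2 + 1 by lia, Nat.choose_succ_succ']
  have := card_add_choose_le_of_choose_le (r := n - k - 1) (x := n - 3)
    (memberSubfamily_nonMemberSubfamily_subset_powersetCard hℱ i j) (by lia)
    (by lia) (by lia) (by lia)
    (pair_comm j i ▸ memberSubfamily_nonMemberSubfamily_subset_powersetCard hℱ j i)
    (fun A hA G hG ↦ not_disjoint_of_mem_memberSubfamily_nonMemberSubfamily hint hA hG)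
    (by rwa [symm])
  rw [hX] at this
  lia

theorem choose_le_two_mul_card_nonMemberSubfamily_nonMemberSubfamily (hk : 2 ≤ k) (hn : 2 * k ≤ n)
    (hℱ : (ℱ : Set (Finset (Fin n))).Sized k) (hint : (ℱ : Set (Finset (Fin n))).Intersecting)
    (hij : i ≠ j) (hi : 3 * (n - 3).choose (k - 2) ≤ 2 * #(ℱ.nonMemberSubfamily i))
    (hj : 3 * (n - 3).choose (k - 2) ≤ 2 * #(ℱ.nonMemberSubfamily j)) :
    (n - 3).choose (k - 2) ≤ 2 * #((ℱ.nonMemberSubfamily i).nonMemberSubfamily j) := by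
  have split_i := card_memberSubfamily_add_card_nonMemberSubfamily j (ℱ.nonMemberSubfamily i)
  have split_j := card_memberSubfamily_add_card_nonMemberSubfamily i (ℱ.nonMemberSubfamily j)
  have comm : (ℱ.nonMemberSubfamily i).nonMemberSubfamily j
      = (ℱ.nonMemberSubfamily j).nonMemberSubfamily i := filter_comm ..
  have cross := card_memberSubfamily_nonMemberSubfamily_le hk hn hℱ hint hij
  rw [comm] at split_i ⊢
  lia

end Stability

/-! ### Shifted families -/

section Shifted

variable {α : Type*} [LinearOrder α] {ℱ : Finset (Finset α)} {A B : Finset α} {i j : α}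

/-- A family is shifted if replacing an element of a member by a smaller one always yields a
member. -/
def IsShifted (ℱ : Finset (Finset α)) : Prop :=
  ∀ ⦃i j : α⦄, j < i → UV.IsCompressed {j} {i} ℱ

theorem IsShifted.insert_erase_mem (hℱ : IsShifted ℱ) (hji : j < i) (hA : A ∈ ℱ) (hi : i ∈ A)
    (hj : j ∉ A) : insert j (A.erase i) ∈ ℱ := by
  have hA : A ∈ 𝓒 {j} {i} ℱ := by rwa [(hℱ hji).eq]
  have := UV.sup_sdiff_mem_of_mem_compression hA (singleton_subset_iff.2 hi)
    (disjoint_singleton_left.2 hj)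
  rwa [sdiff_singleton_eq_erase, sup_eq_union, union_comm, ← insert_eq,
    erase_insert_of_ne hji.ne] at this

theorem exists_mem_sdiff_lt_of_card_filter_le (hi : i ∈ A \ B)
    (h : #{x ∈ A | x ≤ i} ≤ #{x ∈ B | x ≤ i}) : ∃ j ∈ B \ A, j < i := by
  rw [mem_sdiff] at hi
  have not_subset : ¬{x ∈ B | x ≤ i} ⊆ {x ∈ A | x ≤ i} := fun hBA ↦
    hi.2 (mem_filter.1 ((eq_of_subset_of_card_le hBA h).ge (mem_filter.2 ⟨hi.1, le_rfl⟩))).1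
  obtain ⟨j, hjB, hjA⟩ := Finset.not_subset.1 not_subset
  rw [mem_filter] at hjB hjA
  have hjA : j ∉ A := fun hj ↦ hjA ⟨hj, hjB.2⟩
  exact ⟨j, mem_sdiff.2 ⟨hjB.1, hjA⟩, hjB.2.lt_of_ne fun h ↦ hjA (h ▸ hi.1)⟩

theorem card_insert_erase_filter_le (hi : i ∈ A \ B) (hmin : ∀ x ∈ A \ B, i ≤ x) (hj : j ∈ B \ A)
    (hji : j < i) {p : α} (h : #{x ∈ A | x ≤ p} ≤ #{x ∈ B | x ≤ p}) :
    #{x ∈ insert j (A.erase i) | x ≤ p} ≤ #{x ∈ B | x ≤ p} := by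
  rw [mem_sdiff] at hi hj
  obtain hp | hp := lt_or_ge p i
  · refine card_le_card fun x hx ↦ ?_
    rw [mem_filter, mem_insert, mem_erase] at hx
    refine mem_filter.2 ⟨?_, hx.2⟩
    rcases hx with ⟨rfl | ⟨-, hxA⟩, hxp⟩
    · exact hj.1
    · by_contra hxB
      exact (hxp.trans_lt hp).not_ge (hmin x (mem_sdiff.2 ⟨hxA, hxB⟩))
  · rwa [filter_insert, if_pos (hji.le.trans hp), filter_erase, card_insert_of_notMem (by
      simp [hj.2]), card_erase_add_one (mem_filter.2 ⟨hi.1, hp⟩)]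

/-- If `i` is the least element of `A \ B`, then replacing it by some smaller `j ∈ B \ A` keeps
`A` in the family and brings it closer to `B`. -/
theorem IsShifted.mem_of_card_filter_le (hℱ : IsShifted ℱ) (hA : A ∈ ℱ) (hAB : #A = #B)
    (h : ∀ p, #{x ∈ A | x ≤ p} ≤ #{x ∈ B | x ≤ p}) : B ∈ ℱ := by
  induction hm : #(A \ B) generalizing A with
  | zero =>
    rw [card_eq_zero, sdiff_eq_empty_iff_subset] at hm
    rwa [← eq_of_subset_of_card_le hm hAB.ge]
  | succ m ih =>
    obtain ⟨i, hi, hmin⟩ := exists_min_image (A \ B) id (card_pos.1 (by lia))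
    obtain ⟨j, hj, hji⟩ := exists_mem_sdiff_lt_of_card_filter_le hi (h i)
    have ⟨hiA, _⟩ := mem_sdiff.1 hi
    have ⟨hjB, hjA⟩ := mem_sdiff.1 hj
    refine ih (hℱ.insert_erase_mem hji hA hiA hjA) ?_
      (fun p ↦ card_insert_erase_filter_le hi hmin hj hji (h p)) ?_
    · rw [card_insert_of_notMem fun hj ↦ hjA (mem_of_mem_erase hj), card_erase_add_one hiA, hAB]
    · rw [insert_sdiff_of_mem _ hjB, erase_sdiff_comm, card_erase_of_mem hi, hm,
        Nat.add_sub_cancel]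

end Shifted

section HittingTime

variable {n k q : ℕ} {G H X : Finset (Fin n)} {ℱ : Finset (Finset (Fin n))}

/-- The elements of `G` among the first `q` elements of `Fin n`. -/
def below (G : Finset (Fin n)) (q : ℕ) : Finset (Fin n) := {x ∈ G | x.val < q}

theorem below_subset (G : Finset (Fin n)) (q : ℕ) : below G q ⊆ G := filter_subset _ _

theorem card_below_succ_le (G : Finset (Fin n)) (q : ℕ) :
    #(below G (q + 1)) ≤ #(below G q) + 1 := by
  have card_sdiff_le : #(below G (q + 1) \ below G q) ≤ 1 := card_le_one.2 fun x hx y hy ↦ by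
    simp only [below, mem_sdiff, mem_filter, not_and] at hx hy
    exact Fin.ext (by have := hx.2 hx.1.1; have := hy.2 hy.1.1; lia)
  exact (card_le_card_sdiff_add_card (t := below G q)).trans (by lia)

theorem below_eq_below_of_le {p : ℕ} (h : below G p = below H p) (hqp : q ≤ p) :
    below G q = below H q := by
  have below_below (G : Finset (Fin n)) : below (below G p) q = below G q := by
    rw [below, below, below, filter_filter]
    exact filter_congr fun x _ ↦ ⟨And.right, fun hx ↦ ⟨hx.trans_le hqp, hx⟩⟩
  rw [← below_below G, h, below_below]

theorem IsShifted.map_mem (hℱ : IsShifted ℱ) (hG : G ∈ ℱ) (hGle : ∀ q, 2 * #(below G q) ≤ q)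
    (f : Fin #G ↪ Fin n) (hf : ∀ m, (f m).val ≤ 2 * m + 1) : univ.map f ∈ ℱ := by
  refine hℱ.mem_of_card_filter_le hG (by rw [card_map, card_univ, Fintype.card_fin]) fun p ↦ ?_
  have below_eq (G : Finset (Fin n)) : {x ∈ G | x ≤ p} = below G (p + 1) :=
    filter_congr fun x _ ↦ by rw [Fin.le_def, Nat.lt_succ_iff]
  rw [below_eq, below_eq]
  have hle := hGle (p + 1)
  calc #(below G (p + 1)) = #(({m | m.val < #(below G (p + 1))} : Finset (Fin #G)).map f) := by
        rw [card_map, Fin.card_filter_val_lt, min_eq_right (card_le_card (below_subset _ _))]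
    _ ≤ #(below (univ.map f) (p + 1)) := by
        refine card_le_card fun x hx ↦ ?_
        obtain ⟨m, hm, rfl⟩ := mem_map.1 hx
        have := (mem_filter.1 hm).2
        have := hf m
        exact mem_filter.2 ⟨mem_map_of_mem _ (mem_univ _), by lia⟩

/-- Otherwise `ℱ` would contain both `{0, 2, …, 2k - 2}` and `{1, 3, …, 2k - 1}`. -/
theorem IsShifted.exists_two_mul_card_below_eq (hℱ : IsShifted ℱ)
    (hint : (ℱ : Set (Finset (Fin n))).Intersecting) (hG : G ∈ ℱ) (hn : 2 * #G ≤ n) :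
    ∃ q, 2 * #(below G q) = q + 1 := by
  by_contra! hne
  have hGle (q : ℕ) : 2 * #(below G q) ≤ q := by
    induction q with
    | zero => simp [below]
    | succ q ih =>
      have := card_below_succ_le G q
      have := hne (q + 1)
      lia
  have two_mul_inj (c : ℕ) (hc : c ≤ 1) :
      Function.Injective fun m : Fin #G ↦ (⟨2 * m + c, by lia⟩ : Fin n) := fun a b hab ↦
    Fin.ext (by have := congrArg Fin.val hab; lia)
  refine hint (hℱ.map_mem hG hGle ⟨_, two_mul_inj 0 zero_le_one⟩ fun m ↦ ?_)
    (hℱ.map_mem hG hGle ⟨_, two_mul_inj 1 le_rfl⟩ fun m ↦ ?_) ?_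
  · exact Nat.le_succ _
  · exact le_rfl
  · rw [disjoint_left]
    intro x hx hx'
    obtain ⟨a, -, rfl⟩ := mem_map.1 hx
    obtain ⟨b, -, hb⟩ := mem_map.1 hx'
    have : 2 * b.val + 1 = 2 * a.val + 0 := congrArg Fin.val hb
    lia

/-- The least `q` such that `G` contains exactly `(q + 1) / 2` of the first `q` elements of `Fin n`
(and `0` if there is none). -/
noncomputable def hittingTime (G : Finset (Fin n)) : ℕ := sInf {q | 2 * #(below G q) = q + 1}

theorem two_mul_card_below_hittingTime (h : ∃ q, 2 * #(below G q) = q + 1) :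
    2 * #(below G (hittingTime G)) = hittingTime G + 1 :=
  Nat.sInf_mem (s := {q | 2 * #(below G q) = q + 1}) h

theorem hittingTime_le (h : 2 * #(below G q) = q + 1) : hittingTime G ≤ q :=
  Nat.sInf_le (s := {q | 2 * #(below G q) = q + 1}) h

theorem hittingTime_eq_of_below_eq (hG : ∃ q, 2 * #(below G q) = q + 1)
    (hH : below H (hittingTime G) = below G (hittingTime G)) : hittingTime H = hittingTime G := by
  have hit_H : 2 * #(below H (hittingTime G)) = hittingTime G + 1 := by
    rw [hH, two_mul_card_below_hittingTime hG]
  have le := hittingTime_le hit_H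
  refine le.antisymm (hittingTime_le ?_)
  rw [← below_eq_below_of_le hH le, two_mul_card_below_hittingTime ⟨_, hit_H⟩]

theorem inter_below (h : G ⊆ X) (q : ℕ) : G ∩ below X q = below G q := by
  rw [below, below, inter_filter, inter_eq_left.2 h]

theorem card_below_compl_zero [NeZero n] (hqn : q ≤ n) :
    #(below ({0}ᶜ : Finset (Fin n)) q) = q - 1 := by
  obtain rfl | hq := q.eq_zero_or_pos
  · simp [below]
  have : below ({0}ᶜ : Finset (Fin n)) q = ({x | x.val < q} : Finset (Fin n)).erase 0 := by
    ext x
    simp only [below, mem_filter, mem_compl, mem_singleton, mem_erase, mem_univ, true_and]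
  rw [this, card_erase_of_mem (by simpa using hq), Fin.card_filter_val_lt, min_eq_right hqn]

theorem mul_card_le_mul_card_of_forall_fiber {α β κ : Type*} [DecidableEq κ] {s : Finset α}
    {t : Finset β} {f : α → κ} {g : β → κ} {a b : ℕ}
    (h : ∀ c ∈ s.image f, a * #{x ∈ s | f x = c} ≤ b * #{y ∈ t | g y = c}) :
    a * #s ≤ b * #t :=
  calc a * #s = ∑ c ∈ s.image f, a * #{x ∈ s | f x = c} := by
        rw [← mul_sum, ← card_eq_sum_card_image]
    _ ≤ ∑ c ∈ s.image f, b * #{y ∈ t | g y = c} := sum_le_sum h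
    _ ≤ b * #t := by
        rw [← mul_sum, sum_card_fiberwise_eq_card_filter]
        exact Nat.mul_le_mul_left _ (card_filter_le _ _)

theorem below_sdiff_eq (hGX : G ⊆ X) (hH : H ∩ below X q = below X q \ below G q) :
    below (X \ H) q = below G q := by
  rw [← inter_below sdiff_subset, sdiff_inter_right_comm, inter_eq_right.2 (below_subset X q),
    ← sdiff_inter_self_right, hH]
  exact Finset.sdiff_sdiff_eq_self (filter_subset_filter _ hGX)

theorem two_le_card_below_hittingTime [NeZero n] (hG : ∃ q, 2 * #(below G q) = q + 1)
    (h0 : 0 ∉ G) : 2 ≤ #(below G (hittingTime G)) := by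
  have hit := two_mul_card_below_hittingTime hG
  by_contra! hlt
  obtain ⟨x, hx⟩ := card_pos.1 (show 0 < #(below G (hittingTime G)) by lia)
  obtain ⟨hxG, hx⟩ := mem_filter.1 hx
  have : x = 0 := Fin.ext (by rw [Fin.val_zero]; lia)
  exact h0 (this ▸ hxG)

theorem inter_below_hittingTime_eq (hG : ∃ q, 2 * #(below G q) = q + 1)
    (hH : ∃ q, 2 * #(below H q) = q + 1) (hHX : H ⊆ X)
    (h : below H (hittingTime H) = below G (hittingTime G)) :
    H ∩ below X (hittingTime G) = below G (hittingTime G) := by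
  have hit_G := two_mul_card_below_hittingTime hG
  have hit_H := two_mul_card_below_hittingTime hH
  rw [h] at hit_H
  rw [inter_below hHX, ← h]
  exact congrArg (below H) (by lia)

theorem add_mul_le_add_mul {a b c d e : ℕ} (ha : 0 < a) (hab : a ≤ b) (h : b * c ≤ a * d) :
    (b + e) * c ≤ (a + e) * d := by
  have hcd : c ≤ d := Nat.le_of_mul_le_mul_left ((Nat.mul_le_mul_right c hab).trans h) ha
  rw [add_mul, add_mul]
  exact add_le_add h (Nat.mul_le_mul_left e hcd)

theorem mul_card_filter_below_le [NeZero n] {𝒢 : Finset (Finset (Fin n))} (hn : 2 * k ≤ n)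
    (h𝒢 : 𝒢 ⊆ powersetCard k {0}ᶜ) (hit : ∀ G ∈ 𝒢, ∃ q, 2 * #(below G q) = q + 1) (hG : G ∈ 𝒢) :
    (n - k - 1) * #{H ∈ 𝒢 | below H (hittingTime H) = below G (hittingTime G)}
      ≤ (k - 1) * #{H ∈ excluded {0}ᶜ 𝒢 (k - 1) |
        below ({0}ᶜ \ H) (hittingTime ({0}ᶜ \ H)) = below G (hittingTime G)} := by
  obtain ⟨hGX, hGk⟩ := mem_powersetCard.1 (h𝒢 hG)
  set X : Finset (Fin n) := {0}ᶜ
  set τ := hittingTime G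
  set S := below G τ
  set P := below X τ
  have hSτ : 2 * #S = τ + 1 := two_mul_card_below_hittingTime (hit G hG)
  have two_le : 2 ≤ #S := two_le_card_below_hittingTime (hit G hG)
    (fun h0 ↦ by simpa [X] using hGX h0)
  have hSk : #S ≤ k := hGk ▸ card_le_card (below_subset G τ)
  have card_X : #X = n - 1 := by rw [card_compl, card_singleton, Fintype.card_fin]
  have card_P : #P = τ - 1 := card_below_compl_zero (by lia)
  have hSP : S ⊆ P := filter_subset_filter _ hGX
  have trace_eq : ∀ H ∈ ({H ∈ 𝒢 | below H (hittingTime H) = S} : Finset _), H ∩ P = S := by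
    intro H hH
    obtain ⟨hH𝒢, hHS⟩ := mem_filter.1 hH
    exact inter_below_hittingTime_eq (hit G hG) (hit H hH𝒢) (mem_powersetCard.1 (h𝒢 hH𝒢)).1 hHS
  have key := mul_card_le_mul_card_filter_excluded (below_subset X τ)
    ((filter_subset _ _).trans h𝒢) trace_eq (by lia)
  rw [show k - #S + 1 + #(P \ S) = k - 1 by rw [card_sdiff_of_subset hSP]; lia] at key
  have card_le : #{H ∈ excluded X {H ∈ 𝒢 | below H (hittingTime H) = S} (k - 1) | H ∩ P = P \ S}
      ≤ #{H ∈ excluded X 𝒢 (k - 1) | below (X \ H) (hittingTime (X \ H)) = S} := by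
    refine card_le_card fun H hH ↦ ?_
    obtain ⟨hH, hHP⟩ := mem_filter.1 hH
    have hHS : below (X \ H) τ = S := below_sdiff_eq hGX hHP
    exact mem_filter.2 ⟨excluded_mono (filter_subset _ _) hH,
      by rw [hittingTime_eq_of_below_eq (hit G hG) hHS, hHS]⟩
  have := add_mul_le_add_mul (e := #S - 2) (by lia) (by lia)
    (key.trans (Nat.mul_le_mul_left _ card_le))
  rwa [show #X - #P - (k - #S) + (#S - 2) = n - k - 1 by lia,
    show k - #S + 1 + (#S - 2) = k - 1 by lia] at this

/-- Split the members avoiding `0` according to their elements below the hitting time; a disjoint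
set has the complementary elements there. -/
theorem IsShifted.mul_card_le_mul_card_forbiddenLink_zero [NeZero n] (hn : 2 * k ≤ n)
    (hshift : IsShifted ℱ) (hℱ : (ℱ : Set (Finset (Fin n))).Sized k)
    (hint : (ℱ : Set (Finset (Fin n))).Intersecting) :
    (n - k - 1) * #(ℱ.nonMemberSubfamily 0) ≤ (k - 1) * #(forbiddenLink ℱ k 0) := by
  refine mul_card_le_mul_card_of_forall_fiber (f := fun G ↦ below G (hittingTime G))
    (g := fun H ↦ below ({0}ᶜ \ H) (hittingTime ({0}ᶜ \ H))) (forall_mem_image.2 fun G hG ↦ ?_)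
  refine mul_card_filter_below_le hn (nonMemberSubfamily_subset_powersetCard hℱ 0)
    (fun H hH ↦ ?_) hG
  have hH := (mem_nonMemberSubfamily.1 hH).1
  exact hshift.exists_two_mul_card_below_eq hint hH ((hℱ hH).symm ▸ hn)

end HittingTime

/-! ### Shifting -/

section Compression

variable {α M : Type*} [GeneralizedBooleanAlgebra α] [DecidableRel (α := α) Disjoint]
  [DecidableLE α] [DecidableEq α] {s : Finset α} {u v : α}

theorem sum_compression [AddCommMonoid M] (u v : α) (s : Finset α) (f : α → M) :
    ∑ a ∈ 𝓒 u v s, f a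
      = ∑ a ∈ s with UV.compress u v a ∈ s, f a
        + ∑ a ∈ s with UV.compress u v a ∉ s, f (UV.compress u v a) := by
  rw [UV.compression, sum_union UV.compress_disjoint, filter_image, sum_image UV.compress_injOn]

theorem card_filter_le_card_filter_compression {p : α → Prop} [DecidablePred p]
    (h : ∀ a ∈ s, p a → p (UV.compress u v a)) : #{a ∈ s | p a} ≤ #{a ∈ 𝓒 u v s | p a} := by
  rw [card_filter, card_filter, sum_compression, ← sum_filter_add_sum_filter_not s
    fun a ↦ UV.compress u v a ∈ s]
  gcongr with a ha
  split_ifs with hpa hpa' <;> simp_all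

theorem sum_compression_lt {f : α → ℕ} (hs : ¬UV.IsCompressed u v s)
    (h : ∀ a ∈ s, UV.compress u v a ∉ s → f (UV.compress u v a) < f a) :
    ∑ a ∈ 𝓒 u v s, f a < ∑ a ∈ s, f a := by
  rw [sum_compression, ← sum_filter_add_sum_filter_not s fun a ↦ UV.compress u v a ∈ s]
  refine add_lt_add_right (sum_lt_sum_of_nonempty ?_ fun a ha ↦ h a (mem_filter.1 ha).1
    (mem_filter.1 ha).2) _
  contrapose! hs
  rw [UV.IsCompressed, UV.compression, filter_image, hs, image_empty, union_empty]
  simpa [hs] using filter_union_filter_not_eq (fun a ↦ UV.compress u v a ∈ s) s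

end Compression

section Shift

variable {α : Type*} [DecidableEq α] {ℱ : Finset (Finset α)} {A : Finset α} {i j a : α}

theorem compress_singleton_of_mem_of_notMem (hi : i ∈ A) (hj : j ∉ A) (hij : i ≠ j) :
    UV.compress {j} {i} A = insert j (A.erase i) := by
  rw [UV.compress_of_disjoint_of_le (disjoint_singleton_left.2 hj) (singleton_subset_iff.2 hi),
    sdiff_singleton_eq_erase, sup_eq_union, union_comm, ← insert_eq, erase_insert_of_ne hij.symm]

theorem compress_singleton_of_notMem (hi : i ∉ A) : UV.compress {j} {i} A = A :=
  if_neg fun h ↦ hi (singleton_subset_iff.1 h.2)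

theorem notMem_compress_singleton (haj : a ≠ j) (ha : a ∉ A) : a ∉ UV.compress {j} {i} A := by
  rw [UV.compress]
  split_ifs
  · rw [mem_sdiff, sup_eq_union, mem_union, mem_singleton]
    exact fun h ↦ h.1.elim ha haj
  · exact ha

theorem card_nonMemberSubfamily_le_card_nonMemberSubfamily_compression (haj : a ≠ j) :
    #(ℱ.nonMemberSubfamily a) ≤ #((𝓒 {j} {i} ℱ).nonMemberSubfamily a) :=
  card_filter_le_card_filter_compression (p := (a ∉ ·)) fun _ _ ↦ notMem_compress_singleton haj

theorem card_nonMemberSubfamily_nonMemberSubfamily_le_card_nonMemberSubfamily_compression :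
    #((ℱ.nonMemberSubfamily i).nonMemberSubfamily j) ≤ #((𝓒 {j} {i} ℱ).nonMemberSubfamily j) := by
  have le : #{A ∈ ℱ | i ∉ A ∧ j ∉ A} ≤ #{A ∈ 𝓒 {j} {i} ℱ | i ∉ A ∧ j ∉ A} :=
    card_filter_le_card_filter_compression fun A _ hA ↦ by
      rwa [compress_singleton_of_notMem hA.1]
  rw [nonMemberSubfamily, nonMemberSubfamily, filter_filter]
  exact le.trans (card_le_card fun A hA ↦ mem_filter.2 (by simp_all))

theorem not_disjoint_of_mem_of_mem_compression (hint : (ℱ : Set (Finset α)).Intersecting)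
    {B : Finset α} (hA : A ∈ ℱ) (hA' : UV.compress {j} {i} A ∈ ℱ) (hB : B ∈ 𝓒 {j} {i} ℱ)
    (hBℱ : B ∉ ℱ) : ¬Disjoint A B := by
  intro hAB
  have hjB : j ∈ B := singleton_subset_iff.1 (UV.le_of_mem_compression_of_notMem hB hBℱ)
  have hiB : i ∉ B := disjoint_singleton_left.1 (UV.disjoint_of_mem_compression_of_notMem hB hBℱ)
  have hB' : (B ∪ {i}) \ {j} ∈ ℱ := UV.sup_sdiff_mem_of_mem_compression_of_notMem hB hBℱ
  have hjA : j ∉ A := disjoint_right.1 hAB hjB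
  by_cases hiA : i ∈ A
  · rw [compress_singleton_of_mem_of_notMem hiA hjA (ne_of_mem_of_not_mem hiA hjA)] at hA'
    refine hint hA' hB' (disjoint_left.2 fun x hx hx' ↦ ?_)
    simp only [mem_insert, mem_erase, mem_sdiff, mem_union, mem_singleton] at hx hx'
    obtain rfl | ⟨hxi, hxA⟩ := hx
    · exact hx'.2 rfl
    · exact disjoint_left.1 hAB hxA (hx'.1.resolve_right hxi)
  · refine hint hA hB' (.mono_right sdiff_subset (disjoint_union_right.2 ⟨hAB, ?_⟩))
    exact disjoint_singleton_right.2 hiA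

theorem compress_mem_of_mem_compression {u v : Finset α} {C : Finset α} (hC : C ∈ 𝓒 u v ℱ)
    (hCℱ : C ∈ ℱ) : UV.compress u v C ∈ ℱ :=
  ((UV.mem_compression.1 hC).resolve_right fun h ↦ h.1 hCℱ).2

theorem mem_of_mem_compression_singleton_of_notMem (hA : A ∈ 𝓒 {j} {i} ℱ) (hAℱ : A ∉ ℱ) : j ∈ A :=
  singleton_subset_iff.1 (UV.le_of_mem_compression_of_notMem hA hAℱ)

theorem intersecting_compression_singleton (hint : (ℱ : Set (Finset α)).Intersecting) (i j : α) :
    ((𝓒 {j} {i} ℱ : Finset (Finset α)) : Set (Finset α)).Intersecting := by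
  intro A hA B hB
  rw [mem_coe] at hA hB
  by_cases hAℱ : A ∈ ℱ
  · by_cases hBℱ : B ∈ ℱ
    · exact hint hAℱ hBℱ
    · exact not_disjoint_of_mem_of_mem_compression hint hAℱ
        (compress_mem_of_mem_compression hA hAℱ) hB hBℱ
  · by_cases hBℱ : B ∈ ℱ
    · exact fun h ↦ not_disjoint_of_mem_of_mem_compression hint hBℱ
        (compress_mem_of_mem_compression hB hBℱ) hA hAℱ h.symm
    · exact not_disjoint_iff.2 ⟨j, mem_of_mem_compression_singleton_of_notMem hA hAℱ,
        mem_of_mem_compression_singleton_of_notMem hB hBℱ⟩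

end Shift

section Stability

variable {n k : ℕ} {ℱ : Finset (Finset (Fin n))} {i j a : Fin n}

theorem sum_sum_val_compression_lt (hji : j < i) (hℱ : ¬UV.IsCompressed {j} {i} ℱ) :
    ∑ A ∈ 𝓒 {j} {i} ℱ, ∑ x ∈ A, x.val < ∑ A ∈ ℱ, ∑ x ∈ A, x.val := by
  refine sum_compression_lt hℱ fun A hA hA' ↦ ?_
  obtain ⟨hj, hi⟩ : Disjoint {j} A ∧ {i} ⊆ A := by
    contrapose! hA'
    rwa [UV.compress, if_neg fun h ↦ hA' h.1 h.2]
  rw [disjoint_singleton_left] at hj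
  rw [singleton_subset_iff] at hi
  rw [compress_singleton_of_mem_of_notMem hi hj hji.ne',
    sum_insert fun h ↦ hj (mem_of_mem_erase h), ← add_sum_erase A _ hi]
  exact Nat.add_lt_add_right hji _

theorem IsShifted.card_le_stabilityBound (hk : 2 ≤ k) (hn : 2 * k ≤ n) (hshift : IsShifted ℱ)
    (hℱ : (ℱ : Set (Finset (Fin n))).Sized k) (hint : (ℱ : Set (Finset (Fin n))).Intersecting)
    (hγ : ∀ i, (n - 3).choose (k - 2) ≤ #(ℱ.nonMemberSubfamily i)) :
    (#ℱ : ℝ) ≤ stabilityBound n k :=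
  have : NeZero n := ⟨by lia⟩
  card_le_stabilityBound_of_mul_le_mul hk hn hℱ hint (hγ 0)
    (hshift.mul_card_le_mul_card_forbiddenLink_zero hn hℱ hint)

/-- Only `#(ℱ.nonMemberSubfamily j)` can decrease, and it remains at least half of
`(n - 3).choose (k - 2)`. -/
theorem card_le_stabilityBound_of_compression (hk : 3 ≤ k) (hn : 2 * k ≤ n)
    (hℱ : (ℱ : Set (Finset (Fin n))).Sized k) (hint : (ℱ : Set (Finset (Fin n))).Intersecting)
    (hij : i ≠ j) (hγ : ∀ a, 3 * (n - 3).choose (k - 2) < 2 * #(ℱ.nonMemberSubfamily a))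
    (ha : 2 * #((𝓒 {j} {i} ℱ).nonMemberSubfamily a) ≤ 3 * (n - 3).choose (k - 2)) :
    (#ℱ : ℝ) ≤ stabilityBound n k := by
  obtain rfl : a = j := by
    by_contra haj
    have := card_nonMemberSubfamily_le_card_nonMemberSubfamily_compression (ℱ := ℱ) (i := i) haj
    have := hγ a
    lia
  have half := choose_le_two_mul_card_nonMemberSubfamily_nonMemberSubfamily (by lia) hn hℱ hint hij
    (hγ i).le (hγ a).le
  have le := card_nonMemberSubfamily_nonMemberSubfamily_le_card_nonMemberSubfamily_compression
    (ℱ := ℱ) (i := i) (j := a)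
  rw [← UV.card_compression {a} {i} ℱ]
  exact card_le_stabilityBound_of_le_of_le hk hn (hℱ.uvCompression (by simp))
    (intersecting_compression_singleton hint _ _) (by lia) ha

theorem card_le_stabilityBound (hk : 3 ≤ k) (hn : 2 * k ≤ n)
    (hℱ : (ℱ : Set (Finset (Fin n))).Sized k) (hint : (ℱ : Set (Finset (Fin n))).Intersecting)
    (hγ : ∀ i, 3 * (n - 3).choose (k - 2) < 2 * #(ℱ.nonMemberSubfamily i)) :
    (#ℱ : ℝ) ≤ stabilityBound n k := by
  induction hm : ∑ A ∈ ℱ, ∑ x ∈ A, x.val using Nat.strong_induction_on generalizing ℱ with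
  | _ m ih =>
  by_cases hshift : IsShifted ℱ
  · exact hshift.card_le_stabilityBound (by lia) hn hℱ hint fun i ↦ by have := hγ i; lia
  simp only [IsShifted, not_forall] at hshift
  obtain ⟨i, j, hji, hcompressed⟩ := hshift
  by_cases hγ' : ∀ a, 3 * (n - 3).choose (k - 2) < 2 * #((𝓒 {j} {i} ℱ).nonMemberSubfamily a)
  · rw [← UV.card_compression {j} {i} ℱ]
    exact ih _ (hm ▸ sum_sum_val_compression_lt hji hcompressed) (hℱ.uvCompression (by simp))
      (intersecting_compression_singleton hint _ _) hγ' rfl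
  · push Not at hγ'
    obtain ⟨a, ha⟩ := hγ'
    exact card_le_stabilityBound_of_compression hk hn hℱ hint hji.ne' hγ ha

end Stability

/-! ### Estimates for binomial coefficients -/

section Choose

theorem choose_add_mul_pow_le (m k t : ℕ) :
    (m + t + k).choose t * (m + 1) ^ t ≤ (m + t).choose t * (m + 1 + k) ^ t := by
  induction t with
  | zero => simp
  | succ t ih =>
    refine Nat.le_of_mul_le_mul_right ?_ t.succ_pos
    calc (m + (t + 1) + k).choose (t + 1) * (m + 1) ^ (t + 1) * (t + 1)
      _ = (m + t + k + 1).choose (t + 1) * (t + 1) * (m + 1) ^ (t + 1) := by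
        rw [show m + (t + 1) + k = m + t + k + 1 by ring]; ring
      _ = (m + t + k).choose t * (m + 1) ^ t * ((m + t + k + 1) * (m + 1)) := by
        rw [← Nat.add_one_mul_choose_eq]; ring
      _ ≤ (m + t).choose t * (m + 1 + k) ^ t * ((m + t + 1) * (m + 1 + k)) :=
        Nat.mul_le_mul ih (by nlinarith)
      _ = (m + t + 1).choose (t + 1) * (t + 1) * (m + 1 + k) ^ (t + 1) := by
        rw [← Nat.add_one_mul_choose_eq]; ring
      _ = (m + (t + 1)).choose (t + 1) * (m + 1 + k) ^ (t + 1) * (t + 1) := by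
        rw [← add_assoc]; ring

theorem choose_mul_le_choose_succ_mul {a s N : ℕ} (h : a + 1 ≤ N) :
    a.choose s * N ≤ (a + 1).choose s * (N - s) := by
  obtain has | hsa := lt_or_ge a s
  · simp [Nat.choose_eq_zero_of_lt has]
  refine Nat.le_of_mul_le_mul_right ?_ (Nat.sub_pos_of_lt (Nat.lt_succ_of_le hsa))
  have le : N * (a + 1 - s) ≤ (a + 1) * (N - s) := by
    rw [Nat.mul_sub, Nat.mul_sub, mul_comm N]
    gcongr
  calc a.choose s * N * (a + 1 - s) = a.choose s * (N * (a + 1 - s)) := mul_assoc ..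
    _ ≤ a.choose s * ((a + 1) * (N - s)) := by gcongr
    _ = (a + 1).choose s * (N - s) * (a + 1 - s) := by
      rw [← mul_assoc, Nat.choose_mul_succ_eq]; ring

theorem choose_mul_pow_le_choose_add_mul_pow {a j N : ℕ} (s : ℕ) (h : a + j ≤ N) :
    a.choose s * N ^ j ≤ (a + j).choose s * (N - s) ^ j := by
  induction j with
  | zero => simp
  | succ j ih =>
    calc a.choose s * N ^ (j + 1) = a.choose s * N ^ j * N := by ring
      _ ≤ (a + j).choose s * (N - s) ^ j * N := by
        gcongr ?_ * N
        exact ih (by lia)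
      _ = (a + j).choose s * N * (N - s) ^ j := by ring
      _ ≤ (a + j + 1).choose s * (N - s) * (N - s) ^ j := by
        gcongr ?_ * _
        exact choose_mul_le_choose_succ_mul (by lia)
      _ = (a + (j + 1)).choose s * (N - s) ^ (j + 1) := by rw [← add_assoc]; ring

theorem succ_pow_succ_le_mul_pow {M N t : ℕ} (h : (M + 1) ^ 2 + N * t ≤ N * (M + 1)) :
    (M + 1) ^ (t + 1) ≤ N * M ^ t := by
  have bernoulli : ((M + 1 : ℕ) : ℝ) ^ t * (M + 1 - t) ≤ (M : ℝ) ^ t * (M + 1) := by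
    have hM : (0 : ℝ) < M + 1 := by positivity
    have := one_add_mul_le_pow (a := -(1 / ((M : ℝ) + 1)))
      (by have : 1 / ((M : ℝ) + 1) ≤ 1 := (div_le_one hM).2 (by simp)
          linarith) t
    rw [show 1 + (t : ℝ) * -(1 / ((M : ℝ) + 1)) = (M + 1 - t) / (M + 1) by field_simp; ring,
      show 1 + -(1 / ((M : ℝ) + 1)) = M / (M + 1) by field_simp; ring, div_pow,
      div_le_div_iff₀ hM (by positivity)] at this
    push_cast
    linarith
  have h' : ((M : ℝ) + 1) ^ 2 ≤ N * (M + 1 - t) := by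
    have : ((M : ℝ) + 1) ^ 2 + N * t ≤ N * (M + 1) := mod_cast h
    linarith
  rify
  refine le_of_mul_le_mul_right ?_ (show (0 : ℝ) < M + 1 by positivity)
  calc ((M : ℝ) + 1) ^ (t + 1) * (M + 1) = (M + 1) ^ t * (M + 1) ^ 2 := by ring
    _ ≤ (M + 1) ^ t * (N * (M + 1 - t)) := by gcongr
    _ = N * (((M + 1 : ℕ) : ℝ) ^ t * (M + 1 - t)) := by push_cast; ring
    _ ≤ N * (M ^ t * (M + 1)) := by gcongr
    _ = N * M ^ t * (M + 1) := by ring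

theorem choose_mul_choose_mul_pow_le_choose_mul {s t : ℕ} (m k : ℕ) (hts : t ≤ s) :
    (m + t + k).choose t * m.choose (s - t) * (m + 1) ^ t
      ≤ (m + t).choose s * s.choose t * (m + 1 + k) ^ t := by
  rw [Nat.choose_mul hts, Nat.add_sub_cancel, mul_right_comm, mul_right_comm _ (m.choose _)]
  exact Nat.mul_le_mul_right _ (choose_add_mul_pow_le m k t)

theorem choose_mul_choose_mul_pow_le {n k t : ℕ} (hk : 4 * t + 8 ≤ k) (hn : 2 * k + 14 * t ≤ n) :
    (n - 1).choose t * (n - t - k - 1).choose (k - t - 1) * (n - t) ^ (k - 3 * t - 3)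
      ≤ (k - 1).choose t * (n - 2 * t - 3).choose (k - 1)
        * (n - t - k + 1) ^ (k - 3 * t - 3) := by
  obtain ⟨m, rfl⟩ : ∃ m, n = m + t + k + 1 := ⟨n - t - k - 1, by lia⟩
  obtain ⟨e, he⟩ : ∃ e, e = k - 3 * t - 3 := ⟨_, rfl⟩
  have le₁ := choose_mul_choose_mul_pow_le_choose_mul m k (show t ≤ k - 1 by lia)
  have le₂ := choose_mul_pow_le_choose_add_mul_pow (a := m + t) (j := t + 1 + e) (k - 1)
    (show _ ≤ m + 1 + k by lia)
  have le₃ : (m + 2) ^ (t + 1) ≤ (m + 1 + k) * (m + 1) ^ t :=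
    succ_pow_succ_le_mul_pow (by nlinarith)
  rw [show m + 1 + k - (k - 1) = m + 2 by lia,
    show m + t + (t + 1 + e) = m + t + k + 1 - 2 * t - 3 by lia] at le₂
  rw [Nat.add_sub_cancel, show m + t + k + 1 - t = m + 1 + k by lia,
    show m + 1 + k - k - 1 = m by lia, Nat.sub_right_comm k, ← he, Nat.add_sub_cancel]
  set v := (m + t + k + 1 - 2 * t - 3).choose (k - 1)
  refine Nat.le_of_mul_le_mul_right ?_
    (show 0 < (m + 1) ^ t * (m + 1 + k) ^ (t + 1) by positivity)
  calc (m + t + k).choose t * m.choose (k - 1 - t) * (m + 1 + k) ^ e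
        * ((m + 1) ^ t * (m + 1 + k) ^ (t + 1))
    _ = (m + t + k).choose t * m.choose (k - 1 - t) * (m + 1) ^ t
        * (m + 1 + k) ^ (t + 1 + e) := by ring
    _ ≤ (m + t).choose (k - 1) * (k - 1).choose t * (m + 1 + k) ^ t
        * (m + 1 + k) ^ (t + 1 + e) := by gcongr
    _ = (m + t).choose (k - 1) * (m + 1 + k) ^ (t + 1 + e)
        * ((k - 1).choose t * (m + 1 + k) ^ t) := by ring
    _ ≤ v * (m + 2) ^ (t + 1 + e) * ((k - 1).choose t * (m + 1 + k) ^ t) := by gcongr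
    _ = (k - 1).choose t * v * (m + 2) ^ e * (m + 1 + k) ^ t * (m + 2) ^ (t + 1) := by ring
    _ ≤ (k - 1).choose t * v * (m + 2) ^ e * (m + 1 + k) ^ t
        * ((m + 1 + k) * (m + 1) ^ t) := by gcongr
    _ = (k - 1).choose t * v * (m + 1 + 1) ^ e
        * ((m + 1) ^ t * (m + 1 + k) ^ (t + 1)) := by ring

end Choose

/-! ### Numerical estimates -/

/-- The quotient of `(n - 3).choose (k - 2)` by `(n - 3).choose (k - 1)`, with real arguments. -/
noncomputable def pascalRatio (n k : ℝ) : ℝ := (k - 1) / (n - k - 1)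

/-- The quotient of `(n - 1).choose (k - 1)` by `(n - 3).choose (k - 1)`, with real arguments. -/
noncomputable def starRatio (n k : ℝ) : ℝ := (n - 1) * (n - 2) / ((n - k) * (n - k - 1))

/-- The number `d` with `n.choose t * (k - 1).choose t = (1 - d) * ((n - 1).choose t * k.choose t)`,
with real arguments: the relative loss from averaging `t`-degrees over all of `Fin n` instead of
over the complement of a point. -/
noncomputable def averagingLoss (n k t : ℝ) : ℝ := t * (n - k) / ((n - t) * k)

section Real

variable {n k t z : ℝ}

theorem pascalRatio_pos (hk : 1 < k) (hn : 2 * k ≤ n) : 0 < pascalRatio n k :=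
  div_pos (by linarith) (by linarith)

theorem pascalRatio_le_one (hk : 1 < k) (hn : 2 * k ≤ n) : pascalRatio n k ≤ 1 :=
  (div_le_one (by linarith)).2 (by linarith)

theorem one_add_pascalRatio (h : n - k - 1 ≠ 0) : 1 + pascalRatio n k = (n - 2) / (n - k - 1) := by
  rw [pascalRatio, one_add_div h]
  ring

theorem one_sub_pascalRatio (h : n - k - 1 ≠ 0) :
    1 - pascalRatio n k = (n - 2 * k) / (n - k - 1) := by
  rw [pascalRatio, one_sub_div h]
  ring

theorem one_le_one_add_pow_seven_mul (hz : 0 ≤ z) (hz' : z ≤ 1 / 3) :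
    1 ≤ (1 + z) ^ 7 * (1 - 2 * z + z ^ 2 / 2) := by
  have pow_le (m : ℕ) : z ^ (m + 1) ≤ z ^ m * (1 / 3) := by rw [pow_succ]; gcongr
  have h₂ := pow_le 1
  have h₃ := pow_le 2
  have h₄ := pow_le 3
  have h₅ : 0 ≤ z ^ 5 := by positivity
  have h₆ : 0 ≤ z ^ 2 := by positivity
  calc 1 ≤ (1 + 7 * z + 21 * z ^ 2 + 35 * z ^ 3) * (1 - 2 * z + z ^ 2 / 2) := by nlinarith
    _ ≤ (1 + z) ^ 7 * (1 - 2 * z + z ^ 2 / 2) := by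
      gcongr
      · linarith
      · have : 0 ≤ 35 * z ^ 4 + 21 * z ^ 5 + 7 * z ^ 6 + z ^ 7 := by positivity
        linarith

theorem three_le_one_add_pow_seven_mul (hz : 0 ≤ z) (hz' : z ≤ 1 / 3) :
    3 ≤ (1 + z) ^ 7 * (3 - 8 * z + z ^ 2) := by
  have pow_le (m : ℕ) : z ^ (m + 1) ≤ z ^ m * (1 / 3) := by rw [pow_succ]; gcongr
  have h₃ := pow_le 2
  have h₄ := pow_le 3
  have h₅ := pow_le 4
  have h₆ := pow_le 5
  have h₇ := pow_le 6
  have h₈ := pow_le 7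
  have h₂ := pow_le 1
  have h₉ : 0 ≤ z ^ 9 := by positivity
  linarith

theorem linear_le_four_thirds_pow {e : ℕ} (he : 7 ≤ e) :
    (3 * (e + 3) + 102 : ℝ) / 28 ≤ (4 / 3) ^ e := by
  induction e, he using Nat.le_induction with
  | base => norm_num
  | succ e he ih =>
    have : (7 : ℝ) ≤ e := mod_cast he
    rw [pow_succ]
    push_cast
    linarith

theorem mul_div_le_one_sub_pascalRatio (ht : 0 < t) (hk : 1 < k) (hn : 2 * k + 14 * t ≤ n) :
    14 * t / (k + 14 * t) ≤ 1 - pascalRatio n k := by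
  rw [one_sub_pascalRatio (by linarith), div_le_div_iff₀ (by linarith) (by linarith)]
  nlinarith

theorem div_mul_pascalRatio_le (ht : 0 < t) (hk : 4 * t + 8 ≤ k) (hn : 2 * k + 14 * t ≤ n) :
    k / (k - t) * pascalRatio n k ≤ pascalRatio n k + 2 / 21 * (1 - pascalRatio n k) := by
  have hkt : 0 < k - t := by linarith
  have hnk : 0 < n - k - 1 := by linarith
  suffices t / (k - t) * pascalRatio n k ≤ 2 / 21 * (1 - pascalRatio n k) by
    rw [show k / (k - t) = 1 + t / (k - t) by field_simp; ring]
    linarith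
  rw [one_sub_pascalRatio hnk.ne', pascalRatio, div_mul_div_comm, ← mul_div_assoc,
    div_le_div_iff₀ (mul_pos hkt hnk) hnk, ← mul_assoc]
  gcongr ?_ * _
  calc t * (k - 1) ≤ t * (4 / 3 * (k - t)) := by gcongr; linarith
    _ = 4 / 3 * t * (k - t) := by ring
    _ ≤ 2 / 21 * (n - 2 * k) * (k - t) := by gcongr ?_ * _; linarith

theorem averagingLoss_nonneg (ht : 0 ≤ t) (hk : t ≤ k) (hn : k ≤ n) : 0 ≤ averagingLoss n k t :=
  div_nonneg (mul_nonneg ht (by linarith)) (mul_nonneg (by linarith) (by linarith))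

theorem averagingLoss_le_one_quarter (ht : 0 ≤ t) (hk : 4 * t < k) (hn : k ≤ n) :
    averagingLoss n k t ≤ 1 / 4 := by
  have hnt : 0 < n - t := by linarith
  have hk₀ : 0 < k := by linarith
  rw [averagingLoss, div_le_div_iff₀ (by positivity) (by norm_num)]
  nlinarith

theorem starRatio_le_one_add_pascalRatio_sq (hk : 1 ≤ k) (hn : k + 2 ≤ n) :
    starRatio n k ≤ (1 + pascalRatio n k) ^ 2 := by
  have hnk : 0 < n - k := by linarith
  have hnk' : 0 < n - k - 1 := by linarith
  have h : (n - 1) / (n - k) ≤ (n - 2) / (n - k - 1) := by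
    rw [div_le_div_iff₀ hnk hnk']
    linarith
  rw [one_add_pascalRatio hnk'.ne', starRatio, ← div_mul_div_comm, sq]
  gcongr
  exact div_nonneg (by linarith) hnk'.le

theorem mul_div_mul_le_one_sub_pascalRatio_div_pascalRatio (ht : 2 ≤ t)
    (hk : 4 * t + 8 ≤ k) (hn : 2 * k + 14 * t ≤ n) :
    t * (n - 2) / (k * (n - t))
      ≤ 11 / 147 * ((1 - pascalRatio n k) / pascalRatio n k) := by
  have hk₁ : 0 < k - 1 := by linarith
  have hnt : 0 < n - t := by linarith
  have hnk : 0 < n - k - 1 := by linarith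
  rw [one_sub_pascalRatio hnk.ne', pascalRatio, div_div_div_cancel_right₀ hnk.ne',
    ← mul_div_assoc, div_le_div_iff₀ (mul_pos (by linarith) hnt) hk₁]
  calc t * (n - 2) * (k - 1) ≤ t * (22 / 21 * (n - t)) * k := by
        gcongr <;> linarith
    _ = 22 / 21 * t * (k * (n - t)) := by ring
    _ ≤ 11 / 147 * (n - 2 * k) * (k * (n - t)) := by
      gcongr ?_ * _
      · exact mul_nonneg (by linarith) hnt.le
      · linarith

theorem averagingLoss_mul_starRatio_le (ht : 2 ≤ t) (hk : 4 * t + 8 ≤ k) (hn : 2 * k + 14 * t ≤ n)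
    (hz : 1 / 3 ≤ pascalRatio n k) :
    averagingLoss n k t * starRatio n k
      ≤ (1 - pascalRatio n k) * (2 / 3 - pascalRatio n k / 2) := by
  have hz₁ := pascalRatio_le_one (n := n) (k := k) (by linarith) (by linarith)
  have hk₀ : 0 < k := by linarith
  have hnt : 0 < n - t := by linarith
  have hnk : 0 < n - k := by linarith
  have hnk' : 0 < n - k - 1 := by linarith
  have h : (n - 1) / (n - k - 1) ≤ 1 + 16 / 15 * pascalRatio n k := by
    rw [pascalRatio, ← mul_div_assoc, one_add_div hnk'.ne', div_le_div_iff_of_pos_right hnk']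
    linarith
  have h' := mul_div_mul_le_one_sub_pascalRatio_div_pascalRatio ht hk hn
  set z := pascalRatio n k
  have hz₀ : 0 < z := by linarith
  calc averagingLoss n k t * starRatio n k
      = t * (n - 2) / (k * (n - t)) * ((n - 1) / (n - k - 1)) := by
        rw [averagingLoss, starRatio]
        field_simp
    _ ≤ 11 / 147 * ((1 - z) / z) * (1 + 16 / 15 * z) := by
      gcongr
      exact div_nonneg (by linarith) hnk'.le
    _ = (1 - z) * (11 / 147 * (1 + 16 / 15 * z) / z) := by ring
    _ ≤ (1 - z) * (2 / 3 - z / 2) := by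
      refine mul_le_mul_of_nonneg_left ?_ (sub_nonneg.2 hz₁)
      rw [div_le_iff₀ hz₀]
      nlinarith [mul_nonneg (sub_nonneg.2 hz) (sub_nonneg.2 hz₁)]

end Real

/-- A power of the factor `1 / (1 + pascalRatio n k)` that `(m - 1).choose (k - 1)` loses
relative to `m.choose (k - 1)` for `m` close to `n`. -/
noncomputable def decay (n k t : ℕ) : ℝ := (1 / (1 + pascalRatio n k)) ^ (k - 3 * t - 3)

section Decay

variable {n k t : ℕ}

theorem decay_nonneg (hk : 2 ≤ k) (hn : 2 * k ≤ n) : 0 ≤ decay n k t := by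
  have := pascalRatio_pos (n := n) (k := k) (mod_cast hk) (mod_cast hn)
  rw [decay]
  positivity

theorem decay_mul_one_add_pow_seven_le_one (ht : 2 ≤ t) (hk : 4 * t + 8 ≤ k) (hn : 2 * k ≤ n) :
    decay n k t * (1 + pascalRatio n k) ^ 7 ≤ 1 := by
  have hz := pascalRatio_pos (n := n) (k := k) (mod_cast (by lia)) (mod_cast hn)
  set z := pascalRatio n k
  calc decay n k t * (1 + z) ^ 7 ≤ (1 / (1 + z)) ^ 7 * (1 + z) ^ 7 := by
        refine mul_le_mul_of_nonneg_right ?_ (by positivity)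
        refine pow_le_pow_of_le_one (by positivity) ?_ (by lia)
        exact (div_le_one (by linarith)).2 (by linarith)
    _ = 1 := by rw [← mul_pow, one_div_mul_cancel (by positivity), one_pow]

theorem three_mul_decay_le (ht : 2 ≤ t) (hk : 4 * t + 8 ≤ k) (hn : 2 * k + 14 * t ≤ n)
    (hz : 1 / 3 ≤ pascalRatio n k) : 3 * decay n k t ≤ 1 - pascalRatio n k := by
  obtain ⟨e, rfl⟩ : ∃ e, k = 3 * t + 3 + e := ⟨k - 3 * t - 3, by lia⟩
  have ht' : (2 : ℝ) ≤ t := mod_cast ht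
  have pow_le : 3 * ((3 * t + 3 + e : ℕ) + 14 * t : ℝ) ≤ (4 / 3) ^ e * (14 * t) := by
    refine le_trans ?_ (mul_le_mul_of_nonneg_right (linear_le_four_thirds_pow (by lia))
      (by positivity))
    have : (t : ℝ) + 5 ≤ e := mod_cast (by lia)
    push_cast
    nlinarith
  calc 3 * decay n (3 * t + 3 + e) t ≤ 3 * (3 / 4) ^ e := by
        rw [decay, show 3 * t + 3 + e - 3 * t - 3 = e by lia]
        refine mul_le_mul_of_nonneg_left (pow_le_pow_left₀ (by positivity) ?_ _) (by norm_num)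
        rw [div_le_div_iff₀ (by linarith) (by norm_num)]
        linarith
    _ ≤ 14 * t / ((3 * t + 3 + e : ℕ) + 14 * t) := by
      rw [le_div_iff₀ (by positivity)]
      calc 3 * (3 / 4 : ℝ) ^ e * ((3 * t + 3 + e : ℕ) + 14 * t)
          = (3 / 4) ^ e * (3 * ((3 * t + 3 + e : ℕ) + 14 * t)) := by ring
        _ ≤ (3 / 4) ^ e * ((4 / 3) ^ e * (14 * t)) := by gcongr
        _ = 14 * t := by rw [← mul_assoc, ← mul_pow]; norm_num
    _ ≤ _ := mul_div_le_one_sub_pascalRatio (by linarith) (mod_cast (by lia)) (mod_cast hn)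

theorem decay_le_one_sub_three_halves_mul (ht : 2 ≤ t) (hk : 4 * t + 8 ≤ k)
    (hn : 2 * k + 14 * t ≤ n) :
    decay n k t ≤ 1 - 3 / 2 * (k / (k - t)) * pascalRatio n k + pascalRatio n k ^ 2 / 2 := by
  have ht' : (2 : ℝ) ≤ t := mod_cast ht
  have hk' : 4 * (t : ℝ) + 8 ≤ k := mod_cast hk
  have hn' : 2 * (k : ℝ) + 14 * t ≤ n := mod_cast hn
  have hz₀ := pascalRatio_pos (n := n) (k := k) (by linarith) (by linarith)
  have hz₁ := pascalRatio_le_one (n := n) (k := k) (by linarith) (by linarith)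
  obtain hz | hz := le_total (pascalRatio n k) (1 / 3)
  · have hκ : (k : ℝ) / (k - t) ≤ 4 / 3 := by
      rw [div_le_div_iff₀ (by linarith) (by norm_num)]
      linarith
    calc decay n k t ≤ 1 - 2 * pascalRatio n k + pascalRatio n k ^ 2 / 2 := by
          refine le_of_mul_le_mul_right ?_ (show 0 < (1 + pascalRatio n k) ^ 7 by positivity)
          rw [mul_comm (1 - _ + _)]
          exact (decay_mul_one_add_pow_seven_le_one ht hk (by lia)).trans
            (one_le_one_add_pow_seven_mul hz₀.le hz)
      _ ≤ _ := by nlinarith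
  · have := three_mul_decay_le ht hk hn hz
    have := div_mul_pascalRatio_le (by linarith) hk' hn'
    nlinarith

theorem one_sub_averagingLoss_mul_decay_add_le (ht : 2 ≤ t) (hk : 4 * t + 8 ≤ k)
    (hn : 2 * k + 14 * t ≤ n) :
    (1 - averagingLoss n k t) * decay n k t + averagingLoss n k t * starRatio n k
      ≤ (1 - pascalRatio n k) * (1 - pascalRatio n k / 2) := by
  have ht' : (2 : ℝ) ≤ t := mod_cast ht
  have hk' : 4 * (t : ℝ) + 8 ≤ k := mod_cast hk
  have hn' : 2 * (k : ℝ) + 14 * t ≤ n := mod_cast hn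
  have hz₀ := pascalRatio_pos (n := n) (k := k) (by linarith) (by linarith)
  have hx := decay_nonneg (n := n) (k := k) (t := t) (by lia) (by lia)
  have hd : 0 ≤ averagingLoss n k t :=
    averagingLoss_nonneg (by linarith) (by linarith) (by linarith)
  obtain hz | hz := le_total (pascalRatio n k) (1 / 3)
  · have hx' := decay_mul_one_add_pow_seven_le_one ht hk (show 2 * k ≤ n by lia)
    have hd' := averagingLoss_le_one_quarter (t := (t : ℝ)) (k := k) (n := n)
      (by linarith) (by linarith) (by linarith)
    have hA := starRatio_le_one_add_pascalRatio_sq (k := (k : ℝ)) (n := n)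
      (by linarith) (by linarith)
    have hpoly := three_le_one_add_pow_seven_mul hz₀.le hz
    set z := pascalRatio n k
    set x := decay n k t
    set d := averagingLoss n k t
    have : (1 : ℝ) ≤ (1 + z) ^ 7 := one_le_pow₀ (by linarith)
    have hxz : x ≤ (1 + z) ^ 2 :=
      (show x ≤ 1 by nlinarith).trans (one_le_pow₀ (by linarith))
    calc (1 - d) * x + d * _ ≤ (1 - d) * x + d * (1 + z) ^ 2 := by gcongr
      _ ≤ 3 / 4 * x + 1 / 4 * (1 + z) ^ 2 := by nlinarith
      _ ≤ (1 - z) * (1 - z / 2) := by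
        refine le_of_mul_le_mul_right ?_ (show 0 < (1 + z) ^ 7 by positivity)
        linarith
  · have hdA := averagingLoss_mul_starRatio_le ht' hk' hn' hz
    have := three_mul_decay_le ht hk hn hz
    have := mul_nonneg hd hx
    linarith

end Decay

section Choose

variable {n k t : ℕ}

theorem choose_sub_two_eq_pascalRatio_mul (hk : 2 ≤ k) (hn : k + 2 ≤ n) :
    ((n - 3).choose (k - 2) : ℝ) = pascalRatio n k * (n - 3).choose (k - 1) := by
  have h := Nat.choose_succ_right_eq (n - 3) (k - 2)
  rw [show k - 2 + 1 = k - 1 by lia, show n - 3 - (k - 2) = n - (k + 1) by lia] at h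
  have hn' : (k : ℝ) + 2 ≤ n := mod_cast hn
  rify [show 1 ≤ k by lia, show k + 1 ≤ n by lia] at h
  rw [pascalRatio, div_mul_eq_mul_div, eq_div_iff (by linarith)]
  linarith

theorem choose_mul_choose_le_mul_decay (ht : 2 ≤ t) (hk : 4 * t + 8 ≤ k)
    (hn : 2 * k + 14 * t ≤ n) :
    ((n - 1).choose t * (n - t - k - 1).choose (k - t - 1) : ℝ)
      ≤ (k - 1).choose t * (n - 2 * t - 3).choose (k - 1) * decay n k t := by
  have ht' : (2 : ℝ) ≤ t := mod_cast ht
  have hk' : 4 * (t : ℝ) + 8 ≤ k := mod_cast hk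
  have hn' : 2 * (k : ℝ) + 14 * t ≤ n := mod_cast hn
  have hnt : (0 : ℝ) < n - t := by linarith
  have h : (n - t - k + 1 : ℝ) / (n - t) ≤ 1 / (1 + pascalRatio n k) := by
    rw [one_add_pascalRatio (by linarith), one_div_div,
      div_le_div_iff₀ hnt (by linarith)]
    nlinarith
  have h' := choose_mul_choose_mul_pow_le hk hn
  rify [show t ≤ n by lia, show k ≤ n - t by lia] at h'
  rw [← le_div_iff₀ (by positivity), mul_div_assoc, ← div_pow] at h'
  refine h'.trans ?_
  rw [decay]
  gcongr
  exact div_nonneg (by linarith) hnt.le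

end Choose

/-! ### Averaging degrees -/

section Choose

variable {n k t : ℕ}

theorem choose_mul_choose_sub_sub (htk : t + 1 ≤ k) :
    (n - 1).choose t * (n - t - 1).choose (k - t - 1)
      = (n - 1).choose (k - 1) * (k - 1).choose t := by
  rw [Nat.choose_mul (by lia), Nat.sub_right_comm, Nat.sub_right_comm k]

theorem choose_eq_div_mul_choose_sub_one (ht : t < n) :
    (n.choose t : ℝ) = n / (n - t) * (n - 1).choose t := by
  have h := Nat.choose_mul_succ_eq (n - 1) t
  rw [show n - 1 + 1 = n by lia] at h
  have ht' : (t : ℝ) < n := mod_cast ht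
  rify [ht.le] at h
  rw [div_mul_eq_mul_div, eq_div_iff (by linarith)]
  linarith

theorem choose_mul_choose_sub_one_eq (ht : t < k) (hkn : k ≤ n) :
    (n.choose t * (k - 1).choose t : ℝ)
      = (1 - averagingLoss n k t) * (k.choose t * (n - 1).choose t) := by
  have ht' : (t : ℝ) < k := mod_cast ht
  have hn' : (k : ℝ) ≤ n := mod_cast hkn
  have hk₀ : (k : ℝ) ≠ 0 := mod_cast (by lia)
  have hnt : (n : ℝ) - t ≠ 0 := by linarith
  have hkt : (k : ℝ) - t ≠ 0 := by linarith
  rw [choose_eq_div_mul_choose_sub_one ht, choose_eq_div_mul_choose_sub_one (ht.trans_le hkn),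
    averagingLoss]
  field_simp
  ring

theorem choose_sub_one_eq_starRatio_mul (hk : 1 ≤ k) (hn : k + 2 ≤ n) :
    ((n - 1).choose (k - 1) : ℝ) = starRatio n k * (n - 3).choose (k - 1) := by
  have h := choose_eq_div_mul_choose_sub_one (n := n - 2) (t := k - 1) (by lia)
  have h' := choose_eq_div_mul_choose_sub_one (n := n - 1) (t := k - 1) (by lia)
  rify [show 2 ≤ n by lia, show 1 ≤ n by lia, hk] at h h'
  rw [h', show n - 1 - 1 = n - 2 by lia, h, show n - 2 - 1 = n - 3 by lia, starRatio,
    ← mul_assoc, div_mul_div_comm]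
  ring_nf

theorem stabilityBound_eq (hk : 2 ≤ k) (hn : k + 2 ≤ n) :
    stabilityBound n k = (n - 1).choose (k - 1)
      - (n - 3).choose (k - 1) * ((1 - pascalRatio n k) * (1 - pascalRatio n k / 2)) := by
  have : ((n - 3).choose (k - 1) : ℝ) ≠ 0 := mod_cast (Nat.choose_pos (by lia)).ne'
  rw [stabilityBound, choose_sub_two_eq_pascalRatio_mul hk hn]
  field_simp

end Choose

section Local

variable {n k t : ℕ} {ℱ : Finset (Finset (Fin n))} {i : Fin n}

theorem sum_choose_card_inter_compl_singleton (hℱ : (ℱ : Set (Finset (Fin n))).Sized k) (t : ℕ)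
    (i : Fin n) : ∑ A ∈ ℱ, (#(A ∩ {i}ᶜ)).choose t
      = setDegree ℱ {i} * (k - 1).choose t + #(ℱ.nonMemberSubfamily i) * k.choose t := by
  simp only [setDegree, nonMemberSubfamily, singleton_subset_iff]
  rw [← sum_filter_add_sum_filter_not ℱ (i ∈ ·)]
  refine congrArg₂ (· + ·) (sum_const_nat fun A hA ↦ ?_) (sum_const_nat fun A hA ↦ ?_)
  · rw [mem_filter] at hA
    rw [← sdiff_eq_inter_compl, sdiff_singleton_eq_erase, card_erase_of_mem hA.2, hℱ hA.1]
  · rw [mem_filter] at hA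
    rw [← sdiff_eq_inter_compl, sdiff_singleton_eq_erase, erase_eq_of_notMem hA.2, hℱ hA.1]

theorem exists_setDegree_add_le_of_mul_add_mul_le (ht : t < k) (hkn : k ≤ n)
    (hℱ : (ℱ : Set (Finset (Fin n))).Sized k) (hint : (ℱ : Set (Finset (Fin n))).Intersecting)
    (h : #(ℱ.nonMemberSubfamily i) * k.choose t
        + (n - 1).choose t * (n - t - k - 1).choose (k - t - 1)
      ≤ #(forbiddenLink ℱ k i) * (k - 1).choose t) :
    ∃ T : Finset (Fin n), #T = t ∧
      setDegree ℱ T + (n - t - k - 1).choose (k - t - 1) ≤ (n - t - 1).choose (k - t - 1) := by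
  have hcompl : #({i}ᶜ : Finset (Fin n)) = n - 1 := by
    rw [card_compl, Fintype.card_fin, card_singleton]
  obtain ⟨T, -, hT, hmin⟩ := exists_choose_mul_setDegree_le (X := {i}ᶜ) ℱ
    (show t ≤ _ by lia)
  rw [hcompl, sum_choose_card_inter_compl_singleton hℱ] at hmin
  have link := setDegree_singleton_add_card_forbiddenLink_le hℱ hint i
  rw [Fintype.card_fin] at link
  refine ⟨T, hT, Nat.le_of_mul_le_mul_left ?_ (Nat.choose_pos (show t ≤ n - 1 by lia))⟩
  calc (n - 1).choose t * (setDegree ℱ T + (n - t - k - 1).choose (k - t - 1))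
    _ ≤ (setDegree ℱ {i} + #(forbiddenLink ℱ k i)) * (k - 1).choose t := by linarith
    _ ≤ (n - 1).choose (k - 1) * (k - 1).choose t := by gcongr
    _ = (n - 1).choose t * (n - t - 1).choose (k - t - 1) :=
      (choose_mul_choose_sub_sub (by lia)).symm

theorem exists_setDegree_add_le_of_mul_add_decay_le (ht : 2 ≤ t) (hk : 4 * t + 8 ≤ k)
    (hn : 2 * k + 14 * t ≤ n) (hℱ : (ℱ : Set (Finset (Fin n))).Sized k)
    (hint : (ℱ : Set (Finset (Fin n))).Intersecting)
    (h : (k / (k - t) * #(ℱ.nonMemberSubfamily i)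
        + (n - 2 * t - 3).choose (k - 1) * decay n k t : ℝ) ≤ #(forbiddenLink ℱ k i)) :
    ∃ T : Finset (Fin n), #T = t ∧
      setDegree ℱ T + (n - t - k - 1).choose (k - t - 1) ≤ (n - t - 1).choose (k - t - 1) := by
  refine exists_setDegree_add_le_of_mul_add_mul_le (i := i) (by lia) (by lia) hℱ hint ?_
  rify
  rw [choose_eq_div_mul_choose_sub_one (by lia)]
  calc _ ≤ #(ℱ.nonMemberSubfamily i) * (k / (k - t) * (k - 1).choose t)
        + ((k - 1).choose t * (n - 2 * t - 3).choose (k - 1) * decay n k t : ℝ) := by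
        gcongr _ + ?_
        exact choose_mul_choose_le_mul_decay ht hk hn
    _ = (k / (k - t) * #(ℱ.nonMemberSubfamily i)
        + (n - 2 * t - 3).choose (k - 1) * decay n k t) * (k - 1).choose t := by ring
    _ ≤ _ := by gcongr

theorem card_nonMemberSubfamily_le_pascalRatio_mul (hk : 3 ≤ k) (hn : 2 * k ≤ n)
    (hℱ : (ℱ : Set (Finset (Fin n))).Sized k)
    (hcard : #(ℱ.nonMemberSubfamily i) ≤ (n - 3).choose (k - 2)) :
    (#(ℱ.nonMemberSubfamily i) : ℝ) ≤ pascalRatio n k * #(forbiddenLink ℱ k i) := by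
  have hn' : 2 * (k : ℝ) ≤ n := mod_cast hn
  have hk' : 3 ≤ (k : ℝ) := mod_cast hk
  have h := mul_card_le_mul_card_forbiddenLink (by lia) (by lia) hℱ hcard
  rify [show k ≤ n by lia, show 1 ≤ n - k by lia, show 1 ≤ k by lia] at h
  rw [pascalRatio, div_mul_eq_mul_div, le_div_iff₀ (by linarith)]
  linarith

theorem exists_setDegree_add_le_of_card_nonMemberSubfamily_le_choose (ht : 2 ≤ t)
    (hk : 4 * t + 8 ≤ k) (hn : 2 * k + 14 * t ≤ n) (hℱ : (ℱ : Set (Finset (Fin n))).Sized k)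
    (hint : (ℱ : Set (Finset (Fin n))).Intersecting)
    (hlow : (n - 2 * t - 3).choose (k - 2 * t - 2) ≤ #(ℱ.nonMemberSubfamily i))
    (hupp : #(ℱ.nonMemberSubfamily i) ≤ (n - 3).choose (k - 2)) :
    ∃ T : Finset (Fin n), #T = t ∧
      setDegree ℱ T + (n - t - k - 1).choose (k - t - 1) ≤ (n - t - 1).choose (k - t - 1) := by
  refine exists_setDegree_add_le_of_mul_add_decay_le ht hk hn hℱ hint (i := i) ?_
  have ht' : (2 : ℝ) ≤ t := mod_cast ht
  have hk' : 4 * (t : ℝ) + 8 ≤ k := mod_cast hk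
  have hn' : 2 * (k : ℝ) + 14 * t ≤ n := mod_cast hn
  have choose_le : (n - 2 * t - 3).choose (k - 1) ≤ #(forbiddenLink ℱ k i) := by
    refine choose_le_card_excluded (r := n - k - 1) (x := n - 2 * t - 3)
      (nonMemberSubfamily_subset_powersetCard hℱ i) ?_ (by lia) (by lia) (by lia) ?_
    · rw [card_compl, Fintype.card_fin, card_singleton]
      lia
    · rwa [Nat.choose_symm_of_eq_add (b := k - 2 * t - 2) (by lia)]
  have card_le := card_nonMemberSubfamily_le_pascalRatio_mul (by lia) (by lia) hℱ hupp
  have hκ : 1 ≤ (k : ℝ) / (k - t) := by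
    rw [le_div_iff₀ (by linarith)]
    linarith
  have hz₀ := pascalRatio_pos (n := n) (k := k) (by linarith) (by linarith)
  have hz₁ := pascalRatio_le_one (n := n) (k := k) (by linarith) (by linarith)
  have hx₀ := decay_nonneg (n := n) (k := k) (t := t) (by lia) (by lia)
  have hx : decay n k t ≤ 1 - k / (k - t) * pascalRatio n k := by
    have := decay_le_one_sub_three_halves_mul ht hk hn
    nlinarith
  set e := #(forbiddenLink ℱ k i)
  calc k / (k - t) * #(ℱ.nonMemberSubfamily i) + (n - 2 * t - 3).choose (k - 1) * decay n k t
    _ ≤ k / (k - t) * (pascalRatio n k * e) + e * (1 - k / (k - t) * pascalRatio n k) := by gcongr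
    _ = e := by ring

theorem exists_setDegree_add_le_of_choose_le_card_nonMemberSubfamily (ht : 2 ≤ t)
    (hk : 4 * t + 8 ≤ k) (hn : 2 * k + 14 * t ≤ n) (hℱ : (ℱ : Set (Finset (Fin n))).Sized k)
    (hint : (ℱ : Set (Finset (Fin n))).Intersecting)
    (hlow : (n - 3).choose (k - 2) ≤ #(ℱ.nonMemberSubfamily i))
    (hupp : 2 * #(ℱ.nonMemberSubfamily i) ≤ 3 * (n - 3).choose (k - 2)) :
    ∃ T : Finset (Fin n), #T = t ∧
      setDegree ℱ T + (n - t - k - 1).choose (k - t - 1) ≤ (n - t - 1).choose (k - t - 1) := by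
  refine exists_setDegree_add_le_of_mul_add_decay_le ht hk hn hℱ hint (i := i) ?_
  have ht' : (2 : ℝ) ≤ t := mod_cast ht
  have hk' : 4 * (t : ℝ) + 8 ≤ k := mod_cast hk
  have hn' : 2 * (k : ℝ) + 14 * t ≤ n := mod_cast hn
  have hκ : 1 ≤ (k : ℝ) / (k - t) := by
    rw [le_div_iff₀ (by linarith)]
    linarith
  have hz₁ := pascalRatio_le_one (n := n) (k := k) (by linarith) (by linarith)
  have hx₀ := decay_nonneg (n := n) (k := k) (t := t) (by lia) (by lia)
  have hx := decay_le_one_sub_three_halves_mul ht hk hn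
  have hW : (0 : ℝ) < (n - 3).choose (k - 1) := mod_cast Nat.choose_pos (by lia)
  have hV : (n - 2 * t - 3).choose (k - 1) ≤ (n - 3).choose (k - 1) :=
    Nat.choose_le_choose _ (by lia)
  have hY := choose_sub_two_eq_pascalRatio_mul (n := n) (k := k) (by lia) (by lia)
  have hYW := choose_sub_three_le (n := n) (k := k) (by lia)
  obtain ⟨m, hm⟩ := Nat.exists_eq_add_of_le hlow
  have link := mul_self_add_mul_le_card_forbiddenLink_mul (by lia) (by lia) hℱ hm (by lia)
  rw [hm] at hupp ⊢
  rify at link hupp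
  push_cast
  rw [hY] at link hupp ⊢
  set W := ((n - 3).choose (k - 1) : ℝ)
  set z := pascalRatio n k
  set κ := (k : ℝ) / (k - t)
  calc κ * (z * W + m) + (n - 2 * t - 3).choose (k - 1) * decay n k t
    _ ≤ κ * (z * W + m) + W * (1 - 3 / 2 * κ * z + z ^ 2 / 2) := by
      gcongr
      exact Nat.cast_le.2 hV
    _ ≤ W + m * z := by nlinarith
    _ ≤ #(forbiddenLink ℱ k i) := by
      refine le_of_mul_le_mul_right ?_ hW
      linarith

end Local

section Global

variable {n k t : ℕ} {ℱ : Finset (Finset (Fin n))}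

theorem stabilityBound_le_one_sub_averagingLoss_mul (ht : 2 ≤ t) (hk : 4 * t + 8 ≤ k)
    (hn : 2 * k + 14 * t ≤ n) :
    stabilityBound n k ≤ (1 - averagingLoss n k t)
      * ((n - 1).choose (k - 1) - (n - 3).choose (k - 1) * decay n k t) := by
  rw [stabilityBound_eq (by lia) (by lia)]
  calc _ ≤ (n - 1).choose (k - 1) - (n - 3).choose (k - 1)
        * ((1 - averagingLoss n k t) * decay n k t + averagingLoss n k t * starRatio n k) := by
        gcongr
        exact one_sub_averagingLoss_mul_decay_add_le ht hk hn
    _ = _ := by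
        rw [choose_sub_one_eq_starRatio_mul (by lia) (by lia)]
        ring

theorem exists_setDegree_add_le_of_card_le_stabilityBound (ht : 2 ≤ t) (hk : 4 * t + 8 ≤ k)
    (hn : 2 * k + 14 * t ≤ n) (hℱ : (ℱ : Set (Finset (Fin n))).Sized k)
    (hcard : (#ℱ : ℝ) ≤ stabilityBound n k) :
    ∃ T : Finset (Fin n), #T = t ∧
      setDegree ℱ T + (n - t - k - 1).choose (k - t - 1) ≤ (n - t - 1).choose (k - t - 1) := by
  obtain ⟨T, -, hT, hmin⟩ := exists_choose_mul_setDegree_le (X := univ) ℱ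
    (show t ≤ _ by rw [card_fin]; lia)
  rw [card_fin, sum_const_nat fun A hA ↦ by rw [inter_univ, hℱ hA]] at hmin
  have hcompare := choose_mul_choose_le_mul_decay ht hk hn
  have hstar := choose_mul_choose_sub_sub (n := n) (k := k) (t := t) (by lia)
  have hloss := choose_mul_choose_sub_one_eq (n := n) (k := k) (t := t) (by lia) (by lia)
  have hcard' := hcard.trans (stabilityBound_le_one_sub_averagingLoss_mul ht hk hn)
  refine ⟨T, hT, ?_⟩
  rify at hmin hstar ⊢
  set N := (n.choose t : ℝ)
  set D := ((n - 1).choose t : ℝ)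
  set c := ((k - 1).choose t : ℝ)
  set E := ((n - 1).choose (k - 1) : ℝ)
  set R := ((n - t - k - 1).choose (k - t - 1) : ℝ)
  set x := decay n k t
  have hR : D * R ≤ c * (n - 3).choose (k - 1) * x := hcompare.trans (by
    gcongr
    · exact decay_nonneg (by lia) (by lia)
    · lia)
  have hN : 0 < N := Nat.cast_pos.2 (Nat.choose_pos (by lia))
  have hD : 0 < D := Nat.cast_pos.2 (Nat.choose_pos (by lia))
  refine le_of_mul_le_mul_left ?_ (mul_pos hN hD)
  calc N * D * (setDegree ℱ T + R) = D * (N * setDegree ℱ T) + N * (D * R) := by ring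
    _ ≤ D * ((1 - averagingLoss n k t) * (E - (n - 3).choose (k - 1) * x) * k.choose t)
        + N * (c * (n - 3).choose (k - 1) * x) := by
      gcongr D * ?_ + N * ?_
      exact hmin.trans (by gcongr)
    _ = N * c * E := by linear_combination (-(E - (n - 3).choose (k - 1) * x)) * hloss
    _ = N * D * (n - t - 1).choose (k - t - 1) := by linear_combination -N * hstar

end Global

end

/-- t-degree version of the Hilton–Milner theorem (Theorem 5, case t > 1):
if `1 < t ≤ k/4 - 2` and `n ≥ 2k + 14t`, then any non-trivial intersecting
family `F` of `k`-subsets of `[n]` satisfies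
`δ_t(F) ≤ C(n-t-1, k-t-1) - C(n-t-k-1, k-t-1)`. -/
theorem t_degree_HM (n k t : ℕ) (ht : 1 < t) (htk : (t : ℝ) ≤ (k : ℝ) / 4 - 2)
    (hn : 2 * k + 14 * t ≤ n)
    (F : Finset (Finset (Fin n)))
    (hcard : ∀ A ∈ F, A.card = k)
    (hint : ∀ A ∈ F, ∀ B ∈ F, (A ∩ B).Nonempty)
    (hnontriv : ¬ ∃ i : Fin n, ∀ A ∈ F, i ∈ A) :
    ∃ T : Finset (Fin n), T.card = t ∧
      ((F.filter (fun A => T ⊆ A)).card : ℤ) ≤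
        ((n - t - 1).choose (k - t - 1) : ℤ) - ((n - t - k - 1).choose (k - t - 1) : ℤ) := by
  have hk : 4 * t + 8 ≤ k := by rify; linarith
  have hint' : (F : Set (Finset (Fin n))).Intersecting := fun A hA B hB ↦
    Finset.not_disjoint_iff_nonempty_inter.2 (hint A hA B hB)
  have hne (i : Fin n) : (F.nonMemberSubfamily i).Nonempty := by
    push Not at hnontriv
    exact (hnontriv i).imp fun A hA ↦ Finset.mem_nonMemberSubfamily.2 hA
  simp only [le_sub_iff_add_le]
  norm_cast
  by_cases hγ : ∀ i, 3 * (n - 3).choose (k - 2) < 2 * (F.nonMemberSubfamily i).card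
  · exact exists_setDegree_add_le_of_card_le_stabilityBound ht hk hn hcard
      (card_le_stabilityBound (by lia) (by lia) hcard hint' hγ)
  obtain ⟨i, hi⟩ := not_forall.1 hγ
  rcases le_total (F.nonMemberSubfamily i).card ((n - 2 * t - 3).choose (k - 2 * t - 2))
    with hfew | hmany
  · exact exists_setDegree_add_le_of_card_nonMemberSubfamily_le (by lia) (by lia) (by lia) hcard
      hint' (hne i) (hfew.trans (choose_le_choose_of_add_le (by lia) (by lia)))
  rcases le_total (F.nonMemberSubfamily i).card ((n - 3).choose (k - 2)) with hle | hge
  · exact exists_setDegree_add_le_of_card_nonMemberSubfamily_le_choose ht hk hn hcard hint' hmany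
      hle
  · exact exists_setDegree_add_le_of_choose_le_card_nonMemberSubfamily ht hk hn hcard hint' hge
      (not_lt.1 hi)
end

section
/- Let n, k, s, t be positive integers with n ≥ 2k², t ≥ 1, and k ≥ 5st. Then any family F of k-element subsets of [n] with matching number ν(F) ≤ s satisfies δ_t(F) ≤ C(n-t, k-t) - C(n-s-t, k-t). -/
/-!
Shifting reduces `F` to a family in which smaller elements may replace larger ones, and Frankl's
shadow bound `#G ≤ s * #(∂ G)` then controls the members avoiding `[s]` by a link. The sets meeting
`[s]` that `F` misses are counted by averaging over random disjoint sets, which cannot all extend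
to members of `F`. The outcome is a stability dichotomy: either `s` points meet every member
of `F`, or `#F` falls short of the extremal size `C(n, k) - C(n - s, k)` by a quarter of
`C(n - s - 1, k - 1)`. When a shift moves `F` from the second alternative to the first, the links
of the two exchanged elements are disjoint, and `F` is already small. In the first case a `t`-set
avoiding the `s` points has small degree; in the second the average `t`-degree is small.
-/

open Finset
open scoped FinsetFamily

section Averaging

variable {α ι R : Type*} {W : Finset α} {m : ℕ}

theorem sum_powersetCard_sdiff [DecidableEq α] [AddCommMonoid R] (f : Finset α → R) :
    ∑ E ∈ W.powersetCard m, ∑ D ∈ (W \ E).powersetCard m, f D =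
      (#W - m).choose m • ∑ D ∈ W.powersetCard m, f D := by
  have swap : ∀ E D : Finset α, E ∈ W.powersetCard m ∧ D ∈ (W \ E).powersetCard m ↔
      E ∈ (W \ D).powersetCard m ∧ D ∈ W.powersetCard m := by
    intro E D
    simp only [mem_powersetCard, subset_sdiff, disjoint_comm (a := D)]
    tauto
  rw [sum_comm' swap, smul_sum]
  refine sum_congr rfl fun D hD => ?_
  obtain ⟨hDW, hDm⟩ := mem_powersetCard.1 hD
  rw [sum_const, card_powersetCard, card_sdiff_of_subset hDW, hDm]

theorem sub_le_sum_of_pairwiseDisjoint_cons [DecidableEq α] [AddCommGroup R] [LinearOrder R]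
    [IsOrderedAddMonoid R] {I : Finset ι} {a : ι} (ha : a ∉ I) {c : R} {g : ι → Finset α → R}
    (h : ∀ D : ι → Finset α, (∀ i ∈ cons a I ha, D i ∈ W.powersetCard m) →
      (cons a I ha : Set ι).PairwiseDisjoint D → c ≤ ∑ i ∈ cons a I ha, g i (D i))
    {E : Finset α} (hE : E ∈ W.powersetCard m) {D : ι → Finset α}
    (hD : ∀ i ∈ I, D i ∈ (W \ E).powersetCard m) (hdisj : (I : Set ι).PairwiseDisjoint D) :
    c - g a E ≤ ∑ i ∈ I, g i (D i) := by
  classical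
  have hupd : ∀ i ∈ I, Function.update D a E i = D i := fun i hi =>
    Function.update_of_ne (ne_of_mem_of_not_mem hi ha) E D
  have hDE : ∀ i ∈ I, (D i ⊆ W ∧ Disjoint (D i) E) ∧ #(D i) = m := fun i hi => by
    simpa only [mem_powersetCard, subset_sdiff] using hD i hi
  have hsum := h (Function.update D a E)
    (forall_mem_cons _ _ |>.2 ⟨by rwa [Function.update_self], fun i hi => by
      rw [hupd i hi, mem_powersetCard]
      exact ⟨(hDE i hi).1.1, (hDE i hi).2⟩⟩)
    (by
      rw [coe_cons, Set.pairwiseDisjoint_insert_of_notMem (by simpa using ha)]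
      refine ⟨fun i hi j hj hij => ?_, fun i hi => ?_⟩
      · simpa only [Function.onFun, hupd i hi, hupd j hj] using hdisj hi hj hij
      · simpa only [Function.update_self, hupd i hi] using (hDE i hi).1.2.symm)
  rw [sum_cons, Function.update_self] at hsum
  rw [sub_le_iff_le_add']
  exact hsum.trans_eq (congrArg _ (sum_congr rfl fun i hi => by rw [hupd i hi]))

-- Averaging `h` over a uniformly random family of pairwise disjoint `m`-subsets `D i` of `W`.
theorem choose_mul_le_sum_of_pairwiseDisjoint [CommRing R] [LinearOrder R] [IsStrictOrderedRing R]
    {I : Finset ι} (hI : #I * m ≤ #W) {c : R} {g : ι → Finset α → R}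
    (h : ∀ D : ι → Finset α, (∀ i ∈ I, D i ∈ W.powersetCard m) →
      (I : Set ι).PairwiseDisjoint D → c ≤ ∑ i ∈ I, g i (D i)) :
    (#W).choose m * c ≤ ∑ i ∈ I, ∑ D ∈ W.powersetCard m, g i D := by
  classical
  rcases I.eq_empty_or_nonempty with rfl | hne
  · simpa using mul_nonpos_of_nonneg_of_nonpos ((#W).choose m).cast_nonneg
      (by simpa using h (fun _ => ∅))
  induction hne using Nonempty.cons_induction generalizing W c with
  | singleton a =>
    have hc : ∀ E ∈ W.powersetCard m, c ≤ g a E := fun E hE => by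
      simpa using h (fun _ => E) (by simpa using hE) (by simp)
    simpa using sum_le_sum hc
  | cons a I ha hne ih =>
    rw [card_cons, add_mul, one_mul] at hI
    have hIm : m ≤ #I * m := Nat.le_mul_of_pos_left m hne.card_pos
    have step : ∀ E ∈ W.powersetCard m, (#W - m).choose m * (c - g a E) ≤
        ∑ i ∈ I, ∑ D ∈ (W \ E).powersetCard m, g i D := by
      intro E hE
      have hWE : #(W \ E) = #W - m := by
        rw [card_sdiff_of_subset (mem_powersetCard.1 hE).1, (mem_powersetCard.1 hE).2]
      rw [← hWE]
      exact ih (by omega) fun D => sub_le_sum_of_pairwiseDisjoint_cons ha h hE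
    have hK : (0 : R) < (#W - m).choose m := by
      exact_mod_cast Nat.choose_pos (by omega : m ≤ #W - m)
    have total := sum_le_sum step
    rw [sum_comm] at total
    simp only [sum_powersetCard_sdiff, ← mul_sum, sum_sub_distrib, sum_const, card_powersetCard,
      nsmul_eq_mul] at total
    rw [sum_cons, ← sub_le_iff_le_add']
    exact le_of_mul_le_mul_left total hK

end Averaging

section Matching

variable {α : Type*} {F G : Finset (Finset α)} {s : ℕ}

/-- `F` has matching number at most `s`: no `s + 1` members of `F` are pairwise disjoint. The
members are indexed, so a family containing `∅`, which is disjoint from itself, has no finite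
matching number; for families of nonempty sets this is the usual notion. -/
def MatchingNumberLE (F : Finset (Finset α)) (s : ℕ) : Prop :=
  ∀ f : Fin (s + 1) → Finset α, (∀ l, f l ∈ F) → ¬ Pairwise (Function.onFun Disjoint f)

theorem MatchingNumberLE.mono (hF : MatchingNumberLE F s) (hGF : G ⊆ F) : MatchingNumberLE G s :=
  fun f hf => hF f fun l => hGF (hf l)

theorem MatchingNumberLE.empty_notMem (hF : MatchingNumberLE F s) : ∅ ∉ F := fun h =>
  hF (fun _ => ∅) (fun _ => h) fun _ _ _ => disjoint_empty_left _

theorem MatchingNumberLE.card_le {ι : Type*} (hF : MatchingNumberLE F s) {I : Finset ι}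
    {f : ι → Finset α} (hfF : ∀ i ∈ I, f i ∈ F) (hdisj : (I : Set ι).PairwiseDisjoint f) :
    #I ≤ s := by
  by_contra! hI
  obtain ⟨e⟩ : Nonempty (Fin (s + 1) ↪ I) :=
    Function.Embedding.nonempty_of_card_le (by simpa using hI)
  exact hF (fun l => f (e l)) (fun l => hfF _ (e l).2) fun l l' hne =>
    hdisj (e l).2 (e l').2 fun h => hne (e.injective (Subtype.ext h))

theorem matchingNumberLE_of_forall_card_le (hempty : ∅ ∉ F)
    (h : ∀ M ⊆ F, (M : Set (Finset α)).Pairwise Disjoint → #M ≤ s) : MatchingNumberLE F s := by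
  classical
  intro f hfF hdisj
  have hinj : Function.Injective f := by
    intro l l' hll'
    by_contra hne
    have hself : Disjoint (f l) (f l) := by simpa only [Function.onFun, ← hll'] using hdisj hne
    exact hempty (disjoint_self_iff_empty _ |>.1 hself ▸ hfF l)
  have hcard := h (univ.image f) (image_subset_iff.2 fun l _ => hfF l) (by
    rw [coe_image, coe_univ, Set.image_univ]
    rintro _ ⟨l, rfl⟩ _ ⟨l', rfl⟩ hne
    exact hdisj fun hll' => hne (congrArg f hll'))
  rw [card_image_of_injective _ hinj, card_univ, Fintype.card_fin] at hcard
  omega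

end Matching

section Shifting

variable {α : Type*} [DecidableEq α] {F : Finset (Finset α)} {A : Finset α} {i j : α} {s : ℕ}

theorem compress_singleton (hi : i ∉ A) (hj : j ∈ A) :
    UV.compress {i} {j} A = insert i (A.erase j) := by
  have hij : i ≠ j := fun h => hi (h ▸ hj)
  rw [UV.compress_of_disjoint_of_le (disjoint_singleton_left.2 hi) (singleton_subset_iff.2 hj),
    sup_eq_union, union_comm, ← insert_eq, sdiff_singleton_eq_erase,
    erase_insert_of_ne hij]

theorem exists_of_compress_singleton_ne (h : UV.compress {i} {j} A ≠ A) : i ∉ A ∧ j ∈ A := by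
  by_contra hA
  refine h (if_neg ?_)
  rwa [disjoint_singleton_left, singleton_subset_iff]

theorem map_swap_of_notMem_of_mem (hi : i ∉ A) (hj : j ∈ A) :
    A.map (Equiv.swap i j).toEmbedding = insert i (A.erase j) := by
  ext x
  rw [mem_map_equiv, Equiv.symm_swap, mem_insert, mem_erase]
  rcases eq_or_ne x i with rfl | hxi
  · simpa only [Equiv.swap_apply_left, true_or, iff_true]
  rcases eq_or_ne x j with rfl | hxj
  · simp [Equiv.swap_apply_right, hi, hxi]
  · simp [Equiv.swap_apply_of_ne_of_ne hxi hxj, hxi, hxj]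

theorem map_swap_of_notMem_of_notMem (hi : i ∉ A) (hj : j ∉ A) :
    A.map (Equiv.swap i j).toEmbedding = A := by
  ext x
  rw [mem_map_equiv, Equiv.symm_swap]
  rcases eq_or_ne x i with rfl | hxi
  · simp [hi, hj]
  rcases eq_or_ne x j with rfl | hxj
  · simp [hi, hj]
  · rw [Equiv.swap_apply_of_ne_of_ne hxi hxj]

theorem MatchingNumberLE.compression (hF : MatchingNumberLE F s) (i j : α) :
    MatchingNumberLE (UV.compression {i} {j} F) s := by
  intro f hf hdisj
  by_cases hall : ∀ l, f l ∈ F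
  · exact hF f hall hdisj
  push Not at hall
  obtain ⟨l₀, hl₀⟩ := hall
  have hi₀ : i ∈ f l₀ := singleton_subset_iff.1 (UV.le_of_mem_compression_of_notMem (hf l₀) hl₀)
  have hj₀ : j ∉ f l₀ :=
    disjoint_singleton_left.1 (UV.disjoint_of_mem_compression_of_notMem (hf l₀) hl₀)
  -- Exactly one of the sets, `f l₀`, contains `i`, so swapping `i` and `j` throughout undoes the
  -- shift of `f l₀` and shifts the set containing `j`, if there is one.
  refine hF (fun l => (f l).map (Equiv.swap i j).toEmbedding) (fun l => ?_)
    fun l l' hne => (disjoint_map _).2 (hdisj hne)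
  rcases eq_or_ne l l₀ with rfl | hl
  · have := UV.sup_sdiff_mem_of_mem_compression_of_notMem (hf l) hl₀
    rwa [sup_eq_union, union_comm, ← insert_eq, sdiff_singleton_eq_erase,
      erase_insert_of_ne (ne_of_mem_of_not_mem hi₀ hj₀).symm,
      ← map_swap_of_notMem_of_mem hj₀ hi₀, Equiv.swap_comm] at this
  have hi : i ∉ f l := fun h => disjoint_left.1 (hdisj hl) h hi₀
  have hlF : f l ∈ F := by
    by_contra h
    exact hi (singleton_subset_iff.1 (UV.le_of_mem_compression_of_notMem (hf l) h))
  by_cases hj : j ∈ f l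
  · rw [map_swap_of_notMem_of_mem hi hj, ← compress_singleton hi hj]
    rcases UV.mem_compression.1 (hf l) with h | h
    · exact h.2
    · exact absurd hlF h.1
  · rwa [map_swap_of_notMem_of_notMem hi hj]

theorem sum_compression_lt_s4 {u v : Finset α} {w : Finset α → ℕ}
    (hw : ∀ A, UV.compress u v A ≠ A → w (UV.compress u v A) < w A)
    (hne : UV.compression u v F ≠ F) :
    ∑ A ∈ UV.compression u v F, w A < ∑ A ∈ F, w A := by
  have hmoved : ∀ A ∈ F.filter (UV.compress u v · ∉ F), w (UV.compress u v A) < w A := by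
    intro A hA
    rw [mem_filter] at hA
    exact hw A fun h => hA.2 (h.symm ▸ hA.1)
  have hnonempty : (F.filter (UV.compress u v · ∉ F)).Nonempty := by
    rw [nonempty_iff_ne_empty]
    intro h
    refine hne (eq_of_subset_of_card_le (fun A hA => ?_) (UV.card_compression u v F).ge)
    rcases UV.mem_compression.1 hA with ⟨hA, -⟩ | ⟨-, B, hB, rfl⟩
    · exact hA
    · by_contra hAF
      exact notMem_empty B (h ▸ mem_filter.2 ⟨hB, hAF⟩)
  rw [UV.compression, sum_union UV.compress_disjoint, filter_image, sum_image UV.compress_injOn,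
    ← sum_filter_add_sum_filter_not F (UV.compress u v · ∈ F) w]
  exact Nat.add_lt_add_left (sum_lt_sum_of_nonempty hnonempty hmoved) _

end Shifting

section Shifted

variable {α : Type*} [LinearOrder α] {F G : Finset (Finset α)} {W : Finset α} {b : α} {k s : ℕ}

/-- `F` is shifted towards the smaller elements of `W`: replacing an element of a member of `F` by
a smaller element of `W` outside that member gives a member of `F`. -/
def IsShiftedOn (W : Finset α) (F : Finset (Finset α)) : Prop :=
  ∀ A ∈ F, ∀ i ∈ W, ∀ j ∈ A, i < j → i ∉ A → insert i (A.erase j) ∈ F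

theorem isShiftedOn_of_compression_eq (h : ∀ i j, i < j → UV.compression {i} {j} F = F) :
    IsShiftedOn W F := by
  intro A hA i _ j hj hij hi
  rw [← compress_singleton hi hj, ← h i j hij]
  exact UV.compress_mem_compression hA

theorem shift_induction [Fintype α] {P : Finset (Finset α) → Prop}
    (shifted : ∀ F, IsShiftedOn univ F → P F)
    (shift : ∀ F i j, i < j → P (UV.compression {i} {j} F) → P F) (F : Finset (Finset α)) :
    P F := by
  let rank (A : Finset α) : ℕ := ∑ x ∈ A, #{y | y < x}
  have rank_lt {i j : α} (hij : i < j) (A : Finset α) (hA : UV.compress {i} {j} A ≠ A) :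
      rank (UV.compress {i} {j} A) < rank A := by
    obtain ⟨hi, hj⟩ := exists_of_compress_singleton_ne hA
    have hlt : #{y | y < i} < #{y | y < j} := card_lt_card <| by
      rw [ssubset_iff_of_subset (monotone_filter_right _ fun y _ hy => hy.trans hij)]
      exact ⟨i, by simpa using hij, by simp⟩
    rw [compress_singleton hi hj]
    simp only [rank]
    rw [sum_insert (fun h => hi (mem_of_mem_erase h)), ← add_sum_erase A _ hj]
    exact Nat.add_lt_add_right hlt _
  induction hN : ∑ A ∈ F, rank A using Nat.strong_induction_on generalizing F with
  | h N ih =>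
    by_cases hF : ∀ i j, i < j → UV.compression {i} {j} F = F
    · exact shifted F (isShiftedOn_of_compression_eq hF)
    push Not at hF
    obtain ⟨i, j, hij, hne⟩ := hF
    exact shift F i j hij (ih _ (hN ▸ sum_compression_lt_s4 (rank_lt hij) hne) _ rfl)

theorem card_mul_le_card_shadow_mul_of_subset (hG : G ⊆ W.powersetCard k) :
    #G * k ≤ #(∂ G) * (#W - (k - 1)) := by
  refine card_mul_le_card_mul' (· ⊆ ·) (fun A hA => ?_) fun B hB => ?_
  · rw [← (mem_powersetCard.1 (hG hA)).2, ← card_image_of_injOn (erase_injOn A)]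
    refine card_le_card (image_subset_iff.2 fun a ha => ?_)
    exact mem_bipartiteBelow _ |>.2 ⟨erase_mem_shadow hA ha, erase_subset _ _⟩
  · have hsized : (G : Set (Finset α)).Sized k := fun A hA => (mem_powersetCard.1 (hG hA)).2
    have hBk : #B = k - 1 := hsized.shadow hB
    obtain ⟨A₀, hA₀, a₀, ha₀, rfl⟩ := mem_shadow_iff.1 hB
    have hBW : A₀.erase a₀ ⊆ W := (erase_subset _ _).trans (mem_powersetCard.1 (hG hA₀)).1
    rw [← hBk, ← card_sdiff_of_subset hBW]
    set B := A₀.erase a₀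
    refine (card_le_card fun A hA => ?_).trans (card_image_le (s := W \ B) (f := (insert · B)))
    obtain ⟨hAG, hBA⟩ := mem_bipartiteAbove _ |>.1 hA
    have hcard : #B + 1 = #A := by
      rw [card_erase_add_one ha₀, hsized hA₀, hsized hAG]
    obtain ⟨x, hx, rfl⟩ := exists_eq_insert_iff.2 ⟨hBA, hcard⟩
    have hxW : x ∈ W := (mem_powersetCard.1 (hG hAG)).1 (mem_insert_self _ _)
    exact mem_image_of_mem _ (mem_sdiff.2 ⟨hxW, hx⟩)

theorem card_shadow_nonMemberSubfamily_add_card_shadow_memberSubfamily_le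
    (b : α) (G : Finset (Finset α)) :
    #(∂ (G.nonMemberSubfamily b)) + #(∂ (G.memberSubfamily b)) ≤ #(∂ G) := by
  rw [← card_memberSubfamily_add_card_nonMemberSubfamily b (∂ G), add_comm]
  refine add_le_add (card_le_card fun B hB => ?_) (card_le_card fun B hB => ?_)
  · obtain ⟨A, hA, a, ha, rfl⟩ := mem_shadow_iff.1 hB
    obtain ⟨hAG, hbA⟩ := mem_memberSubfamily.1 hA
    have hab : b ≠ a := fun h => hbA (h ▸ ha)
    refine mem_memberSubfamily.2 ⟨?_, fun h => hbA (mem_of_mem_erase h)⟩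
    rw [← erase_insert_of_ne hab]
    exact erase_mem_shadow hAG (mem_insert_of_mem ha)
  · obtain ⟨A, hA, a, ha, rfl⟩ := mem_shadow_iff.1 hB
    obtain ⟨hAG, hbA⟩ := mem_nonMemberSubfamily.1 hA
    exact mem_nonMemberSubfamily.2 ⟨erase_mem_shadow hAG ha, fun h => hbA (mem_of_mem_erase h)⟩

theorem IsShiftedOn.nonMemberSubfamily (hG : IsShiftedOn (insert b W) G) (hb : b ∉ W) :
    IsShiftedOn W (G.nonMemberSubfamily b) := by
  intro A hA i hi j hj hij hiA
  obtain ⟨hAG, hbA⟩ := mem_nonMemberSubfamily.1 hA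
  refine mem_nonMemberSubfamily.2 ⟨hG A hAG i (mem_insert_of_mem hi) j hj hij hiA, ?_⟩
  rw [mem_insert, not_or]
  exact ⟨fun h => hb (h ▸ hi), fun h => hbA (mem_of_mem_erase h)⟩

theorem IsShiftedOn.memberSubfamily (hG : IsShiftedOn (insert b W) G) (hb : b ∉ W) :
    IsShiftedOn W (G.memberSubfamily b) := by
  intro A hA i hi j hj hij hiA
  obtain ⟨hAG, hbA⟩ := mem_memberSubfamily.1 hA
  have hib : i ≠ b := fun h => hb (h ▸ hi)
  have hbj : b ≠ j := fun h => hbA (h ▸ hj)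
  have hshift := hG _ hAG i (mem_insert_of_mem hi) j (mem_insert_of_mem hj) hij
    (by simp [hib, hiA])
  rw [erase_insert_of_ne hbj, insert_comm] at hshift
  refine mem_memberSubfamily.2 ⟨hshift, ?_⟩
  rw [mem_insert, not_or]
  exact ⟨hib.symm, fun h => hbA (mem_of_mem_erase h)⟩

-- In a large ground set, `s + 1` disjoint members of the subfamily extend by distinct new elements:
-- shiftedness lets any element of `W` take over the role of the largest element `b`.
theorem MatchingNumberLE.memberSubfamily (hF : MatchingNumberLE G s)
    (hG : G ⊆ (insert b W).powersetCard k) (hshift : IsShiftedOn (insert b W) G)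
    (hb : ∀ x ∈ W, x < b) (hW : (s + 1) * k ≤ #(insert b W)) :
    MatchingNumberLE (G.memberSubfamily b) s := by
  intro f hf hdisj
  replace hf : ∀ l, insert b (f l) ∈ G ∧ b ∉ f l := fun l => mem_memberSubfamily.1 (hf l)
  have hcard : ∀ l, #(f l) + 1 = k := fun l => by
    rw [← card_insert_of_notMem (hf l).2, (mem_powersetCard.1 (hG (hf l).1)).2]
  have hfree : s + 1 ≤ #(insert b W \ univ.biUnion f) := by
    have hU : #(univ.biUnion f) ≤ (s + 1) * (k - 1) := by
      simpa using card_biUnion_le_card_mul univ f (k - 1) fun l _ => by have := hcard l; omega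
    have hk : (s + 1) * k = (s + 1) * (k - 1) + (s + 1) := by
      rw [← hcard 0, Nat.add_sub_cancel, mul_add, mul_one]
    have := le_card_sdiff (univ.biUnion f) (insert b W)
    omega
  obtain ⟨φ⟩ : Nonempty (Fin (s + 1) ↪ ↥(insert b W \ univ.biUnion f)) :=
    Function.Embedding.nonempty_of_card_le (by simpa using hfree)
  have hφ : ∀ l l', (φ l : α) ∉ f l' := fun l l' h =>
    (mem_sdiff.1 (φ l).2).2 (mem_biUnion.2 ⟨l', mem_univ _, h⟩)
  refine hF (fun l => insert (φ l : α) (f l)) (fun l => ?_) fun l l' hne => ?_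
  · have hφW : (φ l : α) ∈ insert b W := (mem_sdiff.1 (φ l).2).1
    rcases eq_or_ne (φ l : α) b with h | hne
    · rw [h]
      exact (hf l).1
    · have := hshift _ (hf l).1 _ hφW b (mem_insert_self _ _)
        (hb _ (mem_of_mem_insert_of_ne hφW hne)) (by simp [hne, hφ])
      rwa [erase_insert (hf l).2] at this
  · have hφne : (φ l : α) ≠ φ l' := fun h => hne (φ.injective (Subtype.ext h))
    simp [Function.onFun, hφ, hφne.symm, show Disjoint (f l) (f l') from hdisj hne]

theorem card_le_mul_card_shadow_of_card_lt (hG : G ⊆ W.powersetCard k) (hW : #W < (s + 1) * k) :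
    #G ≤ s * #(∂ G) := by
  have hk : 0 < k := Nat.pos_of_ne_zero fun h => by simp [h] at hW
  refine Nat.le_of_mul_le_mul_right ?_ hk
  calc #G * k ≤ #(∂ G) * (#W - (k - 1)) := card_mul_le_card_shadow_mul_of_subset hG
    _ ≤ #(∂ G) * (s * k) := by
      refine Nat.mul_le_mul_left _ ?_
      rw [add_mul, one_mul] at hW
      omega
    _ = s * #(∂ G) * k := by ring

theorem card_le_mul_card_shadow (hG : G ⊆ W.powersetCard k) (hshift : IsShiftedOn W G)
    (hF : MatchingNumberLE G s) : #G ≤ s * #(∂ G) := by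
  induction W using Finset.induction_on_max generalizing k G with
  | empty =>
    have hempty : G ⊆ {∅} := hG.trans fun A hA => by
      simpa using (mem_powersetCard.1 hA).1
    rcases subset_singleton_iff.1 hempty with rfl | rfl
    · simp
    · exact absurd (mem_singleton_self _) hF.empty_notMem
  | insert b W hb ih =>
    rcases lt_or_ge #(insert b W) ((s + 1) * k) with hW | hW
    · exact card_le_mul_card_shadow_of_card_lt hG hW
    have hbW : b ∉ W := fun h => (hb b h).false
    have hmember : #(G.memberSubfamily b) ≤ s * #(∂ (G.memberSubfamily b)) := by
      refine ih (k := k - 1) (fun A hA => ?_) (hshift.memberSubfamily hbW)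
        (hF.memberSubfamily hG hshift hb hW)
      obtain ⟨hAG, hbA⟩ := mem_memberSubfamily.1 hA
      obtain ⟨hAW, hAk⟩ := mem_powersetCard.1 (hG hAG)
      rw [card_insert_of_notMem hbA] at hAk
      exact mem_powersetCard.2 ⟨(insert_subset_insert_iff hbA).1 hAW, by omega⟩
    have hnonMember : #(G.nonMemberSubfamily b) ≤ s * #(∂ (G.nonMemberSubfamily b)) := by
      refine ih (k := k) (fun A hA => ?_) (hshift.nonMemberSubfamily hbW)
        (hF.mono (filter_subset _ _))
      obtain ⟨hAG, hbA⟩ := mem_nonMemberSubfamily.1 hA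
      obtain ⟨hAW, hAk⟩ := mem_powersetCard.1 (hG hAG)
      exact mem_powersetCard.2 ⟨(subset_insert_iff_of_notMem hbA).1 hAW, hAk⟩
    calc #G = #(G.nonMemberSubfamily b) + #(G.memberSubfamily b) := by
          rw [add_comm, card_memberSubfamily_add_card_nonMemberSubfamily]
      _ ≤ s * (#(∂ (G.nonMemberSubfamily b)) + #(∂ (G.memberSubfamily b))) := by
          rw [mul_add]
          exact add_le_add hnonMember hmember
      _ ≤ s * #(∂ G) := Nat.mul_le_mul_left s
          (card_shadow_nonMemberSubfamily_add_card_shadow_memberSubfamily_le b G)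

end Shifted

section Links

variable {α : Type*} [DecidableEq α] {F : Finset (Finset α)} {U W W' : Finset α} {m : ℕ} {u : α}

/-- The `m`-subsets of `W` that extend to a member of `F` by adding `u`: the link of `u` in `F`,
restricted to `W`. -/
def link (F : Finset (Finset α)) (W : Finset α) (m : ℕ) (u : α) : Finset (Finset α) :=
  {D ∈ W.powersetCard m | insert u D ∈ F}

/-- The complement of `link F W m u` in the `m`-subsets of `W`: for `u ∉ W` it counts the sets
`insert u D` that `F` misses. -/
def coLink (F : Finset (Finset α)) (W : Finset α) (m : ℕ) (u : α) : Finset (Finset α) :=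
  {D ∈ W.powersetCard m | insert u D ∉ F}

theorem mem_link {D : Finset α} : D ∈ link F W m u ↔ (D ⊆ W ∧ #D = m) ∧ insert u D ∈ F := by
  rw [link, mem_filter, mem_powersetCard]

theorem mem_coLink {D : Finset α} : D ∈ coLink F W m u ↔ (D ⊆ W ∧ #D = m) ∧ insert u D ∉ F := by
  rw [coLink, mem_filter, mem_powersetCard]

theorem link_subset_powersetCard : link F W m u ⊆ W.powersetCard m :=
  filter_subset _ _

theorem coLink_subset_coLink (hW : W' ⊆ W) : coLink F W' m u ⊆ coLink F W m u :=
  filter_subset_filter _ (powersetCard_mono hW)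

theorem card_le_card_link {G : Finset (Finset α)} (hGF : G ⊆ F)
    (hF : (F : Set (Finset α)).Sized (m + 1)) (hG : ∀ A ∈ G, u ∈ A ∧ A.erase u ⊆ W) :
    #G ≤ #(link F W m u) := by
  refine card_le_card_of_injOn (·.erase u) (fun A hA => ?_) fun A hA B hB hAB => ?_
  · rw [mem_coe] at hA
    refine mem_link.2 ⟨⟨(hG A hA).2, ?_⟩, ?_⟩
    · rw [card_erase_of_mem (hG A hA).1, hF (hGF hA), Nat.add_sub_cancel]
    · rw [insert_erase (hG A hA).1]
      exact hGF hA
  · exact erase_injOn' u (hG A hA).1 (hG B hB).1 hAB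

theorem card_image_insert_coLink (hUW : Disjoint U W) :
    #((U.sigma fun u => coLink F W m u).image fun p => insert p.1 p.2) =
      ∑ u ∈ U, #(coLink F W m u) := by
  rw [← card_sigma]
  refine card_image_of_injOn ?_
  rintro ⟨u, D⟩ hD ⟨v, E⟩ hE hDE
  obtain ⟨hu, hD⟩ := mem_sigma.1 hD
  obtain ⟨hv, hE⟩ := mem_sigma.1 hE
  have hnot : ∀ w ∈ U, ∀ B ⊆ W, w ∉ B := fun w hw B hB h => disjoint_left.1 hUW hw (hB h)
  have hDW : D ⊆ W := (mem_coLink.1 hD).1.1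
  have hEW : E ⊆ W := (mem_coLink.1 hE).1.1
  dsimp only at hu hv hDE
  have huv : u = v :=
    (mem_insert.1 (hDE ▸ mem_insert_self u D)).resolve_right (hnot u hu E hEW)
  subst huv
  refine congrArg (Sigma.mk u) ?_
  rw [← erase_insert (hnot u hu D hDW), hDE, erase_insert (hnot u hu E hEW)]

theorem card_add_sum_card_coLink_le [Fintype α] (hF : (F : Set (Finset α)).Sized (m + 1))
    (hUW : Disjoint U W) :
    #F + ∑ u ∈ U, #(coLink F W m u) + (Fintype.card α - #U).choose (m + 1) ≤
      (Fintype.card α).choose (m + 1) + #{A ∈ F | Disjoint A U} := by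
  set missing := (U.sigma fun u => coLink F W m u).image fun p => insert p.1 p.2 with missing_def
  have hmissing : ∀ A ∈ missing, A ∉ F ∧ #A = m + 1 ∧ ¬ Disjoint A U := by
    intro A hA
    obtain ⟨⟨u, D⟩, hp, rfl⟩ := mem_image.1 hA
    obtain ⟨hu, hD⟩ := mem_sigma.1 hp
    obtain ⟨⟨hDW, hDm⟩, hDF⟩ := mem_coLink.1 hD
    refine ⟨hDF, ?_, not_disjoint_iff.2 ⟨u, mem_insert_self _ _, hu⟩⟩
    rw [card_insert_of_notMem fun h => disjoint_left.1 hUW hu (hDW h), hDm]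
  have hdisj₁ : Disjoint {A ∈ F | ¬ Disjoint A U} missing :=
    disjoint_left.2 fun A hA hAm => (hmissing A hAm).1 (mem_filter.1 hA).1
  have hdisj₂ : Disjoint ({A ∈ F | ¬ Disjoint A U} ∪ missing) (Uᶜ.powersetCard (m + 1)) := by
    refine disjoint_left.2 fun A hA hAU => ?_
    have hAU : Disjoint A U := subset_compl_iff_disjoint_right.1 (mem_powersetCard.1 hAU).1
    rcases mem_union.1 hA with hA | hA
    · exact (mem_filter.1 hA).2 hAU
    · exact (hmissing A hA).2.2 hAU
  have hsub : ({A ∈ F | ¬ Disjoint A U} ∪ missing) ∪ Uᶜ.powersetCard (m + 1) ⊆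
      univ.powersetCard (m + 1) := by
    intro A hA
    rw [mem_powersetCard_univ]
    rcases mem_union.1 hA with hA | hA
    · rcases mem_union.1 hA with hA | hA
      · exact hF (mem_filter.1 hA).1
      · exact (hmissing A hA).2.1
    · exact (mem_powersetCard.1 hA).2
  have hcard := card_le_card hsub
  rw [card_union_of_disjoint hdisj₂, card_union_of_disjoint hdisj₁, missing_def,
    card_image_insert_coLink hUW, card_powersetCard, card_powersetCard, card_compl, card_univ]
    at hcard
  have := card_filter_add_card_filter_not (s := F) (Disjoint · U)
  omega

theorem MatchingNumberLE.card_add_card_le {M : Finset (Finset α)} {s : ℕ} {D : α → Finset α}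
    (hF : MatchingNumberLE F s) (hMF : M ⊆ F) (hM : (M : Set (Finset α)).Pairwise Disjoint)
    (hMU : ∀ A ∈ M, Disjoint A U) (hMW : ∀ A ∈ M, Disjoint A W) (hUW : Disjoint U W)
    (hDW : ∀ u ∈ U, D u ⊆ W) (hD : (U : Set α).PairwiseDisjoint D)
    (hDF : ∀ u ∈ U, insert u (D u) ∈ F) : #M + #U ≤ s := by
  have hnot : ∀ u ∈ U, ∀ v ∈ U, u ∉ D v := fun u hu v hv h =>
    disjoint_left.1 hUW hu (hDW v hv h)
  have hMD : ∀ A ∈ M, ∀ u ∈ U, Disjoint A (insert u (D u)) := fun A hA u hu =>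
    disjoint_insert_right.2
      ⟨disjoint_right.1 (hMU A hA) hu, (hMW A hA).mono_right (hDW u hu)⟩
  rw [← card_disjSum]
  refine hF.card_le (f := Sum.elim id fun u => insert u (D u)) ?_ ?_
  · rintro (A | u) h
    · exact hMF (inl_mem_disjSum.1 h)
    · exact hDF u (inr_mem_disjSum.1 h)
  · rintro (A | u) hA (B | v) hB hne
    · exact hM (inl_mem_disjSum.1 hA) (inl_mem_disjSum.1 hB) fun h => hne (congrArg _ h)
    · exact hMD A (inl_mem_disjSum.1 hA) v (inr_mem_disjSum.1 hB)
    · exact (hMD B (inl_mem_disjSum.1 hB) u (inr_mem_disjSum.1 hA)).symm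
    · have hu := inr_mem_disjSum.1 hA
      have hv := inr_mem_disjSum.1 hB
      have huv : u ≠ v := fun h => hne (congrArg _ h)
      simp [Function.onFun, huv.symm, hnot u hu v hv, hnot v hv u hu,
        show Disjoint (D u) (D v) from hD hu hv huv]

theorem MatchingNumberLE.choose_le_sum_card_coLink {M : Finset (Finset α)} {s : ℕ}
    (hF : MatchingNumberLE F s) (hMF : M ⊆ F) (hM : (M : Set (Finset α)).Pairwise Disjoint)
    (hMU : ∀ A ∈ M, Disjoint A U) (hMW : ∀ A ∈ M, Disjoint A W) (hUW : Disjoint U W)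
    (hs : s < #M + #U) (hm : #U * m ≤ #W) :
    (#W).choose m ≤ ∑ u ∈ U, #(coLink F W m u) := by
  have key : ((#W).choose m : ℤ) * 1 ≤
      ∑ u ∈ U, ∑ D ∈ W.powersetCard m, if insert u D ∉ F then 1 else 0 := by
    refine choose_mul_le_sum_of_pairwiseDisjoint hm fun D hD hdisj => ?_
    obtain ⟨u, hu, huF⟩ : ∃ u ∈ U, insert u (D u) ∉ F := by
      by_contra! hall
      exact hs.not_ge (hF.card_add_card_le hMF hM hMU hMW hUW
        (fun u hu => (mem_powersetCard.1 (hD u hu)).1) hdisj hall)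
    rw [sum_boole]
    exact_mod_cast card_pos.2 ⟨u, mem_filter.2 ⟨hu, huF⟩⟩
  simp only [sum_boole, mul_one] at key
  exact_mod_cast key

-- A transversal would need `card ι + 1` points, and by Hall's theorem its absence makes some
-- `q + 1` of the sets have a union of size at most `q`; all of these contain `S`.
theorem card_sub_mul_card_le_sum_card_compl {ι β : Type*} [Fintype ι] [Fintype β] [DecidableEq β]
    {S : Finset β} {T : ι → Finset β} (hST : ∀ i, S ⊆ T i)
    (h : ¬ ∃ f : Option ι → β, Function.Injective f ∧ ∀ o, f o ∈ o.elim S T) :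
    (Fintype.card β - Fintype.card ι) * #S ≤ ∑ i, #(T i)ᶜ := by
  classical
  rw [← all_card_le_biUnion_card_iff_exists_injective] at h
  push Not at h
  obtain ⟨J, hJ⟩ := h
  set V := J.biUnion fun o => o.elim S T
  have hJcard : #J ≤ #J.eraseNone + 1 := by
    rw [← card_map Function.Embedding.some (s := J.eraseNone), map_some_eraseNone]
    exact Nat.le_add_of_sub_le pred_card_le_card_erase
  have hSV : S ⊆ V := by
    obtain ⟨o, ho⟩ : J.Nonempty := card_pos.1 (by omega)
    refine subset_trans ?_ (subset_biUnion_of_mem (fun o : Option ι => o.elim S T) ho)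
    cases o
    · exact subset_rfl
    · exact hST _
  have hTV : ∀ i ∈ J.eraseNone, Fintype.card β - Fintype.card ι ≤ #(T i)ᶜ := fun i hi => by
    have hTi : #(T i) ≤ #V := card_le_card <|
      subset_biUnion_of_mem (fun o : Option ι => o.elim S T) (mem_eraseNone.1 hi)
    have := card_le_univ J.eraseNone
    rw [card_compl]
    omega
  calc (Fintype.card β - Fintype.card ι) * #S
      ≤ #J.eraseNone * (Fintype.card β - Fintype.card ι) := by
        rw [mul_comm]
        exact Nat.mul_le_mul_right _ ((card_le_card hSV).trans (by omega))
    _ ≤ ∑ i ∈ J.eraseNone, #(T i)ᶜ := by simpa using card_nsmul_le_sum _ _ _ hTV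
    _ ≤ ∑ i, #(T i)ᶜ := sum_le_sum_of_subset (subset_univ _)

theorem MatchingNumberLE.sub_mul_card_filter_le {β : Type*} [Fintype β] {v : α}
    {D : β → Finset α} (hF : MatchingNumberLE F #U) (hv : v ∉ U) (hUW : Disjoint (insert v U) W)
    (hDW : ∀ b, D b ⊆ W) (hD : Pairwise (Function.onFun Disjoint D))
    (hvu : ∀ u ∈ U, ∀ b, insert v (D b) ∈ F → insert u (D b) ∈ F) :
    (Fintype.card β - #U) * #{b | insert v (D b) ∈ F} ≤ ∑ u ∈ U, #{b | insert u (D b) ∉ F} := by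
  classical
  let S : Finset β := {b | insert v (D b) ∈ F}
  let T (u : U) : Finset β := {b | insert u.1 (D b) ∈ F}
  have hST : ∀ u, S ⊆ T u := fun u => monotone_filter_right _ fun b _ => hvu u u.2 b
  have htransversal : ¬ ∃ f : Option U → β, Function.Injective f ∧ ∀ o, f o ∈ o.elim S T := by
    rintro ⟨f, hf, hfST⟩
    let e (o : Option U) : α := o.elim v Subtype.val
    have he : Function.Injective e := Option.injective_iff.2 ⟨Subtype.val_injective,
      fun ⟨u, hu⟩ => hv ((show u.1 = v from hu) ▸ u.2)⟩
    have heU : ∀ o, e o ∈ insert v U := by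
      rintro (_ | u)
      · exact mem_insert_self _ _
      · exact mem_insert_of_mem u.2
    have heW : ∀ o o', e o ∉ D (f o') := fun o o' h =>
      disjoint_left.1 hUW (heU o) (hDW _ h)
    have hcard := hF.card_le (I := univ) (f := fun o => insert (e o) (D (f o)))
      (fun o _ => by
        cases o
        · exact (mem_filter.1 (hfST none)).2
        · exact (mem_filter.1 (hfST (some _))).2)
      (fun o _ o' _ hne => by
        simp [Function.onFun, heW, he.ne hne.symm,
          show Disjoint (D (f o)) (D (f o')) from hD (hf.ne hne)])
    simp at hcard
  have hall := card_sub_mul_card_le_sum_card_compl hST htransversal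
  rw [Fintype.card_coe] at hall
  simpa only [T, compl_filter, sum_coe_sort U fun u => #{b | insert u (D b) ∉ F}] using hall

-- Averaging `sub_mul_card_filter_le` over a random choice of `x` disjoint `m`-subsets of `W`.
theorem MatchingNumberLE.sub_mul_card_link_le {v : α} (hF : MatchingNumberLE F #U) (hv : v ∉ U)
    (hUW : Disjoint (insert v U) W) (hlink : ∀ u ∈ U, link F W m v ⊆ link F W m u)
    {x : ℕ} (hx : x * m ≤ #W) :
    (x - #U) * #(link F W m v) ≤ ∑ u ∈ U, #(coLink F W m u) := by
  rcases x.eq_zero_or_pos with rfl | hx₀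
  · simp
  have key : ((#W).choose m : ℤ) * 0 ≤ ∑ _i : Fin x, ∑ D ∈ W.powersetCard m,
      ((∑ u ∈ U, if insert u D ∉ F then 1 else 0) -
        ((x - #U : ℕ) : ℤ) * if insert v D ∈ F then 1 else 0) := by
    refine choose_mul_le_sum_of_pairwiseDisjoint (by simpa using hx) fun D hD hdisj => ?_
    rw [sum_sub_distrib, sum_comm, ← mul_sum, sub_nonneg]
    simp only [sum_boole]
    have := hF.sub_mul_card_filter_le (D := D) hv hUW
      (fun i => (mem_powersetCard.1 (hD i (mem_univ i))).1)
      (fun i j hij => hdisj (mem_univ i) (mem_univ j) hij)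
      (fun u hu i hi => (mem_link.1 (hlink u hu
        (mem_link.2 ⟨mem_powersetCard.1 (hD i (mem_univ i)), hi⟩))).2)
    rw [Fintype.card_fin] at this
    exact_mod_cast this
  rw [mul_zero, sum_const, card_univ, Fintype.card_fin, nsmul_eq_mul, sum_sub_distrib, sum_comm,
    ← mul_sum] at key
  simp only [sum_boole] at key
  have := nonneg_of_mul_nonneg_right key (by exact_mod_cast hx₀)
  rw [sub_nonneg] at this
  exact_mod_cast this

end Links

section CrossIntersecting

variable {α : Type*} {G H : Finset (Finset α)} {W : Finset α} {m : ℕ}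

theorem card_filter_mem_le_card_of_forall_not_disjoint [DecidableEq α] {β : Type*} [Fintype β]
    {D : β → Finset α} (hD : Pairwise (Function.onFun Disjoint D)) {C : Finset α}
    (hC : ∀ A ∈ G, ¬ Disjoint A C) : #{b | D b ∈ G} ≤ #C := by
  refine (card_le_card_biUnion (f := fun b => D b ∩ C) (fun b _ b' _ hne => ?_)
    fun b hb => ?_).trans (card_le_card (biUnion_subset.2 fun b _ => inter_subset_right))
  · exact (hD hne).mono inter_subset_left inter_subset_left
  · exact not_disjoint_iff_nonempty_inter.1 (hC _ (mem_filter.1 hb).2)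

theorem card_filter_mem_add_card_filter_mem_le [DecidableEq α] {β : Type*} [Fintype β]
    {D : β → Finset α} (hD : Pairwise (Function.onFun Disjoint D)) (hG : ∀ A ∈ G, #A = m)
    (hH : ∀ A ∈ H, #A = m) (hG_ne : G.Nonempty) (hH_ne : H.Nonempty) (hGH : Disjoint G H)
    (hcross : ∀ A ∈ G, ∀ B ∈ H, ¬ Disjoint A B) :
    #{b | D b ∈ G} + #{b | D b ∈ H} ≤ m := by
  classical
  obtain ⟨A, hA⟩ := hG_ne
  obtain ⟨B, hB⟩ := hH_ne
  by_cases hDG : ∃ b, D b ∈ G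
  · obtain ⟨b, hb⟩ := hDG
    have hDH : #{b | D b ∈ H} = 0 := by
      rw [card_eq_zero, filter_eq_empty_iff]
      intro b' _ hb'
      have hne : b ≠ b' := fun h => disjoint_left.1 hGH hb (h ▸ hb')
      exact hcross _ hb _ hb' (hD hne)
    rw [hDH, add_zero, ← hH B hB]
    exact card_filter_mem_le_card_of_forall_not_disjoint hD fun A hA => hcross A hA B hB
  · push Not at hDG
    rw [filter_eq_empty_iff.2 fun b _ => hDG b, card_empty, zero_add, ← hG A hA]
    exact card_filter_mem_le_card_of_forall_not_disjoint hD fun B hB h => hcross A hA B hB h.symm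

theorem mul_card_add_card_le_of_forall_not_disjoint
    (hG : G ⊆ W.powersetCard m) (hH : H ⊆ W.powersetCard m) (hG_ne : G.Nonempty)
    (hH_ne : H.Nonempty) (hGH : Disjoint G H) (hcross : ∀ A ∈ G, ∀ B ∈ H, ¬ Disjoint A B)
    {x : ℕ} (hx : x * m ≤ #W) : x * (#G + #H) ≤ m * (#W).choose m := by
  classical
  have key : ((#W).choose m : ℤ) * -m ≤ ∑ _i : Fin x, ∑ D ∈ W.powersetCard m,
      -((if D ∈ G then 1 else 0) + if D ∈ H then 1 else 0) := by
    refine choose_mul_le_sum_of_pairwiseDisjoint (by simpa using hx) fun D _ hdisj => ?_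
    rw [sum_neg_distrib, sum_add_distrib, sum_boole, sum_boole, neg_le_neg_iff]
    exact_mod_cast card_filter_mem_add_card_filter_mem_le
      (fun i j hij => hdisj (mem_univ i) (mem_univ j) hij)
      (fun A hA => (mem_powersetCard.1 (hG hA)).2) (fun A hA => (mem_powersetCard.1 (hH hA)).2)
      hG_ne hH_ne hGH hcross
  rw [sum_const, card_univ, Fintype.card_fin, nsmul_eq_mul, sum_neg_distrib, sum_add_distrib,
    sum_boole, sum_boole, filter_mem_eq_inter, filter_mem_eq_inter, inter_eq_right.2 hG,
    inter_eq_right.2 hH, mul_neg, mul_neg, neg_le_neg_iff, mul_comm ((#W).choose m : ℤ)] at key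
  exact_mod_cast key

end CrossIntersecting

theorem mul_choose_le_mul_choose_sub_add (n m q : ℕ) :
    n * n.choose m ≤ n * (n - q).choose m + q * m * n.choose m := by
  induction q with
  | zero => simp
  | succ q ih =>
    have step : n * (n - q).choose m ≤ n * (n - (q + 1)).choose m + m * n.choose m := by
      rcases m.eq_zero_or_pos with rfl | hm
      · simp
      rcases lt_or_ge q n with hq | hq
      · obtain ⟨n, rfl⟩ : ∃ n', n = n' + 1 := ⟨n - 1, by omega⟩
        obtain ⟨m, rfl⟩ : ∃ m', m = m' + 1 := ⟨m - 1, by omega⟩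
        have hpascal : (n + 1 - q).choose (m + 1) = (n - q).choose m + (n - q).choose (m + 1) := by
          rw [← Nat.choose_succ_succ', ← Nat.sub_add_comm (by omega)]
        rw [hpascal, Nat.add_sub_add_right, mul_add, add_comm, mul_comm (m + 1),
          ← Nat.add_one_mul_choose_eq]
        gcongr
        omega
      · simp [Nat.sub_eq_zero_of_le hq, Nat.sub_eq_zero_of_le (hq.trans q.le_succ)]
    calc n * n.choose m ≤ n * (n - q).choose m + q * m * n.choose m := ih
      _ ≤ n * (n - (q + 1)).choose m + m * n.choose m + q * m * n.choose m := by gcongr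
      _ = n * (n - (q + 1)).choose m + (q + 1) * m * n.choose m := by ring

theorem choose_le_two_mul_choose_sub {n m q : ℕ} (h : 2 * (q * m) ≤ n) :
    n.choose m ≤ 2 * (n - q).choose m := by
  rcases n.eq_zero_or_pos with rfl | hn
  · simpa using Nat.le_mul_of_pos_left _ two_pos
  have hdrop := mul_choose_le_mul_choose_sub_add n m q
  have hhalf : 2 * (q * m) * n.choose m ≤ n * n.choose m := Nat.mul_le_mul_right _ h
  refine Nat.le_of_mul_le_mul_left ?_ hn
  linarith

section ShiftedCase

variable {α : Type*} [LinearOrder α] {F : Finset (Finset α)} {m s : ℕ} {v : α}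

theorem IsShiftedOn.link_subset_link [Fintype α] (hshift : IsShiftedOn univ F) {W : Finset α}
    {u : α} (huv : u < v) (hu : u ∉ W) (hv : v ∉ W) : link F W m v ⊆ link F W m u := by
  intro D hD
  obtain ⟨⟨hDW, hDm⟩, hDF⟩ := mem_link.1 hD
  refine mem_link.2 ⟨⟨hDW, hDm⟩, ?_⟩
  have huD : u ∉ insert v D := by
    rw [mem_insert, not_or]
    exact ⟨huv.ne, fun h => hu (hDW h)⟩
  have := hshift _ hDF u (mem_univ u) v (mem_insert_self v D) huv huD
  rwa [erase_insert fun h => hv (hDW h)] at this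

variable [Fintype α] [LocallyFiniteOrderBot α]

theorem IsShiftedOn.exists_mem_of_disjoint_Iio (hshift : IsShiftedOn univ F) {A : Finset α}
    (hA : A ∈ F) (hne : A.Nonempty) (hAv : Disjoint A (Iio v)) :
    ∃ B ∈ F, v ∈ B ∧ Disjoint B (Iio v) := by
  by_cases hvA : v ∈ A
  · exact ⟨A, hA, hvA, hAv⟩
  obtain ⟨a, ha⟩ := hne
  have hva : v < a := (not_lt.1 fun h => disjoint_left.1 hAv ha (mem_Iio.2 h)).lt_of_ne
    (ne_of_mem_of_not_mem ha hvA).symm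
  refine ⟨insert v (A.erase a), hshift A hA v (mem_univ v) a ha hva hvA, mem_insert_self _ _, ?_⟩
  simpa using hAv.mono_left (erase_subset _ _)

theorem IsShiftedOn.card_filter_disjoint_Iio_le [LocallyFiniteOrderTop α]
    (hshift : IsShiftedOn univ F) (hF : (F : Set (Finset α)).Sized (m + 1))
    (hmatch : MatchingNumberLE F s) :
    #{A ∈ F | Disjoint A (Iio v)} ≤ (s + 1) * #(link F (Ioi v) m v) := by
  have hIoi : ∀ A : Finset α, Disjoint A (Iio v) → ∀ x ∈ A, x ≠ v → x ∈ Ioi v :=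
    fun A hA x hx hxv => mem_Ioi.2 <|
      (not_lt.1 fun h => disjoint_left.1 hA hx (mem_Iio.2 h)).lt_of_ne' hxv
  have hmem : #{A ∈ {A ∈ F | Disjoint A (Iio v)} | v ∈ A} ≤ #(link F (Ioi v) m v) := by
    refine card_le_card_link ((filter_subset _ _).trans (filter_subset _ _)) hF fun A hA => ?_
    obtain ⟨hA, hvA⟩ := mem_filter.1 hA
    exact ⟨hvA, fun x hx => hIoi A (mem_filter.1 hA).2 x (mem_of_mem_erase hx) (ne_of_mem_erase hx)⟩
  set G : Finset (Finset α) := {A ∈ {A ∈ F | Disjoint A (Iio v)} | v ∉ A}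
  have hG : ∀ A ∈ G, A ∈ F ∧ Disjoint A (Iio v) ∧ v ∉ A := fun A hA => by
    simpa only [G, mem_filter, and_assoc] using hA
  have hGW : G ⊆ (Ioi v).powersetCard (m + 1) := fun A hA => by
    obtain ⟨hAF, hAv, hvA⟩ := hG A hA
    exact mem_powersetCard.2 ⟨fun x hx => hIoi A hAv x hx (ne_of_mem_of_not_mem hx hvA), hF hAF⟩
  have hGshift : IsShiftedOn (Ioi v) G := by
    intro A hA i hi j hj hij hiA
    obtain ⟨hAF, hAv, hvA⟩ := hG A hA
    rw [mem_Ioi] at hi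
    simp only [G, mem_filter, disjoint_insert_left, mem_Iio, mem_insert, not_or, not_lt]
    exact ⟨⟨hshift A hAF i (mem_univ i) j hj hij hiA, hi.le,
      hAv.mono_left (erase_subset _ _)⟩, hi.ne, fun h => hvA (mem_of_mem_erase h)⟩
  have hshadow : ∂ G ⊆ link F (Ioi v) m v := by
    intro B hB
    obtain ⟨A, hA, a, ha, rfl⟩ := mem_shadow_iff.1 hB
    obtain ⟨hAW, hAm⟩ := mem_powersetCard.1 (hGW hA)
    obtain ⟨hAF, -, hvA⟩ := hG A hA
    refine mem_link.2 ⟨⟨(erase_subset _ _).trans hAW, ?_⟩,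
      hshift A hAF v (mem_univ v) a ha (mem_Ioi.1 (hAW ha)) hvA⟩
    rw [card_erase_of_mem ha, hAm, Nat.add_sub_cancel]
  have hGcard : #G ≤ s * #(link F (Ioi v) m v) :=
    (card_le_mul_card_shadow hGW hGshift (hmatch.mono fun A hA => (hG A hA).1)).trans
      (Nat.mul_le_mul_left s (card_le_card hshadow))
  rw [← card_filter_add_card_filter_not (v ∈ ·)]
  linarith

end ShiftedCase

-- A member avoiding `U`, together with one new set for each `u ∈ U`, would form a matching of size
-- `#U + 1`; averaging over the new sets shows that many of the sets meeting `U` are missing.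
theorem MatchingNumberLE.choose_le_two_mul_sum_card_coLink {α : Type*} [DecidableEq α]
    {F : Finset (Finset α)} {U W B : Finset α} {m : ℕ} {v : α} (hF : MatchingNumberLE F #U)
    (hBF : B ∈ F) (hBm : #B = m + 1) (hvB : v ∈ B) (hvW : v ∉ W) (hBU : Disjoint B U)
    (hUW : Disjoint U W) (hm : 2 * (m * m) ≤ #W) (hUm : (#U + 1) * m ≤ #W) :
    (#W).choose m ≤ 2 * ∑ u ∈ U, #(coLink F W m u) := by
  have hWB : #W - m ≤ #(W \ B) := by
    have hBv : #(B.erase v) = m := by rw [card_erase_of_mem hvB, hBm, Nat.add_sub_cancel]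
    rw [← insert_erase hvB, sdiff_insert_of_notMem hvW, ← hBv]
    exact le_card_sdiff _ _
  calc (#W).choose m ≤ 2 * (#W - m).choose m := choose_le_two_mul_choose_sub hm
    _ ≤ 2 * (#(W \ B)).choose m := by gcongr
    _ ≤ 2 * ∑ u ∈ U, #(coLink F (W \ B) m u) := by
      gcongr
      refine hF.choose_le_sum_card_coLink (M := {B}) (by simpa using hBF) (by simp)
        (by simpa using hBU) (by simpa using disjoint_sdiff) (hUW.mono_right sdiff_subset)
        (by simp) ?_
      rw [add_mul, one_mul] at hUm
      omega
    _ ≤ 2 * ∑ u ∈ U, #(coLink F W m u) := by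
      gcongr
      exact coLink_subset_coLink sdiff_subset

theorem IsShiftedOn.four_mul_card_add_le {n m s : ℕ} {F : Finset (Finset (Fin n))}
    (hshift : IsShiftedOn univ F) (hF : (F : Set (Finset (Fin n))).Sized (m + 1))
    (hmatch : MatchingNumberLE F s) (hs : 1 ≤ s) (hsm : 5 * s ≤ m + 1) (hn : 2 * (m + 1) ^ 2 ≤ n)
    {v : Fin n} (hv : v.val = s) {A : Finset (Fin n)} (hA : A ∈ F) (hAv : Disjoint A (Iio v)) :
    4 * #F + 4 * (n - s).choose (m + 1) + (n - s - 1).choose m ≤ 4 * n.choose (m + 1) := by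
  have hU : #(Iio v) = s := by rw [Fin.card_Iio, hv]
  have hW : #(Ioi v) = n - s - 1 := by rw [Fin.card_Ioi, hv, Nat.sub_right_comm]
  have hUW : Disjoint (insert v (Iio v)) (Ioi v) := by
    rw [Iio_insert]
    exact disjoint_left.2 fun x hx hx' => (mem_Iic.1 hx).not_gt (mem_Ioi.1 hx')
  have hn' : 2 * (m * m) + 4 * m + 2 ≤ n := by linarith [hn]
  have hx : 2 * (m + 1) * m ≤ #(Ioi v) := by
    rw [hW, show 2 * (m + 1) * m = 2 * (m * m) + 2 * m by ring]
    omega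
  have hsm' : (s + 1) * m ≤ 2 * (m * m) := by nlinarith
  obtain ⟨B, hBF, hvB, hBv⟩ :=
    hshift.exists_mem_of_disjoint_Iio hA (card_pos.1 (by rw [hF hA]; omega)) hAv
  rw [← hU] at hmatch
  have hmissing := hmatch.choose_le_two_mul_sum_card_coLink (W := Ioi v) hBF (hF hBF) hvB
    (by simp) hBv (hUW.mono_left (subset_insert _ _)) (by omega) (by rw [hU]; omega)
  have hlink := hmatch.sub_mul_card_link_le (W := Ioi v) (m := m) (v := v) (by simp) hUW
    (fun u hu => hshift.link_subset_link (mem_Iio.1 hu) (by simpa using (mem_Iio.1 hu).le)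
      (by simp)) (x := 2 * (m + 1)) hx
  have havoid := hshift.card_filter_disjoint_Iio_le (v := v) hF hmatch
  have hcount := card_add_sum_card_coLink_le (W := Ioi v) hF (hUW.mono_left (subset_insert _ _))
  rw [hU] at hlink havoid hcount
  rw [hW] at hmissing
  rw [Fintype.card_fin] at hcount
  have h₁ : 9 * s * #(link F (Ioi v) m v) ≤ (2 * (m + 1) - s) * #(link F (Ioi v) m v) := by
    gcongr
    omega
  have h₂ : (s + 1) * #(link F (Ioi v) m v) ≤ 2 * s * #(link F (Ioi v) m v) := by
    gcongr
    omega
  linarith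

section TransferCase

variable {α : Type*} [DecidableEq α] {F : Finset (Finset α)} {V W C D : Finset α} {i j : α} {m : ℕ}

theorem MatchingNumberLE.choose_le_four_mul_sum_card_coLink (hF : MatchingNumberLE F (#V + 1))
    (hij : i ≠ j) (hi : i ∉ V) (hj : j ∉ V) (hiW : i ∉ W) (hjW : j ∉ W) (hVW : Disjoint V W)
    (hC : C ∈ link F W m i) (hD : D ∈ link F W m j) (hCD : Disjoint C D)
    (hm : 2 * (m * m) + m ≤ #W) (hVm : (#V + 2) * m ≤ #W) :
    (#W).choose m ≤ 4 * ∑ u ∈ V, #(coLink F W m u) := by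
  obtain ⟨⟨hCW, hCm⟩, hCF⟩ := mem_link.1 hC
  obtain ⟨⟨hDW, hDm⟩, hDF⟩ := mem_link.1 hD
  have hdisj : Disjoint (insert i C) (insert j D) := by
    have hjC : j ∉ C := fun h => hjW (hCW h)
    have hiD : i ∉ D := fun h => hiW (hDW h)
    simp [hij.symm, hCD, hjC, hiD]
  have hne : insert i C ≠ insert j D := fun h => by
    have := hdisj.le_bot (mem_inter.2 ⟨mem_insert_self i C, h ▸ mem_insert_self i C⟩)
    simp at this
  have hW' : #W - m - m = #(W \ (C ∪ D)) := by
    rw [card_sdiff_of_subset (union_subset hCW hDW), card_union_of_disjoint hCD, hCm, hDm,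
      Nat.sub_sub]
  calc (#W).choose m ≤ 2 * (#W - m).choose m := choose_le_two_mul_choose_sub (by omega)
    _ ≤ 2 * (2 * (#W - m - m).choose m) := by
      gcongr
      exact choose_le_two_mul_choose_sub (by omega)
    _ = 4 * (#(W \ (C ∪ D))).choose m := by rw [hW']; ring
    _ ≤ 4 * ∑ u ∈ V, #(coLink F (W \ (C ∪ D)) m u) := by
      gcongr
      refine hF.choose_le_sum_card_coLink (M := {insert i C, insert j D}) ?_ ?_ ?_ ?_
        (hVW.mono_right sdiff_subset) ?_ ?_
      · simp [insert_subset_iff, hCF, hDF]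
      · rw [coe_pair, Set.pairwise_pair_of_symm]
        exact fun _ => hdisj
      · simp [hi, hj, (hVW.mono_right hCW).symm, (hVW.mono_right hDW).symm]
      · simp [hiW, hjW, disjoint_sdiff.mono_left subset_union_left,
          disjoint_sdiff.mono_left subset_union_right]
      · rw [card_pair hne]
        omega
      · rw [add_mul] at hVm
        omega
    _ ≤ 4 * ∑ u ∈ V, #(coLink F W m u) := by
      gcongr
      exact coLink_subset_coLink sdiff_subset

-- Cross-intersecting links are small by `mul_card_add_card_le_of_forall_not_disjoint`; two disjoint
-- members of the links make many sets meeting `V` missing.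
theorem MatchingNumberLE.four_mul_card_link_add_card_link_le (hF : MatchingNumberLE F (#V + 1))
    (hij : i ≠ j) (hi : i ∉ V) (hj : j ∉ V) (hiW : i ∉ W) (hjW : j ∉ W) (hVW : Disjoint V W)
    (hdisj : Disjoint (link F W m i) (link F W m j)) (hi_ne : (link F W m i).Nonempty)
    (hj_ne : (link F W m j).Nonempty) (hm₀ : 0 < m) (hm : 2 * (m * m) + m ≤ #W)
    (hVm : (#V + 2) * m ≤ #W) :
    4 * (#(link F W m i) + #(link F W m j)) ≤
      4 * ∑ u ∈ V, #(coLink F W m u) + 3 * (#W).choose m := by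
  by_cases hcross : ∀ C ∈ link F W m i, ∀ D ∈ link F W m j, ¬ Disjoint C D
  · have hx : 2 * m * m ≤ #W := by
      rw [mul_assoc]
      omega
    have hcard := mul_card_add_card_le_of_forall_not_disjoint link_subset_powersetCard
      link_subset_powersetCard hi_ne hj_ne hdisj hcross hx
    have hhalf : 2 * (#(link F W m i) + #(link F W m j)) ≤ (#W).choose m :=
      Nat.le_of_mul_le_mul_left (by rwa [← mul_assoc, mul_comm m]) hm₀
    omega
  · push Not at hcross
    obtain ⟨C, hC, D, hD, hCD⟩ := hcross
    have hmissing := hF.choose_le_four_mul_sum_card_coLink hij hi hj hiW hjW hVW hC hD hCD hm hVm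
    have hle : #(link F W m i) + #(link F W m j) ≤ (#W).choose m := by
      rw [← card_union_of_disjoint hdisj, ← card_powersetCard]
      exact card_le_card (union_subset link_subset_powersetCard link_subset_powersetCard)
    omega

theorem card_filter_disjoint_le_card_link_add (hF : (F : Set (Finset α)).Sized (m + 2))
    (hW : ∀ x, x ∉ V → x ≠ i → x ≠ j → x ∈ W) (hij : i ≠ j)
    (hcover : ∀ A ∈ F, Disjoint A V → i ∈ A ∨ j ∈ A) :
    #{A ∈ F | Disjoint A V} ≤
      #(link F W (m + 1) i) + #(link F W (m + 1) j) + (#W).choose m := by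
  set avoid := {A ∈ F | Disjoint A V}
  have havoid : ∀ A ∈ avoid, ∀ x ∈ A, x ≠ i → x ≠ j → x ∈ W := fun A hA x hx =>
    hW x (disjoint_left.1 (mem_filter.1 hA).2 hx)
  have hi_only : #{A ∈ avoid | j ∉ A} ≤ #(link F W (m + 1) i) := by
    refine card_le_card_link ((filter_subset _ _).trans (filter_subset _ _)) hF fun A hA => ?_
    obtain ⟨hA, hjA⟩ := mem_filter.1 hA
    exact ⟨(hcover A (mem_filter.1 hA).1 (mem_filter.1 hA).2).resolve_right hjA, fun x hx =>
      havoid A hA x (mem_of_mem_erase hx) (ne_of_mem_erase hx)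
        (ne_of_mem_of_not_mem (mem_of_mem_erase hx) hjA)⟩
  have hj_only : #{A ∈ {A ∈ avoid | j ∈ A} | i ∉ A} ≤ #(link F W (m + 1) j) := by
    refine card_le_card_link ((filter_subset _ _).trans
      ((filter_subset _ _).trans (filter_subset _ _))) hF fun A hA => ?_
    obtain ⟨hA, hiA⟩ := mem_filter.1 hA
    obtain ⟨hA, hjA⟩ := mem_filter.1 hA
    exact ⟨hjA, fun x hx => havoid A hA x (mem_of_mem_erase hx)
      (ne_of_mem_of_not_mem (mem_of_mem_erase hx) hiA) (ne_of_mem_erase hx)⟩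
  have hboth : #{A ∈ {A ∈ avoid | j ∈ A} | i ∈ A} ≤ (#W).choose m := by
    rw [← card_powersetCard]
    refine card_le_card_of_injOn (fun A => (A.erase j).erase i) (fun A hA => ?_)
      fun A hA B hB hAB => ?_
    · obtain ⟨hA, hiA⟩ := mem_filter.1 hA
      obtain ⟨hA, hjA⟩ := mem_filter.1 hA
      refine mem_powersetCard.2 ⟨fun x hx => ?_, ?_⟩
      · exact havoid A hA x (mem_of_mem_erase (mem_of_mem_erase hx)) (ne_of_mem_erase hx)
          (ne_of_mem_erase (mem_of_mem_erase hx))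
      · rw [card_erase_of_mem (mem_erase.2 ⟨hij, hiA⟩), card_erase_of_mem hjA,
          hF (mem_filter.1 hA).1]
        rfl
    · obtain ⟨hA, hiA⟩ := mem_filter.1 hA
      obtain ⟨hB, hiB⟩ := mem_filter.1 hB
      exact erase_injOn' j (mem_filter.1 hA).2 (mem_filter.1 hB).2
        (erase_injOn' i (mem_erase.2 ⟨hij, hiA⟩) (mem_erase.2 ⟨hij, hiB⟩) hAB)
  have h₁ := card_filter_add_card_filter_not (s := avoid) (j ∈ ·)
  have h₂ := card_filter_add_card_filter_not (s := {A ∈ avoid | j ∈ A}) (i ∈ ·)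
  omega

theorem four_mul_card_add_le_of_disjoint_link [Fintype α] {s : ℕ}
    (hF : (F : Set (Finset α)).Sized (m + 2)) (hmatch : MatchingNumberLE F s)
    (hsm : 5 * s ≤ m + 2) (hn : 2 * (m + 2) ^ 2 ≤ Fintype.card α)
    (hVs : #V + 1 = s) (hij : i ≠ j) (hi : i ∉ V) (hj : j ∉ V)
    (hW : W = (insert i (insert j V))ᶜ)
    (hcover : ∀ A ∈ F, Disjoint A V → i ∈ A ∨ j ∈ A)
    (hdisj : Disjoint (link F W (m + 1) i) (link F W (m + 1) j))
    (hi_ne : (link F W (m + 1) i).Nonempty) (hj_ne : (link F W (m + 1) j).Nonempty) :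
    4 * #F + 4 * (Fintype.card α - s).choose (m + 2) + (Fintype.card α - s - 1).choose (m + 1) ≤
      4 * (Fintype.card α).choose (m + 2) := by
  set n := Fintype.card α
  have hWcard : #W = n - s - 1 := by
    rw [hW, card_compl, card_insert_of_notMem (by simp [hij, hi]), card_insert_of_notMem hj]
    omega
  have hVW : Disjoint V W := hW ▸ disjoint_compl_right.mono_left
    ((subset_insert j V).trans (subset_insert i _))
  have hn' : 2 * ((m + 1) * (m + 1)) + 4 * (m + 1) + 2 ≤ n := by linarith
  have havoid := card_filter_disjoint_le_card_link_add (W := W) hF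
    (fun x hV hxi hxj => by simp [hW, hV, hxi, hxj]) hij hcover
  have hcount := card_add_sum_card_coLink_le (m := m + 1) hF hVW
  have hpascal : (n - #V).choose (m + 2) =
      (n - s).choose (m + 2) + ((n - s - 1).choose (m + 1) + (n - s - 1).choose m) := by
    rw [show n - #V = n - s - 1 + 1 + 1 by omega, show n - s = n - s - 1 + 1 by omega,
      Nat.choose_succ_succ' _ (m + 1), Nat.choose_succ_succ' _ m, Nat.add_sub_cancel]
    ring
  rw [hWcard] at havoid
  have hVm : (#V + 2) * (m + 1) ≤ (m + 1) * (m + 1) :=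
    Nat.mul_le_mul_right _ (by omega)
  have hlinks := (hVs ▸ hmatch).four_mul_card_link_add_card_link_le hij hi hj (by simp [hW])
    (by simp [hW]) hVW hdisj hi_ne hj_ne m.succ_pos (by omega) (by omega)
  rw [hWcard] at hlinks
  linarith

end TransferCase

section Stability

variable {α : Type*} [DecidableEq α] {F : Finset (Finset α)} {U A D : Finset α} {i j : α}

theorem forall_not_disjoint_of_compression
    (hU : ∀ A ∈ UV.compression {i} {j} F, ¬ Disjoint A U) (hij : j ∈ U ∨ i ∉ U) :
    ∀ A ∈ F, ¬ Disjoint A U := by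
  intro A hA hAU
  have hshift := hU _ (UV.compress_mem_compression hA)
  by_cases hAij : UV.compress {i} {j} A = A
  · exact hshift (hAij.symm ▸ hAU)
  obtain ⟨hi, hj⟩ := exists_of_compress_singleton_ne hAij
  have hjU : j ∉ U := disjoint_left.1 hAU hj
  rw [compress_singleton hi hj, disjoint_insert_left] at hshift
  exact hshift ⟨hij.resolve_left hjU, hAU.mono_left (erase_subset _ _)⟩

theorem mem_or_mem_of_disjoint_erase (hU : ∀ A ∈ UV.compression {i} {j} F, ¬ Disjoint A U)
    (hi : i ∈ U) (hA : A ∈ F) (hAU : Disjoint A (U.erase i)) : i ∈ A ∨ j ∈ A := by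
  by_contra! h
  have hcompress : UV.compress {i} {j} A = A := by
    by_contra hne
    exact h.2 (exists_of_compress_singleton_ne hne).2
  refine hU A (hcompress ▸ UV.compress_mem_compression hA) ?_
  rw [← insert_erase hi, disjoint_insert_right]
  exact ⟨h.1, hAU⟩

theorem not_insert_mem_and_insert_mem (hU : ∀ A ∈ UV.compression {i} {j} F, ¬ Disjoint A U)
    (hij : i ≠ j) (hj : j ∉ U) (hDU : Disjoint D U) (hiD : i ∉ D) (hjD : j ∉ D)
    (hiF : insert i D ∈ F) : insert j D ∉ F := by
  intro hjF
  refine hU (insert j D) (UV.mem_compression.2 (Or.inl ⟨hjF, ?_⟩))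
    (disjoint_insert_left.2 ⟨hj, hDU⟩)
  rwa [compress_singleton (by simp [hij, hiD]) (mem_insert_self _ _), erase_insert hjD]

theorem link_nonempty_of_mem {m : ℕ} {W : Finset α} (hA : A ∈ F) (hi : i ∈ A) (hAm : #A = m + 1)
    (hAW : A.erase i ⊆ W) : (link F W m i).Nonempty :=
  ⟨A.erase i, mem_link.2 ⟨⟨hAW, by rw [card_erase_of_mem hi, hAm, Nat.add_sub_cancel]⟩,
    by rwa [insert_erase hi]⟩⟩

-- If neither `U` nor `insert j (U.erase i)` covers `F`, then the links of `i` and `j` outside both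
-- are nonempty; they are disjoint because `U` covers the shift.
theorem exists_cover_or_of_compression [Fintype α] {k s : ℕ}
    (hF : (F : Set (Finset α)).Sized k) (hmatch : MatchingNumberLE F s) (hs : 1 ≤ s)
    (hsk : 5 * s ≤ k) (hn : 2 * k ^ 2 ≤ Fintype.card α) (hij : i ≠ j) (hUs : #U = s)
    (hU : ∀ A ∈ UV.compression {i} {j} F, ¬ Disjoint A U) :
    (∃ U, #U = s ∧ ∀ A ∈ F, ¬ Disjoint A U) ∨
      4 * #F + 4 * (Fintype.card α - s).choose k + (Fintype.card α - s - 1).choose (k - 1) ≤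
        4 * (Fintype.card α).choose k := by
  by_cases hijU : j ∈ U ∨ i ∉ U
  · exact Or.inl ⟨U, hUs, forall_not_disjoint_of_compression hU hijU⟩
  push Not at hijU
  obtain ⟨hj, hi⟩ := hijU
  set V := U.erase i
  have hVi : insert i V = U := insert_erase hi
  have hVs : #V + 1 = s := by rw [card_erase_add_one hi, hUs]
  have hjV : j ∉ V := fun h => hj (mem_of_mem_erase h)
  have hiV : i ∉ V := notMem_erase i U
  refine or_iff_not_imp_left.2 fun hcover => ?_
  push Not at hcover
  obtain ⟨A₁, hA₁, hA₁U⟩ := hcover (insert i V) (by rw [card_insert_of_notMem hiV, hVs])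
  obtain ⟨A₂, hA₂, hA₂U⟩ := hcover (insert j V) (by rw [card_insert_of_notMem hjV, hVs])
  rw [disjoint_insert_right] at hA₁U hA₂U
  have hmem : ∀ A ∈ F, Disjoint A V → i ∈ A ∨ j ∈ A := fun A =>
    mem_or_mem_of_disjoint_erase hU hi
  obtain ⟨m, rfl⟩ : ∃ m, k = m + 2 := ⟨k - 2, by omega⟩
  set W := (insert i (insert j V))ᶜ with W_def
  have hW : ∀ D : Finset α, D ⊆ W ↔ i ∉ D ∧ j ∉ D ∧ Disjoint D V := fun D => by
    rw [W_def, subset_compl_iff_disjoint_right, disjoint_insert_right, disjoint_insert_right]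
  refine four_mul_card_add_le_of_disjoint_link hF hmatch hsk hn hVs hij hiV hjV W_def hmem ?_ ?_ ?_
  · refine disjoint_left.2 fun D hDi hDj => ?_
    obtain ⟨hiD, hjD, hDV⟩ := (hW D).1 (mem_link.1 hDi).1.1
    exact not_insert_mem_and_insert_mem hU hij hj
      (by rw [← hVi, disjoint_insert_right]; exact ⟨hiD, hDV⟩) hiD hjD
      (mem_link.1 hDi).2 (mem_link.1 hDj).2
  · exact link_nonempty_of_mem hA₂ ((hmem A₂ hA₂ hA₂U.2).resolve_right hA₂U.1) (hF hA₂)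
      ((hW _).2 ⟨notMem_erase i A₂, fun h => hA₂U.1 (mem_of_mem_erase h),
        hA₂U.2.mono_left (erase_subset _ _)⟩)
  · exact link_nonempty_of_mem hA₁ ((hmem A₁ hA₁ hA₁U.2).resolve_left hA₁U.1) (hF hA₁)
      ((hW _).2 ⟨fun h => hA₁U.1 (mem_of_mem_erase h), notMem_erase j A₁,
        hA₁U.2.mono_left (erase_subset _ _)⟩)

theorem exists_cover_or_four_mul_card_add_le {n k s : ℕ} {F : Finset (Finset (Fin n))}
    (hF : (F : Set (Finset (Fin n))).Sized k) (hmatch : MatchingNumberLE F s) (hs : 1 ≤ s)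
    (hsk : 5 * s ≤ k) (hn : 2 * k ^ 2 ≤ n) :
    (∃ U, #U = s ∧ ∀ A ∈ F, ¬ Disjoint A U) ∨
      4 * #F + 4 * (n - s).choose k + (n - s - 1).choose (k - 1) ≤ 4 * n.choose k := by
  induction F using shift_induction with
  | shifted F hshift =>
    have hsn : s < n := by nlinarith
    refine or_iff_not_imp_left.2 fun hcover => ?_
    push Not at hcover
    obtain ⟨A, hA, hAs⟩ := hcover (Iio ⟨s, hsn⟩) (Fin.card_Iio _)
    obtain ⟨m, rfl⟩ : ∃ m, k = m + 1 := ⟨k - 1, by omega⟩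
    exact hshift.four_mul_card_add_le hF hmatch hs hsk hn rfl hA hAs
  | shift F i j hij ih =>
    rcases ih (hF.uvCompression rfl) (hmatch.compression i j) with ⟨U, hUs, hU⟩ | hbound
    · simpa only [Fintype.card_fin] using exists_cover_or_of_compression hF hmatch hs hsk
        (by rwa [Fintype.card_fin]) hij.ne hUs hU
    · rw [UV.card_compression] at hbound
      exact Or.inr hbound

end Stability

section MinDegree

variable {α : Type*} [Fintype α] [DecidableEq α] {F : Finset (Finset α)} {k t : ℕ}

theorem choose_mul_le_choose_mul_card {D : ℕ} (hF : (F : Set (Finset α)).Sized k)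
    (hD : ∀ T : Finset α, #T = t → D ≤ #{A ∈ F | T ⊆ A}) :
    (Fintype.card α).choose t * D ≤ k.choose t * #F := by
  have hcount := card_mul_le_card_mul (s := univ.powersetCard t) (t := F) (m := D)
    (n := k.choose t) (fun T A : Finset α => T ⊆ A)
    (fun T hT => hD T (mem_powersetCard_univ.1 hT)) fun A hA => by
      rw [← hF hA, ← card_powersetCard]
      refine card_le_card fun T hT => ?_
      obtain ⟨hTt, hTA⟩ := mem_bipartiteBelow _ |>.1 hT
      exact mem_powersetCard.2 ⟨hTA, mem_powersetCard_univ.1 hTt⟩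
  rwa [card_powersetCard, card_univ, mul_comm #F] at hcount

theorem exists_card_filter_subset_add_le (hF : (F : Set (Finset α)).Sized k) (htk : t ≤ k)
    (hk : k ≤ Fintype.card α) {b c r : ℕ} (hc : 0 < c)
    (hcard : c * #F + r ≤ c * (Fintype.card α).choose k)
    (hb : c * (Fintype.card α).choose t * b ≤ k.choose t * r) :
    ∃ T : Finset α, #T = t ∧
      #{A ∈ F | T ⊆ A} + b ≤ (Fintype.card α - t).choose (k - t) := by
  by_contra! h
  set n := Fintype.card α
  have hcount := choose_mul_le_choose_mul_card (D := (n - t).choose (k - t) + 1 - b) hF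
    fun T hT => by have := h T hT; omega
  have hpos : 0 < n.choose t := Nat.choose_pos (htk.trans hk)
  have hflag : n.choose k * k.choose t = n.choose t * (n - t).choose (k - t) := Nat.choose_mul htk
  have hD : (n - t).choose (k - t) + 1 ≤ (n - t).choose (k - t) + 1 - b + b := by omega
  refine lt_irrefl (c * n.choose t * (n - t).choose (k - t)) ?_
  calc c * n.choose t * (n - t).choose (k - t)
      < c * n.choose t * ((n - t).choose (k - t) + 1) := by gcongr; omega
    _ ≤ c * n.choose t * ((n - t).choose (k - t) + 1 - b + b) := by gcongr
    _ = c * (n.choose t * ((n - t).choose (k - t) + 1 - b)) + c * n.choose t * b := by ring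
    _ ≤ c * (k.choose t * #F) + k.choose t * r := by gcongr
    _ = k.choose t * (c * #F + r) := by ring
    _ ≤ k.choose t * (c * n.choose k) := by gcongr
    _ = c * n.choose t * (n - t).choose (k - t) := by rw [mul_assoc c, ← hflag]; ring

theorem four_mul_choose_mul_choose_le {n s : ℕ} (hs : 1 ≤ s) (hsn : s < n) (hkn : k ≤ n)
    (htk : t ≤ k) (hk : 5 * s * t ≤ k) :
    4 * n.choose t * (n - s - t).choose (k - t) ≤
      k.choose t * (4 * (n - s).choose k + (n - s - 1).choose (k - 1)) := by
  obtain ⟨d, rfl⟩ : ∃ d, n = d + 1 + s := ⟨n - s - 1, by omega⟩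
  rw [Nat.add_sub_cancel, Nat.add_sub_cancel]
  have hdrop := mul_choose_le_mul_choose_sub_add (d + 1 + s) t s
  rw [Nat.add_sub_cancel] at hdrop
  have hratio : 4 * (d + 1) * (d + 1 + s).choose t ≤ (4 * (d + 1) + k) * (d + 1).choose t := by
    have hcoeff : 4 * (d + 1) * (d + 1 + s) + (4 * (d + 1) + k) * (s * t) ≤
        (4 * (d + 1) + k) * (d + 1 + s) := by
      nlinarith
    have h := Nat.mul_le_mul_right ((d + 1 + s).choose t) hcoeff
    refine Nat.le_of_mul_le_mul_left ?_ (by omega : 0 < d + 1 + s)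
    nlinarith
  have hflag : (d + 1).choose k * k.choose t =
      (d + 1).choose t * (d + 1 - t).choose (k - t) := Nat.choose_mul htk
  have habsorb : (d + 1).choose k * k ≤ (d + 1) * d.choose (k - 1) := by
    rcases k with _ | k
    · simp
    · exact (Nat.add_one_mul_choose_eq d k).ge
  refine Nat.le_of_mul_le_mul_left ?_ d.succ_pos
  calc (d + 1) * (4 * (d + 1 + s).choose t * (d + 1 - t).choose (k - t))
      = 4 * (d + 1) * (d + 1 + s).choose t * (d + 1 - t).choose (k - t) := by ring
    _ ≤ (4 * (d + 1) + k) * (d + 1).choose t * (d + 1 - t).choose (k - t) := by gcongr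
    _ = (4 * (d + 1) + k) * ((d + 1).choose k * k.choose t) := by rw [hflag, mul_assoc]
    _ = k.choose t * (4 * (d + 1) * (d + 1).choose k + (d + 1).choose k * k) := by ring
    _ ≤ k.choose t * (4 * (d + 1) * (d + 1).choose k + (d + 1) * d.choose (k - 1)) := by gcongr
    _ = (d + 1) * (k.choose t * (4 * (d + 1).choose k + d.choose (k - 1))) := by ring

theorem exists_card_filter_subset_add_choose_le_of_cover {U : Finset α}
    (hF : (F : Set (Finset α)).Sized k) (hU : ∀ A ∈ F, ¬ Disjoint A U) (htk : t ≤ k)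
    (ht : #U + t ≤ Fintype.card α) :
    ∃ T : Finset α, #T = t ∧
      #{A ∈ F | T ⊆ A} + (Fintype.card α - #U - t).choose (k - t) ≤
        (Fintype.card α - t).choose (k - t) := by
  obtain ⟨T, hTU, rfl⟩ : ∃ T ⊆ Uᶜ, #T = t := exists_subset_card_eq (by rw [card_compl]; omega)
  refine ⟨T, rfl, ?_⟩
  rw [← card_compl, ← card_univ, ← card_filter_powersetCard_subset T Uᶜ k hTU htk,
    ← card_filter_powersetCard_subset T univ k (subset_univ T) htk, ← card_union_of_disjoint,
    ← filter_union]
  · refine card_le_card (filter_subset_filter _ (union_subset (fun A hA => ?_) ?_))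
    · exact mem_powersetCard_univ.2 (hF hA)
    · exact powersetCard_mono (subset_univ _)
  · refine disjoint_filter_filter (disjoint_left.2 fun A hA hAU => hU A hA ?_)
    exact subset_compl_iff_disjoint_right.1 (mem_powersetCard.1 hAU).1

end MinDegree

/-- Degree version of the Erdős Matching Conjecture (Theorem 7):
if `n ≥ 2k²`, `t ≥ 1` and `k ≥ 5st`, then any family `F` of `k`-subsets of `[n]`
with matching number at most `s` satisfies `δ_t(F) ≤ C(n-t, k-t) - C(n-s-t, k-t)`. -/
theorem t_degree_EMC (n k s t : ℕ) (hs : 0 < s) (ht : 1 ≤ t)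
    (hn : 2 * k ^ 2 ≤ n) (hk : 5 * s * t ≤ k)
    (F : Finset (Finset (Fin n)))
    (hcard : ∀ A ∈ F, A.card = k)
    (hmatch : ∀ M ⊆ F, (∀ A ∈ M, ∀ B ∈ M, A ≠ B → Disjoint A B) → M.card ≤ s) :
    ∃ T : Finset (Fin n), T.card = t ∧
      ((F.filter (fun A => T ⊆ A)).card : ℤ) ≤
        ((n - t).choose (k - t) : ℤ) - ((n - s - t).choose (k - t) : ℤ) := by
  have hsk : 5 * s ≤ k := (Nat.le_mul_of_pos_right _ ht).trans hk
  have htk : t ≤ k := (Nat.le_mul_of_pos_left t (by omega)).trans hk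
  have hkn : 2 * k ≤ n := (by nlinarith : 2 * k ≤ 2 * k ^ 2).trans hn
  have hF : (F : Set (Finset (Fin n))).Sized k := fun A hA => hcard A hA
  have hempty : ∅ ∉ F := fun h => by
    have := hcard ∅ h
    rw [card_empty] at this
    omega
  have hν : MatchingNumberLE F s := matchingNumberLE_of_forall_card_le hempty fun M hM hdisj =>
    hmatch M hM fun A hA B hB => hdisj hA hB
  obtain ⟨T, hT, hdeg⟩ : ∃ T : Finset (Fin n), #T = t ∧
      #{A ∈ F | T ⊆ A} + (n - s - t).choose (k - t) ≤ (n - t).choose (k - t) := by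
    rcases exists_cover_or_four_mul_card_add_le hF hν hs hsk hn with ⟨U, rfl, hU⟩ | hbound
    · simpa only [Fintype.card_fin] using exists_card_filter_subset_add_choose_le_of_cover hF hU
        htk (by rw [Fintype.card_fin]; omega)
    · rw [add_assoc] at hbound
      simpa only [Fintype.card_fin] using exists_card_filter_subset_add_le hF htk
        (by rw [Fintype.card_fin]; omega) four_pos (by rwa [Fintype.card_fin])
        (by rw [Fintype.card_fin]
            exact four_mul_choose_mul_choose_le hs (by omega) (by omega) htk hk)
  exact ⟨T, hT, by omega⟩
end
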